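/- arXiv:2506.07991 — 3 statements merged into one kernel-verified Lean document; each statement's English description precedes it below -/
import Mathlib

section
/- Let Γ be a finitely generated virtually FAR group. If Γ admits a strongly scale-invariant monomorphism, then Γ is virtually nilpotent (Γ has a nilpotent subgroup of finite index). -/
/-!
The only consequence of scale invariance that is needed is `PeriodicTorsion`: a point fixed by
some `φ ^ j` with `j > 0` lies in `φ ^ n (G)` for every `n`, as do its powers, so it has finite
order. In particular the argument uses injectivity of `φ` but never compares indices.

Passing to a finite-index subgroup invariant under all endomorphisms, `G` may be taken solvable
with all abelian sections of finite `p`-rank for every prime `p`. In such a group an element of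
infinite order fixed by `φ` in an invariant quotient lifts to one in `G`
(`exists_fixed_of_abelian`, `exists_fixed_of_solvable`): an endomorphism of an abelian group of
finite ranks with no fixed points of infinite order has `1 - φ` of torsion cokernel, and this
cokernel has only finitely many elements of any given exponent. Hence `PeriodicTorsion` passes to
quotients.

Induction on the derived length then reduces to the case where some term `L` of the lower central
series is abelian (`virtNilp_of_derivedSeries`). In that case `G` acts on the finite-dimensional
space `V = ℚ ⊗ L` through a nilpotent group. Choose a finite-index subgroup `H` with span `E` in
`End V` as small as possible, so that all finite-index subgroups of `H` have the same span. Modulo the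
radical `J` of `E`, commutators of second-central elements have finite order, since conjugates of
`ρ g` have the same minimal polynomial; minimality of the span upgrades this to commutativity
(`comm_of_injective`). The same finiteness of roots shows that some power of `φ` acts trivially on
`H` modulo `J` (`exists_period_mod_jacobson`). By the lifting of fixed points, the image of `H`
modulo `J` is then a torsion group, hence finite, so a finite-index subgroup `N` acts
unipotently on `V` (`exists_flag`). Thus a term of the lower central series of `N` is contained in
the torsion of `L`, and indeed in a finite subgroup of `L`, whose centralizer in `N` is nilpotent
of finite index (`virtNilp_of_series`).
-/

/-- The pair of subgroups `K ≤ H` of `G` forms an *abelian factor of finite ranks*: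
`K` is normal in `H`, the factor `H/K` is abelian, has finite torsion-free rank
(some `n` bounds the size of any independent family modulo `K`), and for every prime `p`
the `p`-torsion of `H/K` is finite (it is covered by finitely many cosets of `K`). -/
def IsFARFactor {G : Type*} [Group G] (K H : Subgroup G) : Prop :=
  K ≤ H ∧
  (∀ x ∈ H, ∀ y ∈ K, x * y * x⁻¹ ∈ K) ∧
  (∀ x ∈ H, ∀ y ∈ H, x * y * x⁻¹ * y⁻¹ ∈ K) ∧
  (∃ n : ℕ, ∀ f : Fin (n + 1) → G, (∀ i, f i ∈ H) →
    ∃ c : Fin (n + 1) → ℤ, c ≠ 0 ∧ (List.ofFn fun i => f i ^ c i).prod ∈ K) ∧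
  (∀ p : ℕ, p.Prime → ∃ F : Finset G, ∀ x ∈ H, x ^ p ∈ K → ∃ b ∈ F, b⁻¹ * x ∈ K)

/-- A group has *finite abelian ranks* (is a FAR-group) if it admits a finite normal
series whose factors are abelian groups of finite torsion-free rank and finite `p`-rank
for every prime `p`. -/
def IsFARGroup (G : Type*) [Group G] : Prop :=
  ∃ (n : ℕ) (s : Fin (n + 1) → Subgroup G),
    s 0 = ⊥ ∧ s (Fin.last n) = ⊤ ∧ ∀ i : Fin n, IsFARFactor (s i.castSucc) (s i.succ)

/-- A group is virtually FAR if it has a finite-index subgroup which is a FAR-group. -/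
def IsVirtuallyFAR (G : Type*) [Group G] : Prop :=
  ∃ H : Subgroup G, H.FiniteIndex ∧ IsFARGroup H

universe u

open scoped commutatorElement TensorProduct

/-! ### Finite ranks -/

/-- `M` has finite `p`-rank for every prime `p`: there is a length `r` such that any `r` elements
satisfy an integral relation whose coefficients are not all divisible by `p`. Then both the
torsion-free rank and the dimension of the `p`-torsion are less than `r`; unlike these two bounds
taken separately, the condition visibly passes to quotients. -/
def FinPRanks (M : Type*) [AddCommGroup M] : Prop :=
  ∀ p : ℕ, p.Prime → ∃ r : ℕ, ∀ x : Fin r → M,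
    ∃ c : Fin r → ℤ, (∃ i, ¬ (p : ℤ) ∣ c i) ∧ ∑ i, c i • x i = 0

/-- Every abelian section of `G` has finite `p`-rank for every prime `p`. A section is encoded as an
injection `ι : H →* G` together with a homomorphism `f` from `H` to a commutative group, the section
being the image of `f`. -/
def AbSecFinPRanks (G : Type u) [Group G] : Prop :=
  ∀ (H : Type u) [Group H] (ι : H →* G), Function.Injective ι →
    ∀ (C : Type u) [CommGroup C] (f : H →* C) (p : ℕ), p.Prime →
      ∃ r : ℕ, ∀ x : Fin r → H,
        ∃ c : Fin r → ℤ, (∃ i, ¬ (p : ℤ) ∣ c i) ∧ ∏ i, f (x i) ^ c i = 1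

/-- If `M[p]` is finite, any sufficiently long tuple of elements of `p`-power order satisfies a
relation with some coefficient prime to `p`: the finite group `Y` they generate has
`|Y/pY| = |Y[p]| ≤ |M[p]|`, so two subset sums agree modulo `pY`. -/
theorem exists_relation_of_pow_torsion {M : Type*} [AddCommGroup M] {p : ℕ} (hp : p.Prime)
    (htor : {a : M | p • a = 0}.Finite) :
    ∃ r : ℕ, ∀ x : Fin r → M, (∀ i, ∃ e : ℕ, (p ^ e) • x i = 0) →
      ∃ c : Fin r → ℤ, (∃ i, ¬ (p : ℤ) ∣ c i) ∧ ∑ i, c i • x i = 0 := by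
  classical
  set N := Nat.card {a : M | p • a = 0} with hN
  refine ⟨N + 1, fun x hx => ?_⟩
  have : Fact p.Prime := ⟨hp⟩
  -- the finite group generated by the `x i`
  let Y : AddSubgroup M := AddSubgroup.closure (Set.range x)
  have hmemY : ∀ i, x i ∈ Y := fun i => AddSubgroup.subset_closure ⟨i, rfl⟩
  have hfinY : Finite Y := by
    have : AddGroup.FG Y := (AddGroup.fg_iff_addSubgroup_fg Y).2
      ⟨(Set.finite_range x).toFinset, by simp [Y]⟩
    refine AddCommGroup.finite_of_fg_isAddTorsion Y ?_
    choose e he using hx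
    have key : ∀ y ∈ Y, IsOfFinAddOrder y := by
      intro y hy
      refine AddSubgroup.closure_induction (p := fun y _ => IsOfFinAddOrder y) ?_ ?_ ?_ ?_ hy
      · rintro _ ⟨i, rfl⟩
        exact isOfFinAddOrder_iff_nsmul_eq_zero.2 ⟨p ^ e i, pow_pos hp.pos _, he i⟩
      · exact IsOfFinAddOrder.zero
      · intro a b _ _ ha hb
        exact ha.add hb
      · intro a _ ha
        exact ha.neg
    intro y
    obtain ⟨n, hn, h⟩ := isOfFinAddOrder_iff_nsmul_eq_zero.1 (key y y.2)
    exact isOfFinAddOrder_iff_nsmul_eq_zero.2 ⟨n, hn, Subtype.ext h⟩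
  -- `|Y / pY| = |Y[p]| ≤ N`
  let m : Y →+ Y := nsmulAddMonoidHom p
  have hcard : Nat.card (Y ⧸ m.range) = Nat.card m.ker := by
    have h1 := AddSubgroup.card_eq_card_quotient_mul_card_addSubgroup m.range
    have h2 := AddSubgroup.card_eq_card_quotient_mul_card_addSubgroup m.ker
    have h3 := Nat.card_congr (QuotientAddGroup.quotientKerEquivRange m).toEquiv
    have h4 : 0 < Nat.card m.range := Nat.card_pos
    rw [h3] at h2
    rw [h2, mul_comm] at h1
    exact (Nat.eq_of_mul_eq_mul_right h4 (by linarith)).symm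
  have hker : Nat.card m.ker ≤ N := by
    have := htor.to_subtype
    refine Nat.card_le_card_of_injective
      (fun a : m.ker => (⟨((a : Y) : M), ?_⟩ : {a : M | p • a = 0})) ?_
    · have := a.2
      rw [AddMonoidHom.mem_ker] at this
      have h := congrArg (Subtype.val) this
      simpa [m] using h
    · intro a b h
      have := congrArg Subtype.val h
      exact Subtype.ext (Subtype.ext this)
  -- pigeonhole on the `2 ^ (N+1)` subset sums
  let g : (Fin (N + 1) → Fin 2) → Y ⧸ m.range := fun ε =>
    ((∑ i, (ε i : ℕ) • (⟨x i, hmemY i⟩ : Y) : Y) : Y ⧸ m.range)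
  have hng : ¬ Function.Injective g := by
    intro hg
    have := Nat.card_le_card_of_injective g hg
    rw [hcard] at this
    have h2 : Nat.card (Fin (N + 1) → Fin 2) = 2 ^ (N + 1) := by simp
    have h3 : N + 1 < 2 ^ (N + 1) := Nat.lt_two_pow_self
    omega
  simp only [Function.Injective, not_forall] at hng
  obtain ⟨ε, δ, hεδ, hne⟩ := hng
  obtain ⟨i₀, hi₀⟩ := Function.ne_iff.1 hne
  have hmem := QuotientAddGroup.eq.1 hεδ
  obtain ⟨y, hy⟩ := hmem
  have hyY : (y : M) ∈ Submodule.span ℤ (Set.range x) := by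
    have := y.2
    rw [← AddSubgroup.toIntSubmodule_closure]
    exact this
  obtain ⟨d, hd⟩ := (Submodule.mem_span_range_iff_exists_fun ℤ).1 hyY
  refine ⟨fun i => (δ i : ℤ) - (ε i : ℤ) - p * d i, ⟨i₀, ?_⟩, ?_⟩
  · intro hdvd
    have h1 : (p : ℤ) ∣ (δ i₀ : ℤ) - (ε i₀ : ℤ) := by
      have := dvd_add hdvd (dvd_mul_right (p : ℤ) (d i₀))
      simpa using this
    have h2 := hp.two_le
    have h3 : ((δ i₀ : ℕ) : ℤ) - ((ε i₀ : ℕ) : ℤ) = 0 := by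
      apply Int.eq_zero_of_abs_lt_dvd h1
      have := (δ i₀).2
      have := (ε i₀).2
      rw [abs_lt]; constructor <;> omega
    apply hi₀; apply Fin.ext; omega
  · have h := congrArg (Subtype.val) hy
    simp only [m, nsmulAddMonoidHom_apply, AddSubgroup.coe_nsmul, AddSubgroup.coe_add,
      AddSubgroup.coe_neg, AddSubgroup.val_finsetSum] at h
    rw [← hd] at h
    simp only [sub_smul, Finset.sum_sub_distrib, mul_smul, ← Finset.smul_sum, natCast_zsmul]
    rw [h]
    abel

/-- Finite torsion-free rank and finite `p`-torsion together bound the `p`-rank. -/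
theorem exists_relation_of_rank {M : Type*} [AddCommGroup M] {p : ℕ} (hp : p.Prime)
    (htor : {a : M | p • a = 0}.Finite)
    (hrk : ∃ n : ℕ, ∀ x : Fin (n + 1) → M, ∃ c : Fin (n + 1) → ℤ, c ≠ 0 ∧ ∑ i, c i • x i = 0) :
    ∃ r : ℕ, ∀ x : Fin r → M, ∃ c : Fin r → ℤ, (∃ i, ¬ (p : ℤ) ∣ c i) ∧ ∑ i, c i • x i = 0 := by
  classical
  obtain ⟨r, hr⟩ := exists_relation_of_pow_torsion hp htor
  obtain ⟨n, hn⟩ := hrk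
  have hpZ : Prime (p : ℤ) := Nat.prime_iff_prime_int.1 hp
  -- a nonzero relation, divided by its `p`-content, yields an element of `p`-power torsion
  have step : ∀ x : Fin (n + 1) → M, ∃ c : Fin (n + 1) → ℤ, (∃ i, ¬ (p : ℤ) ∣ c i) ∧
      ∃ e : ℕ, (p ^ e) • ∑ i, c i • x i = 0 := by
    intro x
    obtain ⟨c, hc0, hc⟩ := hn x
    obtain ⟨g, hg, hg1⟩ := Finset.extract_gcd c (Finset.univ_nonempty (α := Fin (n + 1)))
    set d := Finset.univ.gcd c with hd
    have hd0 : d ≠ 0 := by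
      intro h
      apply hc0
      funext i
      rw [hg i (Finset.mem_univ i), h, zero_mul]; rfl
    obtain ⟨e, m, hm, hdm⟩ := Nat.exists_eq_pow_mul_and_not_dvd
      (Int.natAbs_ne_zero.2 hd0) p hp.ne_one
    refine ⟨fun i => m * g i, ?_, e, ?_⟩
    · by_contra hall
      push Not at hall
      have h1 : ∀ i, (p : ℤ) ∣ g i := fun i =>
        (hpZ.dvd_or_dvd (hall i)).resolve_left (fun h => hm (Int.natCast_dvd_natCast.1 h))
      have h2 : (p : ℤ) ∣ Finset.univ.gcd g := Finset.dvd_gcd fun i _ => h1 i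
      rw [hg1] at h2
      exact hpZ.not_dvd_one h2
    · have h3 : d • ∑ i, g i • x i = 0 := by
        rw [← hc, Finset.smul_sum]
        exact Finset.sum_congr rfl fun i hi => by rw [hg i hi, mul_smul]
      have h4 : ((d.natAbs : ℕ) : ℤ) • ∑ i, g i • x i = 0 := by
        rcases Int.natAbs_eq d with h | h
        · rw [← h, h3]
        · rw [← neg_eq_iff_eq_neg.2 h, neg_smul, h3, neg_zero]
      rw [hdm] at h4
      rw [← h4]
      simp only [mul_smul, ← Finset.smul_sum, Nat.cast_mul, natCast_zsmul]
  choose c hc e he using step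
  refine ⟨r * (n + 1), fun x => ?_⟩
  let x' : Fin r → Fin (n + 1) → M := fun j i => x (finProdFinEquiv (j, i))
  obtain ⟨b, ⟨j, hj⟩, hb⟩ := hr (fun j => ∑ i, c (x' j) i • x' j i) (fun j => ⟨_, he (x' j)⟩)
  refine ⟨fun k => b (finProdFinEquiv.symm k).1 *
    c (x' (finProdFinEquiv.symm k).1) (finProdFinEquiv.symm k).2, ?_, ?_⟩
  · obtain ⟨i, hi⟩ := hc (x' j)
    refine ⟨finProdFinEquiv (j, i), ?_⟩
    simp only [Equiv.symm_apply_apply]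
    exact hpZ.not_dvd_mul hj hi
  · rw [← finProdFinEquiv.sum_comp, Fintype.sum_prod_type, ← hb]
    refine Finset.sum_congr rfl fun j _ => ?_
    rw [Finset.smul_sum]
    refine Finset.sum_congr rfl fun i _ => ?_
    simp only [Equiv.symm_apply_apply, mul_smul]
    rfl

theorem IsFARFactor.exists_relation {G : Type*} [Group G] {K H : Subgroup G}
    (h : IsFARFactor K H) {p : ℕ} (hp : p.Prime) :
    ∃ r : ℕ, ∀ x : Fin r → G, (∀ i, x i ∈ H) →
      ∃ c : Fin r → ℤ, (∃ i, ¬ (p : ℤ) ∣ c i) ∧ (List.ofFn fun i => x i ^ c i).prod ∈ K := by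
  classical
  obtain ⟨hKH, hnorm, hcomm, ⟨n, hn⟩, htor⟩ := h
  let N : Subgroup H := K.subgroupOf H
  have hN : N.Normal := ⟨fun a ha g => hnorm g g.2 a ha⟩
  let : CommGroup (H ⧸ N) :=
    { QuotientGroup.Quotient.group N with
      mul_comm := by
        rintro ⟨a⟩ ⟨b⟩
        refine QuotientGroup.eq.2 ?_
        have := hcomm (b⁻¹ : H) (b⁻¹ : H).2 (a⁻¹ : H) (a⁻¹ : H).2
        simp only [N, Subgroup.mem_subgroupOf]
        simpa [mul_assoc] using this }
  -- membership of a product in `K` is a relation in the quotient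
  have trans : ∀ {r : ℕ} (x : Fin r → H) (c : Fin r → ℤ),
      (List.ofFn fun i => (x i : G) ^ c i).prod ∈ K ↔
        ∑ i, c i • Additive.ofMul ((x i : H) : H ⧸ N) = 0 := by
    intro r x c
    have h1 : (List.ofFn fun i => (x i : G) ^ c i).prod
        = ((List.ofFn fun i => x i ^ c i).prod : H) := by
      rw [← Subgroup.coe_subtype, map_list_prod, List.map_ofFn]
      rfl
    have h2 : ∑ i, c i • Additive.ofMul ((x i : H) : H ⧸ N)
        = Additive.ofMul ((List.ofFn fun i => x i ^ c i).prod : H ⧸ N) := by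
      rw [← QuotientGroup.mk'_apply, map_list_prod, List.map_ofFn, List.prod_ofFn, ofMul_prod]
      rfl
    rw [h1, h2, ofMul_eq_zero, QuotientGroup.eq_one_iff]
    rfl
  have hrel := exists_relation_of_rank (M := Additive (H ⧸ N)) hp ?_ ⟨n, ?_⟩
  · obtain ⟨r, hr⟩ := hrel
    refine ⟨r, fun x hx => ?_⟩
    obtain ⟨c, hc, hsum⟩ := hr fun i => Additive.ofMul (((⟨x i, hx i⟩ : H)) : H ⧸ N)
    exact ⟨c, hc, (trans (fun i => ⟨x i, hx i⟩) c).2 hsum⟩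
  · obtain ⟨F, hF⟩ := htor p hp
    refine (F.finite_toSet.image (fun b : G => if hb : b ∈ H then
      Additive.ofMul (((⟨b, hb⟩ : H)) : H ⧸ N) else 0)).subset ?_
    intro a ha
    obtain ⟨a, rfl⟩ := Additive.ofMul.surjective a
    obtain ⟨a, rfl⟩ := QuotientGroup.mk_surjective a
    have h1 : (a : G) ^ p ∈ K := by
      have : ((a ^ p : H) : H ⧸ N) = 1 := ha
      have h2 : a ^ p ∈ N := (QuotientGroup.eq_one_iff _).1 this
      exact h2
    obtain ⟨b, hbF, hb⟩ := hF a a.2 h1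
    have hbH : b ∈ H := by
      have h3 := H.mul_mem a.2 (H.inv_mem (hKH hb))
      simpa using h3
    refine ⟨b, hbF, ?_⟩
    simp only [hbH, dif_pos]
    exact congrArg _ (QuotientGroup.eq.2 hb)
  · intro x
    have hx : ∀ i, ∃ a : H, Additive.ofMul ((a : H) : H ⧸ N) = x i := fun i => by
      obtain ⟨a, ha⟩ := QuotientGroup.mk_surjective (x i).toMul
      exact ⟨a, congrArg _ ha⟩
    choose a ha using hx
    obtain ⟨c, hc0, hc⟩ := hn (fun i => a i) (fun i => (a i).2)
    refine ⟨c, hc0, ?_⟩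
    simpa only [ha] using (trans a c).1 hc

/-- Relations are propagated up the series: combining blocks of elements of one term, with
exponents from the factor above, gives elements of the term below. -/
theorem IsFARGroup.abSecFinPRanks {G : Type u} [Group G] (h : IsFARGroup G) :
    AbSecFinPRanks G := by
  obtain ⟨n, s, hbot, htop, hs⟩ := h
  intro H _ ι hι C _ f p hp
  have hpZ : Prime (p : ℤ) := Nat.prime_iff_prime_int.1 hp
  -- relations for tuples in the members of the series, from the bottom up
  have key : ∀ i : Fin (n + 1), ∃ r : ℕ, ∀ x : Fin r → H, (∀ j, ι (x j) ∈ s i) →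
      ∃ c : Fin r → ℤ, (∃ i, ¬ (p : ℤ) ∣ c i) ∧ ∏ i, f (x i) ^ c i = 1 := by
    intro i
    induction i using Fin.induction with
    | zero =>
      refine ⟨1, fun x hx => ⟨1, ⟨0, hpZ.not_dvd_one⟩, ?_⟩⟩
      have h0 := hx 0
      rw [hbot, Subgroup.mem_bot] at h0
      have : x 0 = 1 := hι (by rw [h0, map_one])
      simp [this]
    | succ i ih =>
      obtain ⟨r, hr⟩ := ih
      obtain ⟨m, hm⟩ := (hs i).exists_relation hp
      refine ⟨r * m, fun x hx => ?_⟩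
      let x' : Fin r → Fin m → H := fun j k => x (finProdFinEquiv (j, k))
      have hx' : ∀ j, ∃ c : Fin m → ℤ, (∃ k, ¬ (p : ℤ) ∣ c k) ∧
          (List.ofFn fun k => ι (x' j k) ^ c k).prod ∈ s i.castSucc := fun j =>
        hm (fun k => ι (x' j k)) fun k => hx _
      choose c hc hmem using hx'
      obtain ⟨b, ⟨j, hj⟩, hb⟩ := hr (fun j => (List.ofFn fun k => x' j k ^ c j k).prod) (by
        intro j
        rw [map_list_prod, List.map_ofFn]
        simpa [Function.comp_def] using hmem j)
      refine ⟨fun k => c (finProdFinEquiv.symm k).1 (finProdFinEquiv.symm k).2 *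
        b (finProdFinEquiv.symm k).1, ?_, ?_⟩
      · obtain ⟨k, hk⟩ := hc j
        refine ⟨finProdFinEquiv (j, k), ?_⟩
        simp only [Equiv.symm_apply_apply]
        exact hpZ.not_dvd_mul hk hj
      · rw [← finProdFinEquiv.prod_comp, Fintype.prod_prod_type, ← hb]
        refine Finset.prod_congr rfl fun j _ => ?_
        rw [map_list_prod, List.map_ofFn, List.prod_ofFn, ← Finset.prod_zpow]
        refine Finset.prod_congr rfl fun i _ => ?_
        simp only [Equiv.symm_apply_apply, zpow_mul, Function.comp_apply, map_zpow]
        rfl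
  obtain ⟨r, hr⟩ := key (Fin.last n)
  exact ⟨r, fun x => hr x fun j => by rw [htop]; trivial⟩

theorem IsFARGroup.isSolvable {G : Type*} [Group G] (h : IsFARGroup G) : Group.IsSolvable G := by
  obtain ⟨n, s, hbot, htop, hs⟩ := h
  have key : ∀ i : Fin (n + 1), Group.IsSolvable (s i) := by
    intro i
    induction i using Fin.induction with
    | zero => rw [hbot]; infer_instance
    | succ i ih =>
      obtain ⟨hKH, hnorm, hcomm, -, -⟩ := hs i
      let N : Subgroup (s i.succ) := (s i.castSucc).subgroupOf (s i.succ)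
      have hN : N.Normal := ⟨fun a ha g => hnorm g g.2 a ha⟩
      have hQ : Group.IsSolvable (s i.succ ⧸ N) := by
        refine Group.isSolvable_of_comm ?_
        rintro ⟨a⟩ ⟨b⟩
        refine QuotientGroup.eq.2 ?_
        have := hcomm (b⁻¹ : s i.succ) (b⁻¹ : s i.succ).2 (a⁻¹ : s i.succ) (a⁻¹ : s i.succ).2
        simp only [N, Subgroup.mem_subgroupOf]
        simpa [mul_assoc] using this
      refine Group.isSolvable_of_ker_le_range (Subgroup.inclusion hKH) (QuotientGroup.mk' N) ?_
      intro x hx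
      rw [QuotientGroup.ker_mk'] at hx
      exact ⟨⟨x, hx⟩, rfl⟩
  have h1 := key (Fin.last n)
  rw [htop] at h1
  exact Group.isSolvable_of_surjective (f := (⊤ : Subgroup G).subtype) fun x => ⟨⟨x, trivial⟩, rfl⟩


/-! ### Abelian groups of finite ranks -/

theorem AbSecFinPRanks.of_injective {G G' : Type u} [Group G] [Group G'] (h : AbSecFinPRanks G)
    (ι : G' →* G) (hι : Function.Injective ι) : AbSecFinPRanks G' :=
  fun H _ κ hκ C _ f p hp => h H (ι.comp κ) (hι.comp hκ) C f p hp

theorem AbSecFinPRanks.of_surjective {G G' : Type u} [Group G] [Group G'] (h : AbSecFinPRanks G)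
    (π : G →* G') (hπ : Function.Surjective π) : AbSecFinPRanks G' := by
  intro H _ κ hκ C _ f p hp
  let H' : Subgroup G := κ.range.comap π
  let e : H ≃* κ.range := MonoidHom.ofInjective hκ
  let g : H' →* H := e.symm.toMonoidHom.comp
    ((π.comp H'.subtype).codRestrict κ.range fun x => x.2)
  have hg : Function.Surjective g := by
    intro x
    obtain ⟨y, hy⟩ := hπ (κ x)
    refine ⟨⟨y, ⟨x, hy.symm⟩⟩, ?_⟩
    apply e.injective
    simp only [g, MonoidHom.comp_apply]
    refine (e.apply_symm_apply _).trans ?_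
    exact Subtype.ext hy
  obtain ⟨r, hr⟩ := h H' H'.subtype Subtype.val_injective C (f.comp g) p hp
  refine ⟨r, fun x => ?_⟩
  choose y hy using fun i => hg (x i)
  obtain ⟨c, hc, hprod⟩ := hr y
  exact ⟨c, hc, by simpa [hy] using hprod⟩

theorem AbSecFinPRanks.finPRanks {G C : Type u} [Group G] [CommGroup C] (h : AbSecFinPRanks G)
    (ι : C →* G) (hι : Function.Injective ι) : FinPRanks (Additive C) := by
  intro p hp
  obtain ⟨r, hr⟩ := h C ι hι C (MonoidHom.id C) p hp
  refine ⟨r, fun x => ?_⟩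
  obtain ⟨c, hc, hprod⟩ := hr fun i => (x i).toMul
  exact ⟨c, hc, hprod⟩

theorem FinPRanks.of_surjective {M M' : Type*} [AddCommGroup M] [AddCommGroup M']
    (h : FinPRanks M) (π : M →+ M') (hπ : Function.Surjective π) : FinPRanks M' := by
  intro p hp
  obtain ⟨r, hr⟩ := h p hp
  refine ⟨r, fun x => ?_⟩
  choose y hy using fun i => hπ (x i)
  obtain ⟨c, hc, hsum⟩ := hr y
  refine ⟨c, hc, ?_⟩
  have := congrArg π hsum
  simpa [hy, map_sum] using this

theorem finite_of_rank_le_nat {K V : Type*} [Field K] [Finite K] [AddCommGroup V] [Module K V]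
    {r : ℕ} (h : Module.rank K V ≤ r) : Finite V := by
  have : Module.Finite K V :=
    Module.rank_lt_aleph0_iff.1 (h.trans_lt Cardinal.natCast_lt_aleph0)
  exact Module.finite_of_finite K

theorem FinPRanks.finite_torsionBy_prime {M : Type*} [AddCommGroup M] (h : FinPRanks M) {p : ℕ}
    (hp : p.Prime) : {a : M | p • a = 0}.Finite := by
  classical
  obtain ⟨r, hr⟩ := h p hp
  have : Fact p.Prime := ⟨hp⟩
  let T : AddSubgroup M := (nsmulAddMonoidHom p : M →+ M).ker
  let _ : Module (ZMod p) T := AddCommGroup.zmodModule fun x => Subtype.ext x.2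
  have hrank : Module.rank (ZMod p) T ≤ r := by
    refine rank_le fun s hs => ?_
    by_contra! hlt
    obtain ⟨t, hts, htc⟩ := Finset.exists_subset_card_eq hlt.le
    have ht : LinearIndependent (ZMod p) (fun i : t => (i : T)) :=
      hs.comp (fun i : t => (⟨i, hts i.2⟩ : s)) fun a b hab =>
        Subtype.ext (congrArg Subtype.val hab :)
    let e : Fin r ≃ t := (Fintype.equivFinOfCardEq (by simpa using htc)).symm
    have ht' : LinearIndependent (ZMod p) (fun i : Fin r => ((e i : t) : T)) :=
      ht.comp e e.injective
    obtain ⟨c, ⟨i, hi⟩, hsum⟩ := hr fun i => ((e i : t) : T)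
    refine hi ((ZMod.intCast_zmod_eq_zero_iff_dvd _ _).1
      (Fintype.linearIndependent_iff.1 ht' (fun i => (c i : ZMod p)) ?_ i))
    apply Subtype.ext
    simp only [Int.cast_smul_eq_zsmul, AddSubgroup.val_finsetSum, AddSubgroup.coe_zsmul]
    exact hsum
  have : Finite T := finite_of_rank_le_nat hrank
  exact Set.toFinite (T : Set M)

theorem FinPRanks.finite_torsionBy {M : Type*} [AddCommGroup M] (h : FinPRanks M) {m : ℕ}
    (hm : m ≠ 0) : {a : M | m • a = 0}.Finite := by
  induction m using induction_on_primes with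
  | zero => exact absurd rfl hm
  | one => simp
  | prime_mul p m hp ih =>
    have hm' : m ≠ 0 := right_ne_zero_of_mul hm
    have h1 : {a : M | (p * m) • a = 0} = (fun a => m • a) ⁻¹' {a | p • a = 0} := by
      ext a; simp [mul_smul]
    rw [h1]
    refine (h.finite_torsionBy_prime hp).preimage' fun b _ => ?_
    by_cases hne : ∃ a₀, m • a₀ = b
    · obtain ⟨a₀, rfl⟩ := hne
      refine ((ih hm').image (fun a => a₀ + a)).subset fun a ha => ⟨a - a₀, ?_, by simp⟩
      simp only [Set.mem_ofPred_eq, smul_sub]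
      rw [Set.mem_preimage, Set.mem_singleton_iff] at ha
      rw [ha, sub_self]
    · refine Set.finite_empty.subset fun a ha => hne ⟨a, ha⟩

theorem FinPRanks.rank_lt_aleph0 {M : Type*} [AddCommGroup M] (h : FinPRanks M) :
    Module.rank ℤ M < Cardinal.aleph0 := by
  classical
  obtain ⟨r, hr⟩ := h 2 Nat.prime_two
  have hrank : Module.rank ℤ M ≤ r := by
    refine rank_le fun s hs => ?_
    by_contra! hlt
    obtain ⟨t, hts, htc⟩ := Finset.exists_subset_card_eq hlt.le
    have ht : LinearIndependent ℤ (fun i : t => (i : M)) :=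
      hs.comp (fun i : t => (⟨i, hts i.2⟩ : s)) fun a b hab =>
        Subtype.ext (congrArg Subtype.val hab :)
    let e : Fin r ≃ t := (Fintype.equivFinOfCardEq (by simpa using htc)).symm
    have ht' : LinearIndependent ℤ (fun i : Fin r => ((e i : t) : M)) :=
      ht.comp e e.injective
    obtain ⟨c, ⟨i, hi⟩, hsum⟩ := hr fun i => ((e i : t) : M)
    exact hi (by rw [Fintype.linearIndependent_iff.1 ht' c hsum i]; exact dvd_zero _)
  exact hrank.trans_lt Cardinal.natCast_lt_aleph0

/-- An endomorphism of an abelian group of finite rank either kills an element of infinite order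
or has torsion cokernel. -/
theorem FinPRanks.ker_or_coker {M : Type*} [AddCommGroup M] (h : FinPRanks M) (ψ : M →ₗ[ℤ] M) :
    (∃ a : M, ψ a = 0 ∧ ∀ k : ℤ, k ≠ 0 → k • a ≠ 0) ∨
      ∀ b : M, ∃ k : ℤ, k ≠ 0 ∧ k • b ∈ LinearMap.range ψ := by
  by_cases hk : Module.rank ℤ (LinearMap.ker ψ) = 0
  · right
    have h1 := LinearMap.rank_range_add_rank_ker ψ
    have h2 := HasRankNullity.rank_quotient_add_rank (LinearMap.range ψ)
    have hq : Module.rank ℤ (M ⧸ LinearMap.range ψ) = 0 := by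
      rw [hk, add_zero] at h1
      rw [h1] at h2
      have h3 : Module.rank ℤ (M ⧸ LinearMap.range ψ) + Module.rank ℤ M = 0 + Module.rank ℤ M := by
        rw [h2, zero_add]
      exact (Cardinal.add_right_inj_of_lt_aleph0 h.rank_lt_aleph0).1 h3
    intro b
    obtain ⟨k, hk0, hk⟩ := rank_eq_zero_iff.1 hq (Submodule.Quotient.mk b)
    exact ⟨k, hk0, (Submodule.Quotient.mk_eq_zero _).1 hk⟩
  · left
    rw [rank_eq_zero_iff] at hk
    push Not at hk
    obtain ⟨a, ha⟩ := hk
    exact ⟨a, a.2, fun k hk0 hka => ha k hk0 (Subtype.ext hka)⟩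


/-! ### Lifting fixed points of endomorphisms -/

/-- If `φ` fixes an element of infinite order of `G/A`, where `A` is an abelian normal
`φ`-invariant subgroup of finite ranks, then `φ` fixes an element of infinite order of `G`.
Unless `A` itself has such a fixed point, `A / {b (φ b)⁻¹}` is torsion with finite `m`-torsion for
all `m`; the obstructions `(g ^ i)⁻¹ φ (g ^ i)` then take finitely many values in it, so a positive
power of `g`, corrected by an element of `A`, is fixed. -/
theorem exists_fixed_of_abelian {G : Type u} [Group G] (hG : AbSecFinPRanks G) (A : Subgroup G)
    [A.Normal] (hA : ∀ x ∈ A, ∀ y ∈ A, x * y = y * x) (φ : G →* G) (hφ : ∀ x ∈ A, φ x ∈ A)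
    (g : G) (hg : g⁻¹ * φ g ∈ A) (hord : ∀ k : ℕ, k ≠ 0 → g ^ k ∉ A) :
    ∃ x : G, φ x = x ∧ ∀ k : ℕ, k ≠ 0 → x ^ k ≠ 1 := by
  let _ : CommGroup A :=
    { (inferInstance : Group A) with mul_comm := fun a b => Subtype.ext (hA a a.2 b b.2) }
  have hfin : FinPRanks (Additive A) := hG.finPRanks A.subtype Subtype.val_injective
  let φA : A →* A := (φ.comp A.subtype).codRestrict A fun x => hφ x x.2
  let ψ : Additive A →ₗ[ℤ] Additive A := LinearMap.id - φA.toAdditive.toIntLinearMap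
  have hψ : ∀ b : A, ψ (Additive.ofMul b) = Additive.ofMul (b * (φA b)⁻¹) := fun b => by
    simp only [ψ, LinearMap.sub_apply, ofMul_mul, ofMul_inv, ← sub_eq_add_neg]; rfl
  rcases hfin.ker_or_coker ψ with ⟨a, ha, hak⟩ | hcoker
  · obtain ⟨a, rfl⟩ := Additive.ofMul.surjective a
    refine ⟨a, ?_, fun k hk hk1 => hak k (by exact_mod_cast hk) ?_⟩
    · rw [hψ, ofMul_eq_zero, mul_inv_eq_one] at ha
      exact (congrArg Subtype.val ha).symm
    · rw [natCast_zsmul, ← ofMul_pow, ofMul_eq_zero]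
      exact Subtype.ext hk1
  -- the image of `b ↦ b (φ b)⁻¹`
  let R : Subgroup G := (LinearMap.range ψ).toAddSubgroup.toSubgroup'.map A.subtype
  have hR : ∀ x, x ∈ R ↔ ∃ b ∈ A, b * (φ b)⁻¹ = x := by
    intro x
    constructor
    · rintro ⟨y, ⟨b, hb⟩, rfl⟩
      obtain ⟨b, rfl⟩ := Additive.ofMul.surjective b
      rw [hψ] at hb
      exact ⟨b, b.2, congrArg Subtype.val hb⟩
    · rintro ⟨b, hb, rfl⟩
      exact ⟨⟨b, hb⟩ * (φA ⟨b, hb⟩)⁻¹, ⟨Additive.ofMul ⟨b, hb⟩, hψ _⟩, rfl⟩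
  have hRA : R ≤ A := by
    rintro _ ⟨y, -, rfl⟩; exact y.2
  have hRconj : ∀ h : G, h⁻¹ * φ h ∈ A → ∀ x ∈ R, h * x * h⁻¹ ∈ R := by
    intro h hh x hx
    obtain ⟨b, hb, rfl⟩ := (hR x).1 hx
    refine (hR _).2 ⟨h * b * h⁻¹, ‹A.Normal›.conj_mem b hb h, ?_⟩
    have h1 : φ h = h * (h⁻¹ * φ h) := by group
    generalize h⁻¹ * φ h = c at hh h1
    simp only [map_mul, map_inv, h1]
    have h2 := hA c hh _ (A.inv_mem (hφ b hb))
    simp only [mul_inv_rev, inv_inv, mul_assoc]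
    congr 2
    rw [inv_mul_cancel_left]
    rw [← mul_assoc c, h2]
    group
  have hgpow : ∀ i : ℕ, (g ^ i)⁻¹ * φ (g ^ i) ∈ A := by
    intro i
    rw [← QuotientGroup.eq, map_pow]
    have : ((g : G) : G ⧸ A) = (φ g : G) := QuotientGroup.eq.2 hg
    simp [this]
  have hginv : (g⁻¹)⁻¹ * φ g⁻¹ ∈ A := by
    have := ‹A.Normal›.conj_mem _ (A.inv_mem hg) g
    simpa [mul_assoc] using this
  let a : ℕ → A := fun i => ⟨(g ^ i)⁻¹ * φ (g ^ i), hgpow i⟩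
  obtain ⟨m, hm0, hm⟩ : ∃ m : ℕ, m ≠ 0 ∧ ((a 1 : G)) ^ m ∈ R := by
    obtain ⟨k, hk0, hk⟩ := hcoker (Additive.ofMul (a 1))
    have h1 : (k.natAbs : ℤ) • Additive.ofMul (a 1) ∈ LinearMap.range ψ := by
      rcases Int.natAbs_eq k with h | h
      · rwa [← h]
      · rw [← neg_eq_iff_eq_neg.2 h, neg_smul]; exact Submodule.neg_mem _ hk
    rw [natCast_zsmul] at h1
    exact ⟨k.natAbs, Int.natAbs_ne_zero.2 hk0, ⟨a 1 ^ k.natAbs, h1, rfl⟩⟩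
  -- the images of all the `a i` are killed by `m` in the cokernel
  have ham : ∀ i, (a i : G) ^ m ∈ R := by
    intro i
    induction i with
    | zero => simp [a, R.one_mem]
    | succ i ih =>
      have h1 : (a (i + 1) : G) = (g⁻¹ * a i * (g⁻¹)⁻¹) * a 1 := by
        simp only [a, pow_succ, pow_zero, one_mul, map_mul]; group
      have h2 : Commute (g⁻¹ * a i * (g⁻¹)⁻¹) (a 1 : G) :=
        hA _ (‹A.Normal›.conj_mem _ (a i).2 _) _ (a 1).2
      rw [h1, h2.mul_pow, conj_pow]
      exact R.mul_mem (hRconj _ hginv _ ih) hm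
  let B := Additive A ⧸ LinearMap.range ψ
  have hB : FinPRanks B := hfin.of_surjective (LinearMap.range ψ).mkQ.toAddMonoidHom
    (Submodule.mkQ_surjective _)
  obtain ⟨i, j, hij, hEq⟩ := Set.Finite.exists_lt_map_eq_of_forall_mem
    (f := fun i => (Submodule.Quotient.mk (Additive.ofMul (a i)) : B))
    (fun i => by
      show m • (Submodule.Quotient.mk (Additive.ofMul (a i)) : B) = 0
      rw [← Submodule.Quotient.mk_smul, Submodule.Quotient.mk_eq_zero]
      obtain ⟨y, hy, hy'⟩ := ham i
      have : y = a i ^ m := Subtype.ext hy'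
      rw [this] at hy
      exact hy) (hB.finite_torsionBy hm0)
  have hji : (a j : G) * (a i : G)⁻¹ ∈ R := by
    have h1 := (Submodule.Quotient.eq _).1 hEq.symm
    exact ⟨a j * (a i)⁻¹, by rw [← div_eq_mul_inv]; exact h1, rfl⟩
  obtain ⟨d, rfl⟩ := Nat.exists_eq_add_of_lt hij
  have hd : (a (d + 1) : G) ∈ R := by
    have h1 : (a (d + 1) : G) = g ^ i * (a (i + d + 1) * (a i : G)⁻¹) * (g ^ i)⁻¹ := by
      have h2 : i + d + 1 = (d + 1) + i := by ring
      simp only [a, h2, pow_add g (d + 1) i, map_mul]; group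
    rw [h1]
    exact hRconj _ (hgpow i) _ hji
  obtain ⟨b, hb, hbd⟩ := (hR _).1 hd
  refine ⟨g ^ (d + 1) * b, ?_, fun k hk hk1 => hord ((d + 1) * k) (by simp [hk]) ?_⟩
  · have h3 : φ (g ^ (d + 1)) = g ^ (d + 1) * (b * (φ b)⁻¹) := by
      rw [hbd]; simp [a]
    rw [map_mul, h3]; group
  · rw [← QuotientGroup.eq_one_iff, pow_mul]
    have h4 := congrArg (QuotientGroup.mk : G → G ⧸ A) hk1
    simpa [(QuotientGroup.eq_one_iff b).2 hb] using h4

/-- The abelian case applied to `N/M` in `G/M`. -/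
theorem exists_fixed_mod {G : Type u} [Group G] (hG : AbSecFinPRanks G) (N M : Subgroup G)
    [N.Normal] [M.Normal] (hMN : M ≤ N) (hcomm : ⁅N, N⁆ ≤ M) (φ : G →* G)
    (hφN : N ≤ N.comap φ) (hφM : M ≤ M.comap φ)
    (g : G) (hg : g⁻¹ * φ g ∈ N) (hord : ∀ k : ℕ, k ≠ 0 → g ^ k ∉ N) :
    ∃ x : G, x⁻¹ * φ x ∈ M ∧ ∀ k : ℕ, k ≠ 0 → x ^ k ∉ M := by
  have hmem : ∀ x : G, (x : G ⧸ M) ∈ N.map (QuotientGroup.mk' M) ↔ x ∈ N := by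
    intro x
    constructor
    · rintro ⟨y, hy, hyx⟩
      have := N.mul_mem hy (hMN (QuotientGroup.eq.1 hyx))
      simpa using this
    · exact fun h => ⟨x, h, rfl⟩
  have hnorm : (N.map (QuotientGroup.mk' M)).Normal :=
    Subgroup.Normal.map ‹_› _ (QuotientGroup.mk'_surjective M)
  obtain ⟨x, hx, hxk⟩ := exists_fixed_of_abelian
    (hG.of_surjective (QuotientGroup.mk' M) (QuotientGroup.mk'_surjective M))
    (N.map (QuotientGroup.mk' M)) (by
      rintro _ ⟨x, hx, rfl⟩ _ ⟨y, hy, rfl⟩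
      refine (QuotientGroup.eq.2 ?_ : ((x * y : G) : G ⧸ M) = (y * x : G))
      have := hcomm (Subgroup.commutator_mem_commutator (N.inv_mem hy) (N.inv_mem hx))
      simpa [commutatorElement_def, mul_assoc] using this)
    (QuotientGroup.map M M φ hφM) (by
      rintro _ ⟨x, hx, rfl⟩
      exact ⟨φ x, hφN hx, rfl⟩) (g : G ⧸ M) ((hmem _).2 hg)
      (fun k hk h => hord k hk ((hmem _).1 h))
  obtain ⟨x, rfl⟩ := QuotientGroup.mk_surjective x
  exact ⟨x, QuotientGroup.eq.1 hx.symm, fun k hk h => hxk k hk ((QuotientGroup.eq_one_iff _).2 h)⟩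

/-- A fixed point of infinite order in `G/N`, with `N` normal and `φ`-invariant, lifts to one in
the solvable group `G`: lift through the derived series of `N`, one step at a time. -/
theorem exists_fixed_of_solvable {G : Type u} [Group G] [Group.IsSolvable G]
    (hG : AbSecFinPRanks G) (N : Subgroup G) [N.Normal] (φ : G →* G) (hφN : N ≤ N.comap φ)
    (g : G) (hg : g⁻¹ * φ g ∈ N) (hord : ∀ k : ℕ, k ≠ 0 → g ^ k ∉ N) :
    ∃ x : G, φ x = x ∧ ∀ k : ℕ, k ≠ 0 → x ^ k ≠ 1 := by
  obtain ⟨d, hd⟩ := (Group.IsSolvable.solvable : ∃ n, derivedSeries G n = ⊥)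
  have key : ∀ n : ℕ, ∃ M : Subgroup G, M.Normal ∧ M ≤ derivedSeries G n ∧ M ≤ M.comap φ ∧
      ∃ x : G, x⁻¹ * φ x ∈ M ∧ ∀ k : ℕ, k ≠ 0 → x ^ k ∉ M := by
    intro n
    induction n with
    | zero => exact ⟨N, ‹_›, le_top, hφN, g, hg, hord⟩
    | succ n ih =>
      obtain ⟨M, hM, hMle, hMφ, x, hx, hxk⟩ := ih
      have hφ' : ⁅M, M⁆ ≤ (⁅M, M⁆).comap φ := by
        rw [← Subgroup.map_le_iff_le_comap, Subgroup.map_commutator]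
        exact Subgroup.commutator_mono (Subgroup.map_le_iff_le_comap.2 hMφ)
          (Subgroup.map_le_iff_le_comap.2 hMφ)
      exact ⟨⁅M, M⁆, inferInstance, Subgroup.commutator_mono hMle hMle, hφ',
        exists_fixed_mod hG M ⁅M, M⁆ (Subgroup.commutator_le_self M) le_rfl φ hMφ hφ' x hx hxk⟩
  obtain ⟨M, -, hM, -, x, hx, hxk⟩ := key d
  rw [hd, le_bot_iff] at hM
  subst hM
  exact ⟨x, (inv_mul_eq_one.1 (Subgroup.mem_bot.1 hx)).symm,
    fun k hk h => hxk k hk (Subgroup.mem_bot.2 h)⟩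


/-! ### Finitely generated groups: invariant subgroups and the lower central series -/

theorem finite_monoidHom {G Q : Type*} [Group G] [Group Q] [Finite Q] (hG : Group.FG G) :
    Finite (G →* Q) := by
  obtain ⟨S, hS⟩ := (Group.fg_def.1 hG : (⊤ : Subgroup G).FG)
  refine Finite.of_injective (fun (f : G →* Q) (s : S) => f s) fun f g hfg => ?_
  exact MonoidHom.eq_of_eqOn_dense hS fun s hs => congrFun hfg ⟨s, hs⟩

/-- The intersection of the kernels of the finitely many homomorphisms `G → G/core(K)` is
invariant under every endomorphism of `G`. -/
theorem exists_invariant_finiteIndex {G : Type*} [Group G] (hG : Group.FG G) (K : Subgroup G)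
    (hK : K.FiniteIndex) :
    ∃ K' : Subgroup G, K' ≤ K ∧ K'.FiniteIndex ∧ K'.Normal ∧
      ∀ φ : G →* G, K' ≤ K'.comap φ := by
  have := finite_monoidHom (Q := G ⧸ K.normalCore) hG
  refine ⟨⨅ θ : G →* G ⧸ K.normalCore, θ.ker, fun x hx => ?_, Subgroup.finiteIndex_iInf fun θ => ?_,
    Subgroup.normal_iInf_normal fun θ => inferInstance, fun φ x hx => ?_⟩
  · have := Subgroup.mem_iInf.1 hx (QuotientGroup.mk' K.normalCore)
    rw [QuotientGroup.ker_mk'] at this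
    exact K.normalCore_le this
  · infer_instance
  · rw [Subgroup.mem_comap]
    exact Subgroup.mem_iInf.2 fun θ => Subgroup.mem_iInf.1 hx (θ.comp φ)

/-- To bound `⁅R, G⁆`, where `R` is the normal closure of `F`, by a normal subgroup `N`, it
suffices to consider commutators of elements of `F` with generators of `G`. -/
theorem le_of_commutator_generators {G : Type*} [Group G] (N : Subgroup G) [N.Normal] (F S : Set G)
    (hS : Subgroup.closure S = ⊤) (h : ∀ f ∈ F, ∀ s ∈ S, ⁅f, s⁆ ∈ N) :
    ⁅Subgroup.normalClosure F, (⊤ : Subgroup G)⁆ ≤ N := by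
  have hq : ∀ x g : G, ⁅x, g⁆ ∈ N ↔ (x : G ⧸ N) * g = g * x := by
    intro x g
    rw [← QuotientGroup.eq_one_iff, ← QuotientGroup.mk'_apply, map_commutatorElement,
      commutatorElement_eq_one_iff_mul_comm]; rfl
  have hF : Subgroup.normalClosure F ≤ (Subgroup.center (G ⧸ N)).comap (QuotientGroup.mk' N) := by
    refine Subgroup.normalClosure_le_normal fun f hf => ?_
    have h1 : Subgroup.closure S ≤
        (Subgroup.centralizer {(f : G ⧸ N)}).comap (QuotientGroup.mk' N) := by
      rw [Subgroup.closure_le]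
      intro s hs
      rw [SetLike.mem_coe, Subgroup.mem_comap, Subgroup.mem_centralizer_singleton_iff]
      exact ((hq f s).1 (h f hf s hs)).symm
    rw [SetLike.mem_coe, Subgroup.mem_comap, Subgroup.mem_center_iff]
    intro g
    obtain ⟨g, rfl⟩ := QuotientGroup.mk_surjective g
    have h2 := h1 (hS ▸ Subgroup.mem_top g)
    rw [Subgroup.mem_comap, Subgroup.mem_centralizer_singleton_iff] at h2
    exact h2
  rw [Subgroup.commutator_le]
  intro x hx g _
  rw [hq]
  exact ((Subgroup.mem_center_iff.1 (hF hx)) g).symm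

/-- In a finitely generated group each term of the lower central series is the normal closure of
a finite set. -/
theorem lowerCentralSeries_eq_normalClosure {G : Type*} [Group G] (hG : Group.FG G) (n : ℕ) :
    ∃ F : Set G, F.Finite ∧ (⊤ : Subgroup G).lowerCentralSeries n = Subgroup.normalClosure F := by
  obtain ⟨S, hS⟩ := (Group.fg_def.1 hG : (⊤ : Subgroup G).FG)
  induction n with
  | zero =>
    refine ⟨S, S.finite_toSet, ?_⟩
    rw [Subgroup.lowerCentralSeries_zero, eq_comm, eq_top_iff, ← hS]
    exact Subgroup.closure_le_normalClosure
  | succ n ih =>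
    obtain ⟨F, hF, h⟩ := ih
    refine ⟨Set.image2 (fun f s => ⁅f, s⁆) F S, hF.image2 _ S.finite_toSet, ?_⟩
    rw [Subgroup.lowerCentralSeries_succ, h]
    refine le_antisymm (le_of_commutator_generators _ F S hS fun f hf s hs =>
      Subgroup.subset_normalClosure ⟨f, hf, s, hs, rfl⟩) (Subgroup.normalClosure_le_normal ?_)
    rintro _ ⟨f, hf, s, hs, rfl⟩
    exact Subgroup.commutator_mem_commutator (Subgroup.subset_normalClosure hf) trivial

/-- `G` is virtually nilpotent: some finite-index subgroup is nilpotent. -/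
def VirtNilp (G : Type*) [Group G] : Prop := ∃ H : Subgroup G, H.FiniteIndex ∧ Group.IsNilpotent H

theorem VirtNilp.of_subgroup {G : Type*} [Group G] (K : Subgroup G) (hK : K.FiniteIndex)
    (h : VirtNilp K) : VirtNilp G := by
  obtain ⟨H, hH, hn⟩ := h
  refine ⟨H.map K.subtype, ⟨?_⟩, ?_⟩
  · rw [Subgroup.index_map_subtype]
    exact mul_ne_zero hH.index_ne_zero hK.index_ne_zero
  · exact Group.nilpotent_of_surjective (K.subtype.subgroupMap H) (K.subtype.subgroupMap_surjective H)


/-! ### Nilpotent groups spanning a semisimple algebra -/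

/-- In a finite-dimensional commutative algebra a polynomial has only finitely many roots modulo
the nilradical, because there are finitely many primes. -/
theorem exists_sub_isNilpotent_of_comm {R : Type*} [CommRing R] [Algebra ℚ R]
    [FiniteDimensional ℚ R] (p : Polynomial ℚ) (hp : p ≠ 0) (x : ℕ → R)
    (hx : ∀ k, Polynomial.aeval (x k) p = 0) : ∃ k l, k < l ∧ IsNilpotent (x k - x l) := by
  have : IsArtinianRing R := IsArtinianRing.of_finite ℚ R
  have hfin : Finite {P : Ideal R | P.IsPrime} := IsArtinianRing.setOfPred_isPrime_finite R
  have hroots : {f : ∀ P : {P : Ideal R | P.IsPrime}, R ⧸ P.1 |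
      ∀ P, f P ∈ {y | Polynomial.aeval y p = 0}}.Finite := by
    refine Set.Finite.pi' fun P => ?_
    have : P.1.IsPrime := P.2
    refine (Polynomial.rootSet_finite p (R ⧸ P.1)).subset fun y hy => ?_
    exact Polynomial.mem_rootSet.2 ⟨hp, hy⟩
  obtain ⟨k, l, hkl, h⟩ := Set.Finite.exists_lt_map_eq_of_forall_mem
    (f := fun k (P : {P : Ideal R | P.IsPrime}) => (Ideal.Quotient.mk P.1 (x k)))
    (fun k => by
      refine fun (P : {P : Ideal R | P.IsPrime}) => ?_
      have := congrArg (Ideal.Quotient.mkₐ ℚ P.1) (hx k)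
      rw [← Polynomial.aeval_algHom_apply, map_zero] at this
      exact this) hroots
  refine ⟨k, l, hkl, nilpotent_iff_mem_prime.2 fun P hP => ?_⟩
  exact Ideal.Quotient.eq.1 (congrFun h ⟨P, hP⟩)

/-- Among infinitely many commuting roots of a fixed polynomial two differ by a nilpotent. -/
theorem exists_sub_isNilpotent {B : Type*} [Ring B] [Algebra ℚ B]
    [FiniteDimensional ℚ B] (p : Polynomial ℚ) (hp : p ≠ 0) (x : ℕ → B)
    (hcomm : ∀ k l, x k * x l = x l * x k)
    (hx : ∀ k, Polynomial.aeval (x k) p = 0) : ∃ k l, k < l ∧ IsNilpotent (x k - x l) := by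
  have hc := Algebra.isMulCommutative_adjoin ℚ (s := Set.range x) (by
    rintro _ ⟨k, rfl⟩ _ ⟨l, rfl⟩; exact hcomm k l)
  let _ : CommRing (Algebra.adjoin ℚ (Set.range x)) :=
    { (inferInstance : Ring (Algebra.adjoin ℚ (Set.range x))) with
      mul_comm := hc.is_comm.comm }
  let y : ℕ → Algebra.adjoin ℚ (Set.range x) := fun k => ⟨x k, Algebra.subset_adjoin ⟨k, rfl⟩⟩
  have : FiniteDimensional ℚ (Algebra.adjoin ℚ (Set.range x)) :=
    inferInstanceAs (FiniteDimensional ℚ (Subalgebra.toSubmodule (Algebra.adjoin ℚ (Set.range x))))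
  obtain ⟨k, l, hkl, h⟩ := exists_sub_isNilpotent_of_comm p hp y fun k => by
    apply Subtype.val_injective
    have := Polynomial.aeval_algHom_apply (Algebra.adjoin ℚ (Set.range x)).val (y k) p
    exact this.symm.trans (hx k)
  exact ⟨k, l, hkl, h.map (Algebra.adjoin ℚ (Set.range x)).val⟩

theorem eq_zero_of_isNilpotent_of_central {B : Type*} [Ring B] (hB : Ring.jacobson B = ⊥) {x : B}
    (hx : IsNilpotent x) (hc : ∀ b, b * x = x * b) : x = 0 := by
  rw [← Ideal.mem_bot, ← hB, ← Ideal.jacobson_bot,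
    Ideal.mem_jacobson_iff]
  intro y
  have h1 : IsNilpotent (y * x) := Commute.isNilpotent_mul_left (hc y) hx
  obtain ⟨u, hu⟩ := h1.isUnit_add_one
  refine ⟨↑u⁻¹, ?_⟩
  have : (↑u⁻¹ : B) * y * x + ↑u⁻¹ - 1 = ↑u⁻¹ * (y * x + 1) - 1 := by noncomm_ring
  rw [this, ← hu]
  simp

theorem central_of_span {B : Type*} [Ring B] [Algebra ℚ B] (T : Set B)
    (hT : Submodule.span ℚ T = ⊤) (x : B) (hx : ∀ t ∈ T, t * x = x * t) (b : B) :
    b * x = x * b := by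
  have hb : b ∈ Submodule.span ℚ T := hT ▸ Submodule.mem_top
  induction hb using Submodule.span_induction with
  | mem t ht => exact hx t ht
  | zero => simp
  | add a b _ _ ha hb => rw [add_mul, mul_add, ha, hb]
  | smul r a _ ha => rw [smul_mul_assoc, mul_smul_comm, ha]

/-- A finitely generated nilpotent group inside a finite-dimensional algebra `B` with zero radical
is abelian, provided each of its finite-index subgroups spans `B`. If `z` lies in the second centre,
then for each `g` the elements `⁅z, g⁆ ^ k g` are conjugate to `g` and commute, so
`⁅z, g⁆` has finite order. Hence `z` centralizes a finite-index subgroup, so all of `B`. -/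
theorem comm_of_injective {B : Type*} [Ring B] [Algebra ℚ B] [FiniteDimensional ℚ B]
    (hB : Ring.jacobson B = ⊥) {S : Type*} [Group S] (hS : Group.FG S) [Group.IsNilpotent S]
    (ρ : S →* B) (hρ : Function.Injective ρ)
    (hspan : ∀ K : Subgroup S, K.FiniteIndex → Submodule.span ℚ (ρ '' K) = ⊤) (g h : S) :
    g * h = h * g := by
  have hspan' : Submodule.span ℚ (Set.range ρ) = ⊤ := by
    rw [← Set.image_univ]; exact hspan ⊤ inferInstance
  -- the second centre of `S` equals the centre
  have key : ∀ z : S, (∀ g, ⁅z, g⁆ ∈ Subgroup.center S) → z ∈ Subgroup.center S := by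
    intro z hz
    let θ : S →* Subgroup.center S :=
      { toFun := fun g => ⟨⁅z, g⁆, hz g⟩
        map_one' := by simp
        map_mul' := fun a b => by
          apply Subtype.ext
          have := Subgroup.mem_center_iff.1 (hz b) a
          show ⁅z, a * b⁆ = ⁅z, a⁆ * ⁅z, b⁆
          have h1 : ⁅z, a * b⁆ = ⁅z, a⁆ * (a * ⁅z, b⁆ * a⁻¹) := by
            simp only [commutatorElement_def]; group
          rw [h1, this]; group }
    have htor : ∀ g, ∃ m : ℕ, 0 < m ∧ θ g ^ m = 1 := by
      intro g
      have hcen : ∀ a, a * (θ g : S) = θ g * a := Subgroup.mem_center_iff.1 (θ g).2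
      have hcenB : ∀ b, b * ρ (θ g) = ρ (θ g) * b := central_of_span _ hspan' _ (by
        rintro _ ⟨a, rfl⟩; rw [← map_mul, hcen, map_mul])
      have hconj : ∀ k : ℕ, z ^ k * g * (z ^ k)⁻¹ = (θ g : S) ^ k * g := by
        intro k
        induction k with
        | zero => simp
        | succ k ih =>
          have h1 : z * g * z⁻¹ = θ g * g := by simp [θ, commutatorElement_def]
          calc z ^ (k + 1) * g * (z ^ (k + 1))⁻¹
              = z ^ k * (z * g * z⁻¹) * (z ^ k)⁻¹ := by rw [pow_succ]; group
            _ = z ^ k * (θ g : S) * g * (z ^ k)⁻¹ := by rw [h1]; group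
            _ = θ g * (z ^ k * g * (z ^ k)⁻¹) := by rw [hcen]; group
            _ = _ := by rw [ih, pow_succ']; group
      obtain ⟨k, l, hkl, hnil⟩ := exists_sub_isNilpotent (minpoly ℚ (ρ g))
        (minpoly.ne_zero (Algebra.IsIntegral.isIntegral _)) (fun k => ρ ((θ g : S) ^ k * g))
        (fun k l => by
          have h1 : Commute ((θ g : S) ^ k * g) ((θ g : S) ^ l * g) := by
            have h2 : Commute g (θ g : S) := hcen g
            exact ((Commute.refl _).pow_pow k l).mul_left (h2.pow_right l) |>.mul_right
              ((h2.symm.pow_left k).mul_left (Commute.refl _))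
          rw [← map_mul, h1.eq, map_mul])
        (fun k => by
          let u : Bˣ := Units.map ρ (toUnits (z ^ k))
          have h1 : ρ ((θ g : S) ^ k * g) = u * ρ g * ↑u⁻¹ := by
            rw [← hconj, map_mul, map_mul]; rfl
          have h2 : ∀ q : Polynomial ℚ, Polynomial.aeval (u * ρ g * ↑u⁻¹) q =
              u * Polynomial.aeval (ρ g) q * ↑u⁻¹ := by
            intro q
            induction q using Polynomial.induction_on' with
            | add p q hp hq => simp only [map_add, hp, hq, mul_add, add_mul]
            | monomial n a =>
              rw [Polynomial.aeval_monomial, Polynomial.aeval_monomial, Units.conj_pow,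
                ← mul_assoc, ← mul_assoc, ← mul_assoc, (Algebra.commutes a (u : B))]
          simp only [h1, h2, minpoly.aeval, mul_zero, zero_mul])
      refine ⟨l - k, by omega, ?_⟩
      have h3 : 1 - ρ (θ g) ^ (l - k) = 0 := by
        refine eq_zero_of_isNilpotent_of_central hB ?_ fun b => ?_
        · have h4 : 1 - ρ (θ g) ^ (l - k) =
              (ρ ((θ g : S) ^ k * g) - ρ ((θ g : S) ^ l * g)) * ρ (((θ g : S) ^ k * g)⁻¹) := by
            rw [sub_mul, ← map_mul, ← map_mul, ← map_pow, mul_inv_cancel, map_one]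
            congr 2
            conv_rhs => rw [← Nat.sub_add_cancel hkl.le, pow_add]
            group
          rw [h4]
          refine Commute.isNilpotent_mul_right ?_ hnil
          have h5 : ∀ i : ℕ, Commute (ρ ((θ g : S) ^ i * g)) (ρ (((θ g : S) ^ k * g)⁻¹)) := by
            intro i
            have h2 : Commute g (θ g : S) := hcen g
            have h6 : Commute ((θ g : S) ^ i * g) ((θ g : S) ^ k * g) :=
              ((Commute.refl _).pow_pow i k).mul_left (h2.pow_right k) |>.mul_right
              ((h2.symm.pow_left i).mul_left (Commute.refl _))
            exact h6.inv_right.map ρ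
          exact (h5 k).sub_left (h5 l)
        · have h5 : Commute b (ρ (θ g)) := hcenB b
          exact ((Commute.one_right b).sub_right (h5.pow_right _)).eq
      apply Subtype.ext
      apply hρ
      rw [sub_eq_zero] at h3
      simpa using h3.symm
    have hfg : Group.FG θ.range := inferInstance
    have hfinite : Finite θ.range := by
      let _ : CommGroup θ.range :=
        { (inferInstance : Group θ.range) with
          mul_comm := fun a b => Subtype.ext (Subtype.ext
            (Subgroup.mem_center_iff.1 (b : Subgroup.center S).2 _)) }
      refine @CommGroup.finite_of_fg_isMulTorsion θ.range _ hfg ?_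
      rintro ⟨_, g, rfl⟩
      obtain ⟨m, hm, h⟩ := htor g
      exact isOfFinOrder_iff_pow_eq_one.2 ⟨m, hm, Subtype.ext h⟩
    have hK : θ.ker.FiniteIndex := inferInstance
    rw [Subgroup.mem_center_iff]
    intro a
    apply hρ
    rw [map_mul, map_mul]
    refine central_of_span _ (hspan _ hK) _ ?_ _
    rintro _ ⟨b, hb, rfl⟩
    have h1 : ⁅z, b⁆ = 1 := congrArg Subtype.val hb
    rw [← map_mul, ← map_mul, commutatorElement_eq_one_iff_mul_comm.1 h1]
  have htop : Subgroup.center S = ⊤ := by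
    by_contra hne
    have : Nontrivial (S ⧸ Subgroup.center S) := QuotientGroup.nontrivial_iff.2 hne
    refine Group.IsNilpotent.center_ne_bot (G := S ⧸ Subgroup.center S) ?_
    rw [eq_bot_iff]
    intro z hz
    obtain ⟨z, rfl⟩ := QuotientGroup.mk_surjective z
    rw [Subgroup.mem_bot, QuotientGroup.eq_one_iff]
    refine key z fun g => ?_
    rw [← QuotientGroup.eq_one_iff, ← QuotientGroup.mk'_apply, map_commutatorElement,
      commutatorElement_eq_one_iff_mul_comm]
    exact (Subgroup.mem_center_iff.1 hz _).symm
  exact (Subgroup.mem_center_iff.1 (htop ▸ Subgroup.mem_top h : h ∈ Subgroup.center S) g)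


/-! ### Periodicity modulo the radical -/

theorem exists_iterate_monoidHom {G : Type*} [Group G] (φ : G →* G) (n : ℕ) :
    ∃ θ : G →* G, ∀ x, θ x = φ^[n] x := by
  induction n with
  | zero => exact ⟨MonoidHom.id G, fun _ => rfl⟩
  | succ n ih =>
    obtain ⟨θ, hθ⟩ := ih
    exact ⟨φ.comp θ, fun x => by rw [Function.iterate_succ_apply', ← hθ]; rfl⟩

/-- The same conclusion for a representation whose kernel contains a term of the lower central
series. -/
theorem comm_of_span {B : Type*} [Ring B] [Algebra ℚ B] [FiniteDimensional ℚ B]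
    (hB : Ring.jacobson B = ⊥) {H : Type*} [Group H] (hH : Group.FG H)
    (ρ : H →* B) (c : ℕ) (hc : ∀ x ∈ (⊤ : Subgroup H).lowerCentralSeries c, ρ x = 1)
    (hspan : ∀ K : Subgroup H, K.FiniteIndex → Submodule.span ℚ (ρ '' K) = ⊤) (g h : H) :
    ρ g * ρ h = ρ h * ρ g := by
  let ρ' : H →* Bˣ := ρ.toHomUnits
  let S := H ⧸ ρ'.ker
  let j : S →* B := (Units.coeHom B).comp (QuotientGroup.kerLift ρ')
  have hj : ∀ x : H, j (x : S) = ρ x := fun x => rfl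
  have hnil : Group.IsNilpotent S := by
    rw [Subgroup.nilpotent_iff_lowerCentralSeries]
    refine ⟨c, ?_⟩
    rw [← Subgroup.map_top_of_surjective _ (QuotientGroup.mk'_surjective ρ'.ker),
      ← Subgroup.map_lowerCentralSeries, eq_bot_iff]
    rintro _ ⟨x, hx, rfl⟩
    exact (QuotientGroup.eq_one_iff x).2 (Units.ext (hc x hx))
  have := comm_of_injective hB (S := S) inferInstance j
    (Units.val_injective.comp (QuotientGroup.kerLift_injective ρ')) (fun K hK => by
      rw [← hspan (K.comap (QuotientGroup.mk' ρ'.ker)) ⟨by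
        rw [Subgroup.index_comap_of_surjective _ (QuotientGroup.mk'_surjective _)]
        exact hK.index_ne_zero⟩]
      congr 1
      ext b
      constructor
      · rintro ⟨x, hx, rfl⟩
        obtain ⟨x, rfl⟩ := QuotientGroup.mk_surjective x
        exact ⟨x, hx, rfl⟩
      · rintro ⟨x, hx, rfl⟩
        exact ⟨x, hx, rfl⟩) (g : S) (h : S)
  rw [← hj g, ← hj h, ← map_mul, this, map_mul]

/-- Modulo the radical `ρ` has commutative image, and `φ` is realised by the algebra automorphism
`σ`. Since `σ` preserves minimal polynomials, each `ρ h` has finite `σ`-orbit modulo the radical, so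
some power of `φ` acts trivially there. -/
theorem exists_period_mod_jacobson {E : Type*} [Ring E] [Algebra ℚ E] [FiniteDimensional ℚ E]
    {H : Type*} [Group H] (hH : Group.FG H)
    (ρ : H →* E) (c : ℕ) (hc : ∀ x ∈ (⊤ : Subgroup H).lowerCentralSeries c, ρ x = 1)
    (hspan : ∀ K : Subgroup H, K.FiniteIndex → Submodule.span ℚ (ρ '' K) = ⊤)
    (φ : H →* H) (σ : E ≃ₐ[ℚ] E) (hσ : ∀ h, σ (ρ h) = ρ (φ h)) :
    (∀ g h, ρ g * ρ h - ρ h * ρ g ∈ Ring.jacobson E) ∧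
      ∃ j : ℕ, 0 < j ∧ ∀ h, ρ (φ^[j] h) - ρ h ∈ Ring.jacobson E := by
  let B := E ⧸ Ring.jacobson E
  let π : E →ₐ[ℚ] B := Ideal.Quotient.mkₐ ℚ (Ring.jacobson E)
  have hπ : Function.Surjective π := Ideal.Quotient.mk_surjective
  have hπ0 : ∀ x y, π x = π y ↔ x - y ∈ Ring.jacobson E := fun x y => Ideal.Quotient.eq
  have hB : Ring.jacobson B = ⊥ := Ring.jacobson_quotient_jacobson E
  have : FiniteDimensional ℚ B := Module.Finite.of_surjective π.toLinearMap hπ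
  let ρB : H →* B := (π : E →* B).comp ρ
  have hspanB : ∀ K : Subgroup H, K.FiniteIndex → Submodule.span ℚ (ρB '' K) = ⊤ := by
    intro K hK
    have h1 : ρB '' K = π.toLinearMap '' (ρ '' K) := by rw [Set.image_image]; rfl
    rw [h1, Submodule.span_image, hspan K hK, Submodule.map_top, LinearMap.range_eq_top]
    exact hπ
  have hcomm := comm_of_span hB hH ρB c (fun x hx => by
    show π (ρ x) = 1
    rw [hc x hx, map_one]) hspanB
  have hcen : ∀ h b, b * ρB h = ρB h * b := fun h => central_of_span (Set.range ρB)
    (by rw [← Set.image_univ]; exact hspanB ⊤ inferInstance) _ (by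
      rintro _ ⟨g, rfl⟩; exact hcomm g h)
  have hσJ : ∀ x, σ x ∈ Ring.jacobson E → x ∈ Ring.jacobson E := by
    intro x hx
    have hs : RingHomSurjective (σ.symm : E →+* E) := ⟨σ.symm.surjective⟩
    have := Ring.le_comap_jacobson (σ.symm : E →+* E) hx
    simpa using this
  have hσJ' : ∀ x, x ∈ Ring.jacobson E → σ x ∈ Ring.jacobson E := fun x hx => by
    have hs : RingHomSurjective (σ : E →+* E) := ⟨σ.surjective⟩
    exact Ring.le_comap_jacobson (σ : E →+* E) hx
  refine ⟨fun g h => ?_, ?_⟩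
  · rw [← hπ0, map_mul, map_mul]; exact hcomm g h
  have hone : ∀ h, ∃ j : ℕ, 0 < j ∧ ρ (φ^[j] h) - ρ h ∈ Ring.jacobson E := by
    intro h
    have haev : ∀ k, Polynomial.aeval (ρ (φ^[k] h)) (minpoly ℚ (ρ h)) = 0 := by
      intro k
      induction k with
      | zero => exact minpoly.aeval _ _
      | succ k ih =>
        rw [Function.iterate_succ_apply', ← hσ]
        refine (Polynomial.aeval_algHom_apply (σ : E →ₐ[ℚ] E) _ _).trans ?_
        rw [ih, map_zero]
    obtain ⟨k, l, hkl, hn⟩ := exists_sub_isNilpotent (minpoly ℚ (ρ h))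
      (minpoly.ne_zero (Algebra.IsIntegral.isIntegral _)) (fun k => ρB (φ^[k] h))
      (fun k l => hcomm _ _) (fun k => by
        show Polynomial.aeval (π (ρ (φ^[k] h))) _ = 0
        rw [Polynomial.aeval_algHom_apply, haev, map_zero])
    have h0 := eq_zero_of_isNilpotent_of_central hB hn fun b => by
      rw [mul_sub, sub_mul, hcen, hcen]
    have h1 : ∀ k l : ℕ, k ≤ l → ρ (φ^[k] h) - ρ (φ^[l] h) ∈ Ring.jacobson E →
        ρ h - ρ (φ^[l - k] h) ∈ Ring.jacobson E := by
      intro k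
      induction k with
      | zero => intro l _ h; exact h
      | succ k ih =>
        intro l hl hm
        obtain ⟨l, rfl⟩ := Nat.exists_eq_add_of_lt hl
        rw [Function.iterate_succ_apply',
          Function.iterate_succ_apply', ← hσ, ← hσ, ← map_sub] at hm
        have := ih (k + l) (by omega) (hσJ _ hm)
        rwa [show k + l + 1 - (k + 1) = k + l - k by omega]
    refine ⟨l - k, by omega, ?_⟩
    rw [← neg_mem_iff, neg_sub]
    exact h1 k l hkl.le ((hπ0 _ _).1 (sub_eq_zero.1 h0))
  have hiter : ∀ (j : ℕ) (h : H), ρ (φ^[j] h) - ρ h ∈ Ring.jacobson E →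
      ∀ i, ρ (φ^[j * i] h) - ρ h ∈ Ring.jacobson E := by
    intro j h hj i
    have h1 : ∀ (k : ℕ) (a b : H), ρ a - ρ b ∈ Ring.jacobson E →
        ρ (φ^[k] a) - ρ (φ^[k] b) ∈ Ring.jacobson E := by
      intro k a b hab
      induction k with
      | zero => exact hab
      | succ k ih =>
        rw [Function.iterate_succ_apply', Function.iterate_succ_apply', ← hσ, ← hσ, ← map_sub]
        exact hσJ' _ ih
    induction i with
    | zero => simp
    | succ i ih =>
      have h2 := h1 j _ _ ih
      rw [← Function.iterate_add_apply] at h2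
      have h3 := add_mem h2 hj
      rw [sub_add_sub_cancel] at h3
      rwa [mul_add, mul_one, add_comm]
  choose j hj0 hj using hone
  obtain ⟨S, hS⟩ := (Group.fg_def.1 hH : (⊤ : Subgroup H).FG)
  refine ⟨∏ s ∈ S, j s, Finset.prod_pos fun s _ => hj0 s, fun h => ?_⟩
  obtain ⟨θ, hθ⟩ := exists_iterate_monoidHom φ (∏ s ∈ S, j s)
  have heq : ρB.comp θ = ρB := by
    refine MonoidHom.eq_of_eqOn_dense hS fun s hs => ?_
    obtain ⟨m, hm⟩ := Finset.dvd_prod_of_mem j hs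
    have h1 := hiter (j s) s (hj s) m
    rw [← hm, ← hθ] at h1
    exact (hπ0 _ _).2 h1
  rw [← hθ]
  exact (hπ0 _ _).1 (DFunLike.congr_fun heq h)


/-! ### Unipotent action of a finite-index subgroup -/

/-- Every periodic point of `φ` has finite order. -/
def PeriodicTorsion {G : Type*} [Group G] (φ : G →* G) : Prop :=
  ∀ j : ℕ, 0 < j → ∀ x : G, φ^[j] x = x → ∃ k : ℕ, k ≠ 0 ∧ x ^ k = 1

theorem PeriodicTorsion.restrict {G : Type*} [Group G] {φ : G →* G} (hφ : PeriodicTorsion φ)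
    (H : Subgroup G) (hH : ∀ x : H, (φ.comp H.subtype) x ∈ H) :
    PeriodicTorsion ((φ.comp H.subtype).codRestrict H hH) := by
  intro j hj x hx
  have hsemi : Function.Semiconj (Subtype.val : H → G)
    ((φ.comp H.subtype).codRestrict H hH) φ := fun _ => rfl
  obtain ⟨k, hk, hk1⟩ := hφ j hj x (by rw [← (hsemi.iterate_right j) x, hx])
  exact ⟨k, hk, Subtype.ext hk1⟩

/-- A finite-index subgroup `N` acts unipotently on `V`. Let `J` be the radical of the algebra
spanned by `ρ H`. Some power of `φ` acts trivially on the image of `H` modulo `J`, so an element of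
infinite order there would lift to a fixed point of infinite order in `H`. Hence this image, finitely
generated and abelian, is finite; `N` is the kernel and the flag is `W k = J ^ k V`. -/
theorem exists_flag {H : Type u} [Group H] (hH : Group.FG H) [Group.IsSolvable H]
    (hab : AbSecFinPRanks H) (φ : H →* H) (hφ : PeriodicTorsion φ)
    {V : Type*} [AddCommGroup V] [Module ℚ V] [FiniteDimensional ℚ V]
    (ρ : H →* Module.End ℚ V) (Φ : V ≃ₗ[ℚ] V) (hΦ : ∀ h v, Φ (ρ h v) = ρ (φ h) (Φ v))
    (c : ℕ) (hc : ∀ x ∈ (⊤ : Subgroup H).lowerCentralSeries c, ρ x = 1)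
    (hspan : ∀ K : Subgroup H, K.FiniteIndex →
      Submodule.span ℚ (ρ '' K) = Submodule.span ℚ (Set.range ρ)) :
    ∃ N : Subgroup H, N.FiniteIndex ∧ ∃ (n : ℕ) (W : ℕ → Submodule ℚ V), W 0 = ⊤ ∧ W n = ⊥ ∧
      ∀ k, ∀ h ∈ N, ∀ v ∈ W k, ρ h v - v ∈ W (k + 1) := by
  let E : Subalgebra ℚ (Module.End ℚ V) := Algebra.adjoin ℚ (Set.range ρ)
  have hE : Subalgebra.toSubmodule E = Submodule.span ℚ (Set.range ρ) := by
    have h1 : Submonoid.closure (Set.range ρ) = MonoidHom.mrange ρ := by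
      rw [← MonoidHom.coe_mrange, Submonoid.closure_eq]
    rw [Algebra.adjoin_eq_span, h1, MonoidHom.coe_mrange]
  have hρE : ∀ h, ρ h ∈ E := fun h => Algebra.subset_adjoin ⟨h, rfl⟩
  let ρE : H →* E := ρ.codRestrict E hρE
  have : FiniteDimensional ℚ E :=
    inferInstanceAs (FiniteDimensional ℚ (Subalgebra.toSubmodule E))
  have : IsArtinianRing E := IsArtinianRing.of_finite ℚ E
  let τ : Module.End ℚ V ≃ₐ[ℚ] Module.End ℚ V := Φ.conjAlgEquiv ℚ
  have hτ : ∀ h, τ (ρ h) = ρ (φ h) := by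
    intro h
    ext v
    show Φ (ρ h (Φ.symm v)) = _
    rw [hΦ, Φ.apply_symm_apply]
  have hτE : ∀ x ∈ E, τ x ∈ E := by
    have h1 : E ≤ E.comap (τ : Module.End ℚ V →ₐ[ℚ] Module.End ℚ V) := by
      refine Algebra.adjoin_le ?_
      rintro _ ⟨h, rfl⟩
      show τ (ρ h) ∈ E
      rw [hτ]; exact hρE _
    exact h1
  let σ₀ : E →ₐ[ℚ] E := ((τ : Module.End ℚ V →ₐ[ℚ] Module.End ℚ V).comp E.val).codRestrict E
    fun x => hτE x x.2
  have hσ₀ : Function.Injective σ₀ := fun x y hxy =>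
    Subtype.ext (τ.injective (congrArg Subtype.val hxy))
  let σ : E ≃ₐ[ℚ] E := AlgEquiv.ofBijective σ₀
    ⟨hσ₀, (LinearMap.injective_iff_surjective (f := σ₀.toLinearMap)).1 hσ₀⟩
  obtain ⟨hcomm, j, hj, hper⟩ := exists_period_mod_jacobson hH ρE c
    (fun x hx => Subtype.ext (hc x hx)) (fun K hK => by
      apply Submodule.map_injective_of_injective (f := E.val.toLinearMap) Subtype.val_injective
      rw [Submodule.map_span, Submodule.map_top]
      have h1 : E.val.toLinearMap '' (ρE '' K) = ρ '' K := by rw [Set.image_image]; rfl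
      have h2 : LinearMap.range E.val.toLinearMap = Subalgebra.toSubmodule E := by
        ext x; simp
      rw [h1, h2, hE, hspan K hK]) φ σ (fun h => Subtype.ext (hτ h))
  let J := Ring.jacobson E
  let ρB : H →* (E ⧸ J)ˣ := ((Ideal.Quotient.mk J : E →* E ⧸ J).comp ρE).toHomUnits
  have hρB : ∀ g h, ρB g = ρB h ↔ ρE g - ρE h ∈ J := by
    intro g h
    rw [← Units.val_inj]
    exact Ideal.Quotient.eq
  refine ⟨ρB.ker, ?_, ?_⟩
  · obtain ⟨θ, hθ⟩ := exists_iterate_monoidHom φ j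
    have hθB : ∀ h, ρB (θ h) = ρB h := fun h => (hρB _ _).2 (by rw [hθ]; exact hper h)
    have htor : ∀ g : H, ∃ k : ℕ, k ≠ 0 ∧ g ^ k ∈ ρB.ker := by
      intro g
      by_contra! hg
      obtain ⟨x, hx, hxk⟩ := exists_fixed_of_solvable hab ρB.ker θ
        (fun h hh => (hθB h).trans hh) g
        (by rw [MonoidHom.mem_ker, map_mul, map_inv, hθB, inv_mul_cancel]) hg
      obtain ⟨k, hk, hk1⟩ := hφ j hj x (by rw [← hθ, hx])
      exact hxk k hk hk1
    have hfg : Group.FG ρB.range := inferInstance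
    have hfinite : Finite ρB.range := by
      let _ : CommGroup ρB.range :=
        { (inferInstance : Group ρB.range) with
          mul_comm := by
            rintro ⟨_, g, rfl⟩ ⟨_, h, rfl⟩
            refine Subtype.ext ?_
            show ρB g * ρB h = ρB h * ρB g
            rw [← map_mul, ← map_mul, hρB, map_mul, map_mul]
            exact hcomm g h }
      refine @CommGroup.finite_of_fg_isMulTorsion ρB.range _ hfg ?_
      rintro ⟨_, g, rfl⟩
      obtain ⟨k, hk, h⟩ := htor g
      refine isOfFinOrder_iff_pow_eq_one.2 ⟨k, Nat.pos_of_ne_zero hk, Subtype.ext ?_⟩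
      exact (map_pow ρB g k).symm.trans h
    infer_instance
  · obtain ⟨n, hn⟩ : IsNilpotent J := IsSemiprimaryRing.isNilpotent
    let W : ℕ → Submodule ℚ V := fun k =>
      Submodule.span ℚ {w | ∃ x ∈ J ^ k, ∃ v : V, (x : Module.End ℚ V) v = w}
    refine ⟨n, W, ?_, ?_, ?_⟩
    · rw [eq_top_iff]
      intro v _
      refine Submodule.subset_span ⟨1, ?_, v, rfl⟩
      rw [Submodule.pow_zero, Ideal.one_eq_top]; trivial
    · rw [Submodule.span_eq_bot]
      rintro _ ⟨x, hx, v, rfl⟩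
      rw [hn] at hx
      have : x = 0 := hx
      rw [this]; rfl
    · intro k h hh v hv
      have hJ : ρE h - 1 ∈ J := by
        have := (hρB h 1).1 (by rw [map_one]; exact hh)
        rwa [map_one] at this
      have hle : W k ≤ (W (k + 1)).comap (ρ h - 1 : Module.End ℚ V) := by
        refine Submodule.span_le.2 ?_
        rintro _ ⟨x, hx, v, rfl⟩
        refine Submodule.subset_span ⟨(ρE h - 1) * x, ?_, v, rfl⟩
        rw [Ideal.IsTwoSided.pow_succ]
        exact Ideal.mul_mem_mul hJ hx
      exact hle hv


/-! ### Groups with an abelian term in the lower central series -/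

/-- Let `T k` descend centrally with respect to `N`, from above a term of the lower central series
of `N` into the torsion of an abelian normal subgroup `L`. Then a later term of that series, being
the normal closure in `N` of a finite set, lies in the finite group `L[m]` for some `m`; the centralizer of `L[m]` in `N` is
then nilpotent of finite index. -/
theorem virtNilp_of_series {G : Type*} [Group G] (hG : Group.FG G) (L : Subgroup G) [L.Normal]
    (hL : ∀ x ∈ L, ∀ y ∈ L, x * y = y * x)
    (hLfin : ∀ m : ℕ, m ≠ 0 → {x | x ∈ L ∧ x ^ m = 1}.Finite)
    (N : Subgroup G) (hN : N.FiniteIndex) (c n : ℕ) (T : ℕ → Subgroup G)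
    (h0 : N.lowerCentralSeries c ≤ T 0) (hT : ∀ k, ⁅T k, N⁆ ≤ T (k + 1))
    (hn : ∀ x ∈ T n, x ∈ L ∧ ∃ m : ℕ, m ≠ 0 ∧ x ^ m = 1) : VirtNilp G := by
  have hser : ∀ k, N.lowerCentralSeries (c + k) ≤ T k := by
    intro k
    induction k with
    | zero => exact h0
    | succ k ih => exact (Subgroup.commutator_mono ih le_rfl).trans (hT k)
  -- the `m`-torsion subgroup of `L`
  let P : ℕ → Subgroup G := fun m =>
    { carrier := {x | x ∈ L ∧ x ^ m = 1}
      one_mem' := ⟨L.one_mem, one_pow m⟩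
      mul_mem' := fun {x y} hx hy => ⟨L.mul_mem hx.1 hy.1, by
        have h : Commute x y := hL x hx.1 y hy.1
        rw [h.mul_pow, hx.2, hy.2, one_mul]⟩
      inv_mem' := fun {x} hx => ⟨L.inv_mem hx.1, by rw [inv_pow, hx.2, inv_one]⟩ }
  have hP : ∀ m, (P m).Normal := fun m =>
    ⟨fun x hx g => ⟨‹L.Normal›.conj_mem x hx.1 g, by rw [conj_pow, hx.2]; group⟩⟩
  have hNfg : Group.FG N := inferInstance
  obtain ⟨m, hm0, hm⟩ : ∃ m : ℕ, m ≠ 0 ∧ N.lowerCentralSeries (c + n) ≤ P m := by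
    obtain ⟨F, hF, hFN⟩ := lowerCentralSeries_eq_normalClosure hNfg (c + n)
    have hFL : ∀ f : F, (f : N).1 ∈ L ∧ ∃ m : ℕ, m ≠ 0 ∧ (f : N).1 ^ m = 1 := by
      intro f
      refine hn _ (hser n ?_)
      rw [← Subgroup.top_subtype_lowerCentralSeries, hFN]
      exact ⟨f, Subgroup.subset_normalClosure f.2, rfl⟩
    have := hF.fintype
    choose hfL m hm0 hm using hFL
    refine ⟨∏ f, m f, Finset.prod_ne_zero_iff.2 fun f _ => hm0 f, ?_⟩
    rw [← Subgroup.top_subtype_lowerCentralSeries, hFN, Subgroup.map_le_iff_le_comap]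
    have := (hP (∏ f, m f)).comap N.subtype
    refine Subgroup.normalClosure_le_normal fun f hf => ⟨hfL ⟨f, hf⟩, ?_⟩
    obtain ⟨d, hd⟩ := Finset.dvd_prod_of_mem m (Finset.mem_univ (⟨f, hf⟩ : F))
    rw [hd, pow_mul]
    exact (congrArg (· ^ d) (hm ⟨f, hf⟩)).trans (one_pow d)
  have := hP m
  have hfinite : Finite (P m) := (hLfin m hm0).to_subtype
  let κ : G →* MulAut (P m) := MulAut.conjNormal
  have hκ : κ.ker.FiniteIndex := by
    have : Finite (MulAut (P m)) := Finite.of_injective (fun e => (e : P m → P m))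
      DFunLike.coe_injective
    infer_instance
  refine ⟨N ⊓ κ.ker, inferInstance, ?_⟩
  refine Subgroup.isNilpotent_of_lowerCentralSeries_eq_bot (n := c + n + 1) ?_
  rw [Subgroup.lowerCentralSeries_succ, eq_bot_iff, Subgroup.commutator_le]
  intro x hx y hy
  have hxP : x ∈ P m := hm (Subgroup.lowerCentralSeries_mono _ inf_le_left hx)
  have h1 : κ y ⟨x, hxP⟩ = ⟨x, hxP⟩ := by rw [MonoidHom.mem_ker.1 hy.2]; rfl
  have h2 : y * x * y⁻¹ = x := by
    have := congrArg Subtype.val h1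
    rwa [MulAut.conjNormal_apply] at this
  rw [Subgroup.mem_bot, commutatorElement_eq_one_iff_mul_comm]
  exact (mul_inv_eq_iff_eq_mul.1 h2).symm

theorem finiteDimensional_rat_tensor {M : Type u} [AddCommGroup M]
    (h : Module.rank ℤ M < Cardinal.aleph0) : FiniteDimensional ℚ (ℚ ⊗[ℤ] M) := by
  have hloc : IsLocalizedModule (nonZeroDivisors ℤ) (TensorProduct.mk ℤ ℚ M 1) := inferInstance
  have h1 : Module.rank ℤ (ℚ ⊗[ℤ] M) = Module.rank ℤ M :=
    @IsLocalizedModule.rank_eq ℤ M _ _ _ (nonZeroDivisors ℤ) le_rfl (ℚ ⊗[ℤ] M) _ _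
      (TensorProduct.mk ℤ ℚ M 1) hloc
  have h2 : Module.rank ℚ (ℚ ⊗[ℤ] M) = Module.rank ℤ (ℚ ⊗[ℤ] M) :=
    IsLocalization.rank_eq (R := ℤ) ℚ (nonZeroDivisors ℤ) le_rfl
  refine Module.rank_lt_aleph0_iff.1 ?_
  rw [h2, h1]; exact h

theorem torsion_of_tmul_eq_zero {M : Type*} [AddCommGroup M] (x : M)
    (h : (1 : ℚ) ⊗ₜ[ℤ] x = 0) : ∃ m : ℕ, m ≠ 0 ∧ m • x = 0 := by
  obtain ⟨c, hc⟩ :=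
    (IsLocalizedModule.eq_zero_iff (nonZeroDivisors ℤ) (TensorProduct.mk ℤ ℚ M 1)).1 h
  have hc0 : (c : ℤ) ≠ 0 := nonZeroDivisors.ne_zero c.2
  have hcx : (c : ℤ) • x = 0 := hc
  exact ⟨(c : ℤ).natAbs, Int.natAbs_ne_zero.2 hc0, natAbs_nsmul_eq_zero.2 hcx⟩

/-- The case in which a term `L` of the lower central series is abelian: `G` acts on `ℚ ⊗ L` by
conjugation, compatibly with the injective map induced by `φ`. -/
theorem virtNilp_of_lowerCentralSeries_comm {G : Type u} [Group G] (hG : Group.FG G)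
    [Group.IsSolvable G] (hab : AbSecFinPRanks G) (φ : G →* G) (hinj : Function.Injective φ)
    (hφ : PeriodicTorsion φ) (c : ℕ)
    (hc : ∀ x ∈ (⊤ : Subgroup G).lowerCentralSeries c,
      ∀ y ∈ (⊤ : Subgroup G).lowerCentralSeries c, x * y = y * x) : VirtNilp G := by
  set L := (⊤ : Subgroup G).lowerCentralSeries c with hLdef
  have hLn : L.Normal := inferInstance
  have hLφ : ∀ x ∈ L, φ x ∈ L := by
    intro x hx
    have h1 : φ x ∈ (L.map φ) := ⟨x, hx, rfl⟩
    rw [hLdef, Subgroup.map_lowerCentralSeries] at h1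
    exact Subgroup.lowerCentralSeries_mono _ le_top h1
  let _ : CommGroup L :=
    { (inferInstance : Group L) with mul_comm := fun a b => Subtype.ext (hc a a.2 b b.2) }
  let M := Additive L
  have hM : FinPRanks M := hab.finPRanks L.subtype Subtype.val_injective
  let V := ℚ ⊗[ℤ] M
  have hV : FiniteDimensional ℚ V := finiteDimensional_rat_tensor hM.rank_lt_aleph0
  have hV0 : ∀ x : M, (1 : ℚ) ⊗ₜ[ℤ] x = 0 → ∃ m : ℕ, m ≠ 0 ∧ m • x = 0 :=
    torsion_of_tmul_eq_zero
  let a : G →* Module.End ℤ M :=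
    { toFun := fun g => (MulAut.conjNormal (H := L) g).toMonoidHom.toAdditive.toIntLinearMap
      map_one' := by ext x; rw [map_one]; rfl
      map_mul' := fun g h => by ext x; rw [map_mul]; rfl }
  have ha : ∀ g (x : L), a g (Additive.ofMul x) = Additive.ofMul
    (⟨g * x * g⁻¹, hLn.conj_mem x x.2 g⟩ : L) := fun g x => by
      show Additive.ofMul (MulAut.conjNormal (H := L) g x) = _
      congr 1
  let ρ : G →* Module.End ℚ V := (Module.End.baseChangeHom ℤ ℚ M : _ →* _).comp a
  have hρ : ∀ g q x, ρ g (q ⊗ₜ[ℤ] x) = q ⊗ₜ[ℤ] a g x := fun g q x => rfl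
  let φL : L →* L := (φ.comp L.subtype).codRestrict L fun x => hLφ x x.2
  let φM : M →ₗ[ℤ] M := φL.toAdditive.toIntLinearMap
  have hφM : Function.Injective φM := fun x y hxy =>
    Additive.toMul.injective (Subtype.ext (hinj (congrArg Subtype.val hxy)))
  let Φ₀ : V →ₗ[ℚ] V := φM.baseChange ℚ
  have hΦ₀ : Function.Injective Φ₀ := Module.Flat.lTensor_preserves_injective_linearMap φM hφM
  let Φ : V ≃ₗ[ℚ] V := LinearEquiv.ofInjectiveEndo Φ₀ hΦ₀
  have hΦ : ∀ g v, Φ (ρ g v) = ρ (φ g) (Φ v) := by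
    intro g v
    show Φ₀ (ρ g v) = ρ (φ g) (Φ₀ v)
    induction v using TensorProduct.induction_on with
    | zero => simp
    | add v w hv hw => simp only [map_add, hv, hw]
    | tmul q x =>
      obtain ⟨x, rfl⟩ := Additive.ofMul.surjective x
      rw [hρ]
      show q ⊗ₜ[ℤ] φM (a g (Additive.ofMul x)) = q ⊗ₜ[ℤ] (a (φ g) (Additive.ofMul (φL x)))
      rw [ha, ha]
      congr 1
      refine congrArg Additive.ofMul (Subtype.ext ?_)
      show φ (g * x * g⁻¹) = φ g * φ x * (φ g)⁻¹
      simp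
  have hρL : ∀ x ∈ L, ρ x = 1 := by
    intro x hx
    ext y
    obtain ⟨y, rfl⟩ := Additive.ofMul.surjective y
    show (1 : ℚ) ⊗ₜ[ℤ] (a x (Additive.ofMul y)) = (1 : ℚ) ⊗ₜ[ℤ] (Additive.ofMul y)
    rw [ha]
    congr 2
    refine Subtype.ext ?_
    show x * y * x⁻¹ = y
    rw [hc x hx y y.2, mul_inv_cancel_right]
  -- a finite-index subgroup whose linear span is as small as possible
  let d : Subgroup G → ℕ := fun K => Module.finrank ℚ (Submodule.span ℚ (ρ '' K))
  obtain ⟨K, hK, hKmin⟩ : ∃ K : Subgroup G, K.FiniteIndex ∧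
      ∀ K' : Subgroup G, K'.FiniteIndex → d K ≤ d K' := by
    obtain ⟨_, ⟨K, hK, rfl⟩, h⟩ := WellFounded.has_min (wellFounded_lt (α := ℕ))
      (d '' {K | K.FiniteIndex}) ⟨_, ⊤, inferInstanceAs (Subgroup.FiniteIndex ⊤), rfl⟩
    exact ⟨K, hK, fun K' hK' => not_lt.1 (h _ ⟨K', hK', rfl⟩)⟩
  obtain ⟨H, hHK, hH, hHn, hHφ⟩ := exists_invariant_finiteIndex hG K hK
  have hspan : ∀ K' : Subgroup G, K'.FiniteIndex → K' ≤ H →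
      Submodule.span ℚ (ρ '' K') = Submodule.span ℚ (ρ '' H) := by
    intro K' hK' hle
    refine Submodule.eq_of_le_of_finrank_le (Submodule.span_mono (Set.image_mono hle)) ?_
    exact (Submodule.finrank_mono
      (Submodule.span_mono (Set.image_mono hHK))).trans (hKmin K' hK')
  let φH : H →* H := (φ.comp H.subtype).codRestrict H fun x => hHφ φ x.2
  obtain ⟨N, hN, n, W, hW0, hWn, hW⟩ := exists_flag (H := H) inferInstance
    (hab.of_injective H.subtype Subtype.val_injective) φH
    (hφ.restrict H fun x => hHφ φ x.2)
    (ρ.comp H.subtype) Φ (fun h v => hΦ h v) c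
    (fun x hx => hρL _ (Subgroup.lowerCentralSeries_mono c le_top
      ((Subgroup.top_subtype_lowerCentralSeries H c).le ⟨x, hx, rfl⟩)))
    (fun K' hK' => by
      have h1 := hspan (K'.map H.subtype) ⟨by
        rw [Subgroup.index_map_subtype]
        exact mul_ne_zero hK'.index_ne_zero hH.index_ne_zero⟩ (Subgroup.map_subtype_le K')
      have h2 : (ρ.comp H.subtype) '' K' = ρ '' (K'.map H.subtype) := by
        rw [Subgroup.coe_map, Set.image_image]; rfl
      have h3 : Set.range (ρ.comp H.subtype) = ρ '' H := by
        ext x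
        constructor
        · rintro ⟨y, rfl⟩; exact ⟨y, y.2, rfl⟩
        · rintro ⟨y, hy, rfl⟩; exact ⟨⟨y, hy⟩, rfl⟩
      rw [h2, h3, h1])
  let T : ℕ → Subgroup G := fun k =>
    ((W k).toAddSubgroup.comap ((TensorProduct.mk ℤ ℚ M 1).toAddMonoidHom)).toSubgroup'.map
      L.subtype
  have hTmem : ∀ k (x : L), (x : G) ∈ T k ↔ (1 : ℚ) ⊗ₜ[ℤ] (Additive.ofMul x : M) ∈ W k := by
    intro k x
    constructor
    · rintro ⟨y, hy, hyx⟩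
      obtain rfl : y = x := Subtype.ext hyx
      exact hy
    · exact fun h => ⟨x, h, rfl⟩
  have hTL : ∀ k, T k ≤ L := by
    rintro k _ ⟨y, -, rfl⟩; exact y.2
  refine virtNilp_of_series hG L hc (fun m hm => ?_) (N.map H.subtype) ⟨by
        rw [Subgroup.index_map_subtype]
        exact mul_ne_zero hN.index_ne_zero hH.index_ne_zero⟩ c n T ?_ ?_ ?_
  · refine ((hM.finite_torsionBy hm).image (fun x : M => ((Additive.toMul x : L) : G))).subset ?_
    rintro x ⟨hx, hxm⟩
    refine ⟨Additive.ofMul (⟨x, hx⟩ : L), ?_, rfl⟩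
    exact congrArg Additive.ofMul (Subtype.ext hxm : (⟨x, hx⟩ : L) ^ m = 1)
  · intro x hx
    have hxL : x ∈ L := Subgroup.lowerCentralSeries_mono c le_top hx
    refine (hTmem 0 ⟨x, hxL⟩).2 ?_
    rw [hW0]; trivial
  · intro k
    rw [Subgroup.commutator_le]
    rintro x hx _ ⟨h, hh, rfl⟩
    have hxL := hTL k hx
    have h1 := hW k h hh _ ((hTmem k ⟨x, hxL⟩).1 hx)
    have h2 : ⁅x, (h : G)⁆ ∈ L := by
      have := L.mul_mem hxL (hLn.conj_mem _ (L.inv_mem hxL) h)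
      simpa [commutatorElement_def, mul_assoc] using this
    refine (hTmem (k + 1) ⟨_, h2⟩).2 ?_
    rw [← neg_mem_iff]
    convert h1 using 1
    show _ = (1 : ℚ) ⊗ₜ[ℤ] (a h (Additive.ofMul (⟨x, hxL⟩ : L))) - _
    rw [ha, ← TensorProduct.tmul_sub, ← TensorProduct.tmul_neg]
    congr 1
    rw [← ofMul_div, ← ofMul_inv]
    refine congrArg Additive.ofMul (Subtype.ext ?_)
    show ⁅x, (h : G)⁆⁻¹ = (h : G) * x * (h : G)⁻¹ / x
    rw [commutatorElement_def, div_eq_mul_inv]; group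
  · intro x hx
    have hxL := hTL n hx
    refine ⟨hxL, ?_⟩
    have h1 := (hTmem n ⟨x, hxL⟩).1 hx
    rw [hWn, Submodule.mem_bot] at h1
    obtain ⟨m, hm, h2⟩ := hV0 _ h1
    exact ⟨m, hm, congrArg (fun y : M => ((Additive.toMul y : L) : G)) h2⟩


/-! ### Induction on the derived length -/

/-- The induction passes to the quotient by the isolator `I = {x | φ^[n] x ∈ A for some n}` of the
last derived term `A`, on which `φ` is still injective. -/
theorem virtNilp_of_derivedSeries (d : ℕ) : ∀ {G : Type u} [Group G], Group.FG G →
    AbSecFinPRanks G → ∀ φ : G →* G, Function.Injective φ → PeriodicTorsion φ →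
    derivedSeries G d = ⊥ → VirtNilp G := by
  induction d with
  | zero =>
    intro G _ hG hab φ hinj hφ hd
    have : Group.IsSolvable G := ⟨0, hd⟩
    refine virtNilp_of_lowerCentralSeries_comm hG hab φ hinj hφ 0 fun x hx y hy => ?_
    have h1 : ∀ z : G, z = 1 := fun z => Subgroup.mem_bot.1 (hd ▸ Subgroup.mem_top z)
    rw [h1 x, h1 y]
  | succ d ih =>
    intro G _ hG hab φ hinj hφ hd
    have hsol : Group.IsSolvable G := ⟨d + 1, hd⟩
    set A := derivedSeries G d with hA
    have hAcomm : ∀ x ∈ A, ∀ y ∈ A, x * y = y * x := fun x hx y hy =>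
      commutatorElement_eq_one_iff_mul_comm.1 (Subgroup.mem_bot.1
        (hd ▸ Subgroup.commutator_mem_commutator hx hy))
    have hAφ : ∀ x ∈ A, φ x ∈ A := fun x hx => map_derivedSeries_le_derivedSeries φ d ⟨x, hx, rfl⟩
    have hAn : A.Normal := derivedSeries_normal G d
    have hup : ∀ {x m n}, m ≤ n → φ^[m] x ∈ A → φ^[n] x ∈ A := by
      intro x m n hmn hm
      induction n, hmn using Nat.le_induction with
      | base => exact hm
      | succ n _ ih => rw [Function.iterate_succ_apply']; exact hAφ _ ih
    -- the `φ`-isolator of `A`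
    let I : Subgroup G :=
      { carrier := {x | ∃ n : ℕ, φ^[n] x ∈ A}
        one_mem' := ⟨0, A.one_mem⟩
        mul_mem' := by
          rintro x y ⟨m, hm⟩ ⟨n, hn⟩
          refine ⟨max m n, ?_⟩
          rw [iterate_map_mul]
          exact A.mul_mem (hup (le_max_left m n) hm) (hup (le_max_right m n) hn)
        inv_mem' := by
          rintro x ⟨m, hm⟩
          exact ⟨m, by rw [iterate_map_inv]; exact A.inv_mem hm⟩ }
    have hAI : A ≤ I := fun x hx => ⟨0, hx⟩
    have hIn : I.Normal := ⟨by
      rintro x ⟨m, hm⟩ g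
      refine ⟨m, ?_⟩
      rw [iterate_map_mul, iterate_map_mul, iterate_map_inv]
      exact hAn.conj_mem _ hm _⟩
    have hIcomm : ∀ x ∈ I, ∀ y ∈ I, x * y = y * x := by
      rintro x ⟨m, hm⟩ y ⟨n, hn⟩
      apply hinj.iterate (max m n)
      rw [iterate_map_mul, iterate_map_mul]
      exact hAcomm _ (hup (le_max_left m n) hm) _ (hup (le_max_right m n) hn)
    have hIφ : ∀ x, φ x ∈ I ↔ x ∈ I := by
      intro x
      constructor
      · rintro ⟨n, hn⟩; exact ⟨n + 1, hn⟩
      · rintro ⟨n, hn⟩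
        refine ⟨n, ?_⟩
        rw [← Function.iterate_succ_apply]
        exact hup n.le_succ hn
    let φQ : G ⧸ I →* G ⧸ I := QuotientGroup.map I I φ fun x hx => (hIφ x).2 hx
    have hφQ : ∀ j (x : G), φQ^[j] (x : G ⧸ I) = (φ^[j] x : G) := by
      intro j x
      have : Function.Semiconj (QuotientGroup.mk : G → G ⧸ I) φ φQ := fun _ => rfl
      exact ((this.iterate_right j) x).symm
    have hQinj : Function.Injective φQ := by
      rw [injective_iff_map_eq_one]
      intro x hx
      obtain ⟨x, rfl⟩ := QuotientGroup.mk_surjective x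
      exact (QuotientGroup.eq_one_iff x).2 ((hIφ x).1 ((QuotientGroup.eq_one_iff (φ x)).1 hx))
    have hQper : PeriodicTorsion φQ := by
      intro j hj x hx
      obtain ⟨g, rfl⟩ := QuotientGroup.mk_surjective x
      by_contra! hg
      obtain ⟨θ, hθ⟩ := exists_iterate_monoidHom φ j
      have hIθ : ∀ x ∈ I, θ x ∈ I := by
        intro x hx
        rw [hθ]
        have : Set.MapsTo φ (I : Set G) I := fun x hx => (hIφ x).2 hx
        exact this.iterate j hx
      obtain ⟨x, hx, hxk⟩ := exists_fixed_of_abelian hab I hIcomm θ hIθ g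
        (QuotientGroup.eq.1 (by rw [hθ, ← hφQ, hx])) (fun k hk h => hg k hk (by
          rw [← QuotientGroup.mk_pow]; exact (QuotientGroup.eq_one_iff _).2 h))
      obtain ⟨k, hk, hk1⟩ := hφ j hj x (by rw [← hθ, hx])
      exact hxk k hk hk1
    have hQd : derivedSeries (G ⧸ I) d = ⊥ := by
      rw [← map_derivedSeries_eq (QuotientGroup.mk'_surjective I), eq_bot_iff]
      rintro _ ⟨x, hx, rfl⟩
      exact (QuotientGroup.eq_one_iff x).2 (hAI hx)
    obtain ⟨K, hK, hKn⟩ := ih (G := G ⧸ I) inferInstance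
      (hab.of_surjective (QuotientGroup.mk' I) (QuotientGroup.mk'_surjective I)) φQ hQinj hQper hQd
    obtain ⟨c, hc⟩ := (Subgroup.isNilpotent_iff_lowerCentralSeries K).1 hKn
    obtain ⟨K', hK'K, hK', -, hK'φ⟩ := exists_invariant_finiteIndex hG
      (K.comap (QuotientGroup.mk' I)) ⟨by
        rw [Subgroup.index_comap_of_surjective _ (QuotientGroup.mk'_surjective I)]
        exact hK.index_ne_zero⟩
    have hK'I : K'.lowerCentralSeries c ≤ I := by
      intro x hx
      have h1 : (x : G ⧸ I) ∈ (K'.lowerCentralSeries c).map (QuotientGroup.mk' I) := ⟨x, hx, rfl⟩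
      rw [Subgroup.map_lowerCentralSeries] at h1
      have h2 := Subgroup.lowerCentralSeries_mono c (Subgroup.map_le_iff_le_comap.2 hK'K) h1
      have h3 : (x : G ⧸ I) ∈ K.lowerCentralSeries c := h2
      rw [hc] at h3
      exact (QuotientGroup.eq_one_iff x).1 h3
    have hcI : ∀ x ∈ (⊤ : Subgroup K').lowerCentralSeries c, (x : G) ∈ I := fun x hx =>
      hK'I ((Subgroup.top_subtype_lowerCentralSeries K' c).le ⟨x, hx, rfl⟩)
    refine VirtNilp.of_subgroup K' hK' (virtNilp_of_lowerCentralSeries_comm inferInstance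
      (hab.of_injective K'.subtype Subtype.val_injective)
      ((φ.comp K'.subtype).codRestrict K' fun x => hK'φ φ x.2)
      (fun x y hxy => Subtype.ext (hinj (congrArg Subtype.val hxy)))
      (hφ.restrict K' fun x => hK'φ φ x.2) c fun x hx y hy => Subtype.ext ?_)
    exact hIcomm x (hcI x hx) y (hcI y hy)

/-- Powers of a periodic point are periodic, so they lie in every `φ ^ n (G)`. -/
theorem PeriodicTorsion.of_finite {G : Type*} [Group G] (φ : G →* G)
    (hfin : (⋂ n : ℕ, Set.range (⇑φ)^[n + 1]).Finite) : PeriodicTorsion φ := by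
  intro j hj x hx
  obtain ⟨k, l, hkl, h⟩ := Set.Finite.exists_lt_map_eq_of_forall_mem
    (f := fun k : ℕ => x ^ k) (fun k => by
      refine Set.mem_iInter.2 fun n => ?_
      obtain ⟨m, hm⟩ : ∃ m, j * (n + 1) = (n + 1) + m :=
        Nat.exists_eq_add_of_le (Nat.le_mul_of_pos_left _ hj)
      refine ⟨φ^[m] (x ^ k), ?_⟩
      rw [← Function.iterate_add_apply, ← hm, Function.iterate_mul]
      exact Function.iterate_fixed (by rw [iterate_map_pow, hx]) (n + 1)) hfin
  refine ⟨l - k, by omega, ?_⟩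
  rw [pow_sub _ hkl.le, mul_inv_eq_one]
  exact h.symm

/-- If a finitely generated virtually FAR group admits a strongly scale-invariant
monomorphism (an injective endomorphism `φ` whose image has finite index and with
`⋂_{n>0} φⁿ(Γ)` finite), then it is virtually nilpotent. -/
theorem virtually_nilpotent_of_strongly_scale_invariant
    {G : Type*} [Group G] (hfg : Group.FG G) (hFAR : IsVirtuallyFAR G)
    (φ : G →* G) (hinj : Function.Injective φ)
    (hindex : φ.range.FiniteIndex)
    (hfin : (⋂ n : ℕ, Set.range (⇑φ)^[n + 1]).Finite) :
    ∃ H : Subgroup G, H.FiniteIndex ∧ Group.IsNilpotent H := by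
  have hφ := PeriodicTorsion.of_finite φ hfin
  obtain ⟨H, hH, hHFAR⟩ := hFAR
  obtain ⟨K, hKH, hK, -, hKφ⟩ := exists_invariant_finiteIndex hfg H hH
  have hsol := hHFAR.isSolvable
  have hι := Subgroup.inclusion_injective hKH
  obtain ⟨d, hd⟩ := (Group.isSolvable_of_isSolvable_injective hι).solvable
  exact VirtNilp.of_subgroup K hK (virtNilp_of_derivedSeries d inferInstance
    (hHFAR.abSecFinPRanks.of_injective _ hι)
    ((φ.comp K.subtype).codRestrict K fun x => hKφ φ x.2)
    (fun x y hxy => Subtype.ext (hinj (congrArg Subtype.val hxy)))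
    (hφ.restrict K fun x => hKφ φ x.2) hd)
end

section
/- Let Γ be a residually finite, finitely generated virtually FAR group admitting a tame monomorphism φ : Γ → Γ. Then Γ is virtually nilpotent (Γ has a nilpotent subgroup of finite index). -/
/-- The Reidemeister number of the endomorphism `f` is finite: there are finitely many
`f`-twisted conjugacy classes, i.e. a finite set meets every class for the relation
`x ~ y ↔ ∃ z, x = z * y * (f z)⁻¹`. -/
def ReidemeisterNumberFinite {G : Type*} [Group G] (f : G → G) : Prop :=
  ∃ F : Finset G, ∀ x : G, ∃ y ∈ F, ∃ z : G, x = z * y * (f z)⁻¹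

/-! ### Traces, nilpotent operators and flags -/

section LinearAlgebra

open Polynomial Module

variable {V : Type*} [AddCommGroup V] [Module ℚ V]

theorem trace_mul_aeval_X_mul_eq_zero {x y : End ℚ V}
    (h : ∀ k : ℕ, LinearMap.trace ℚ V (x * y ^ (k + 1)) = 0) (r : ℚ[X]) :
    LinearMap.trace ℚ V (x * aeval y (X * r)) = 0 := by
  induction r using Polynomial.induction_on' with
  | add p q hp hq => rw [mul_add, map_add, mul_add, map_add, hp, hq, add_zero]
  | monomial n a =>
    rw [← C_mul_X_pow_eq_monomial, mul_left_comm, ← pow_succ', map_mul (aeval y), aeval_C, map_pow,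
      aeval_X, ← Algebra.smul_def, mul_smul_comm, map_smul, h, smul_zero]

variable [FiniteDimensional ℚ V]

/-- In characteristic zero, an endomorphism all of whose positive powers have trace zero is
nilpotent: the projection onto its Fitting one-component is a polynomial in it without constant
term, hence an idempotent of trace zero. -/
theorem isNilpotent_of_trace_pow_eq_zero {x : End ℚ V}
    (h : ∀ k : ℕ, LinearMap.trace ℚ V (x ^ (k + 1)) = 0) : IsNilpotent x := by
  have hx : IsIntegral ℚ x := Algebra.IsIntegral.isIntegral x
  obtain ⟨q, hpq, hq⟩ := Polynomial.exists_eq_pow_rootMultiplicity_mul_and_not_dvd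
    (minpoly ℚ x) (minpoly.ne_zero hx) 0
  set k := rootMultiplicity 0 (minpoly ℚ x)
  rw [C_0, sub_zero] at hpq hq
  have hann : aeval x (X ^ k * q) = 0 := by rw [← hpq, minpoly.aeval]
  have hcop : IsCoprime (X ^ (k + 1)) q :=
    ((irreducible_X.coprime_iff_not_dvd).2 hq).pow_left
  obtain ⟨a, b, hab⟩ := hcop
  set e := aeval x (a * X ^ (k + 1)) with he
  have hbq : aeval x (b * q) = 1 - e := by
    rw [he, eq_sub_iff_add_eq, ← map_add, add_comm, hab, map_one]
  have hmul : e * (1 - e) = 0 := by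
    rw [← hbq, he, ← map_mul,
      show a * X ^ (k + 1) * (b * q) = (a * X * b) * (X ^ k * q) by ring, map_mul, hann, mul_zero]
  have hidem : IsIdempotentElem e := by
    rw [mul_sub, mul_one, sub_eq_zero] at hmul
    exact hmul.symm
  have htr : LinearMap.trace ℚ V e = 0 := by
    have := trace_mul_aeval_X_mul_eq_zero (x := 1) (y := x) (by simpa using h) (a * X ^ k)
    rwa [one_mul, show X * (a * X ^ k) = a * X ^ (k + 1) by ring] at this
  have he0 : e = 0 := LinearMap.IsIdempotentElem.eq_zero_of_trace_eq_zero hidem htr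
  refine ⟨k, ?_⟩
  rw [he0, sub_zero] at hbq
  calc x ^ k = x ^ k * aeval x (b * q) := by rw [hbq, mul_one]
    _ = aeval x (b * (X ^ k * q)) := by
        rw [show b * (X ^ k * q) = X ^ k * (b * q) by ring, map_mul _ (X ^ k), map_pow, aeval_X]
    _ = 0 := by rw [map_mul, hann, mul_zero]

/-- Cayley-Hamilton: the identity is a polynomial without constant term in an injective
endomorphism. -/
theorem exists_aeval_X_mul_eq_one {F : End ℚ V} (hF : Function.Injective F) :
    ∃ r : ℚ[X], aeval F (X * r) = 1 := by
  have hdet : LinearMap.det F ≠ 0 := by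
    have : IsUnit F := (Module.End.isUnit_iff F).2
      ⟨hF, LinearMap.injective_iff_surjective.1 hF⟩
    exact ((LinearMap.isUnit_iff_isUnit_det F).1 this).ne_zero
  have hc : F.charpoly.coeff 0 ≠ 0 := by
    intro h0
    rw [LinearMap.det_eq_sign_charpoly_coeff, h0, mul_zero] at hdet
    exact hdet rfl
  refine ⟨-C (F.charpoly.coeff 0)⁻¹ * F.charpoly.divX, ?_⟩
  have hch := LinearMap.aeval_self_charpoly F
  rw [← X_mul_divX_add F.charpoly, map_add, aeval_C, ← eq_neg_iff_add_eq_zero] at hch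
  rw [mul_left_comm, map_mul, hch, map_neg, aeval_C, neg_mul_neg, ← map_mul,
    inv_mul_cancel₀ hc, map_one]

attribute [local instance] LieRing.ofAssociativeRing

/-- A subspace of `End V` closed under multiplication and consisting of nilpotent endomorphisms
strictly decreases some flag of `V`. This is Engel's theorem for the underlying Lie algebra. -/
theorem exists_flag_of_nilpotent (J : Submodule ℚ (End ℚ V))
    (hmul : ∀ x ∈ J, ∀ y ∈ J, x * y ∈ J) (hnil : ∀ x ∈ J, IsNilpotent x) :
    ∃ (W : ℕ → Submodule ℚ V) (m : ℕ), W 0 = ⊤ ∧ W m = ⊥ ∧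
      ∀ x ∈ J, ∀ k, ∀ w ∈ W k, x w ∈ W (k + 1) := by
  let L : LieSubalgebra ℚ (End ℚ V) :=
    { J with
      lie_mem' := fun {x y} hx hy => by
        rw [LieRing.of_associative_ring_bracket]
        exact J.sub_mem (hmul x hx y hy) (hmul y hy x hx) }
  have hL : LieModule.IsNilpotent L V :=
    (LieModule.isNilpotent_iff_forall (R := ℚ)).2 fun x => hnil x.1 x.2
  obtain ⟨m, hm⟩ := (LieModule.isNilpotent_iff ℚ L V).1 hL
  refine ⟨fun k => (LieModule.lowerCentralSeries ℚ L V k).toSubmodule, m, ?_, ?_, ?_⟩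
  · simp
  · simp [hm]
  · intro x hx k w hw
    have := LieSubmodule.lie_mem_lie (I := (⊤ : LieIdeal ℚ L))
      (LieSubmodule.mem_top (⟨x, hx⟩ : L)) hw
    rw [← LieModule.lowerCentralSeries_succ] at this
    exact this

end LinearAlgebra

/-! ### Representations compatible with a tame monomorphism -/

/-- A subgroup `H` is of finite index as soon as elements with the same image under some map with
finite range lie in the same right coset of `H`. -/
theorem finiteIndex_of_finite_range {G α : Type*} [Group G] (H : Subgroup G) (f : G → α)
    (hf : (Set.range f).Finite) (h : ∀ x y, f x = f y → x * y⁻¹ ∈ H) : H.FiniteIndex := by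
  have : Finite (Set.range f) := hf
  have : Finite (G ⧸ H) := by
    refine Finite.of_surjective
      (fun t : Set.range f => (QuotientGroup.mk (t.2.choose)⁻¹ : G ⧸ H)) ?_
    intro q
    obtain ⟨x, rfl⟩ := QuotientGroup.mk_surjective q
    refine ⟨⟨f x⁻¹, x⁻¹, rfl⟩, ?_⟩
    have hs := (⟨x⁻¹, rfl⟩ : f x⁻¹ ∈ Set.range f).choose_spec
    rw [QuotientGroup.eq]
    simpa using h _ _ hs
  exact Subgroup.finiteIndex_of_finite_quotient

section Representation

open Module

variable {V : Type*} [AddCommGroup V] [Module ℚ V]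
  {G : Type*} [Group G]

theorem pow_mul_rep {φ : G →* G} {ρ : G →* End ℚ V} {F : End ℚ V}
    (hFρ : ∀ g, F * ρ g = ρ (φ g) * F) (n : ℕ) (g : G) :
    F ^ n * ρ g = ρ ((⇑φ)^[n] g) * F ^ n := by
  induction n generalizing g with
  | zero => simp
  | succ n ih => rw [pow_succ, mul_assoc, hFρ, ← mul_assoc, ih, Function.iterate_succ_apply,
      mul_assoc]

/-- The function `g ↦ tr (ρ(g) Fⁿ)` is constant on `φⁿ`-twisted conjugacy classes. -/
theorem trace_rep_mul_pow_twisted {φ : G →* G} {ρ : G →* End ℚ V} {F : End ℚ V}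
    (hFρ : ∀ g, F * ρ g = ρ (φ g) * F) (n : ℕ) (y z : G) :
    LinearMap.trace ℚ V (ρ (z * y * ((⇑φ)^[n] z)⁻¹) * F ^ n) =
      LinearMap.trace ℚ V (ρ y * F ^ n) := by
  have h : ρ ((⇑φ)^[n] z)⁻¹ * F ^ n = F ^ n * ρ z⁻¹ := by
    rw [pow_mul_rep hFρ, iterate_map_inv]
  rw [map_mul ρ, map_mul ρ, mul_assoc, h, mul_assoc, LinearMap.trace_mul_comm, mul_assoc, mul_assoc,
    ← map_mul ρ, inv_mul_cancel, map_one, mul_one]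

variable [FiniteDimensional ℚ V]

/-- If a finite-dimensional representation of `G` is intertwined by an injective map with its
pullback along a tame `φ`, then a finite-index subgroup of `G` acts unipotently. -/
theorem exists_finiteIndex_flag {φ : G →* G}
    (htame : ∀ n : ℕ, 1 ≤ n → ReidemeisterNumberFinite ((⇑φ)^[n]))
    (ρ : G →* End ℚ V) (F : End ℚ V) (hF : Function.Injective F)
    (hFρ : ∀ g, F * ρ g = ρ (φ g) * F) :
    ∃ H : Subgroup G, H.FiniteIndex ∧ ∃ (W : ℕ → Submodule ℚ V) (m : ℕ), W 0 = ⊤ ∧ W m = ⊥ ∧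
      ∀ h ∈ H, ∀ k, ∀ w ∈ W k, ρ h w - w ∈ W (k + 1) := by
  -- The functional `a ↦ tr (a ρ(g) Fⁿ⁺¹)` on `End V`.
  let ℓ : G × ℕ → Dual ℚ (End ℚ V) := fun s =>
    LinearMap.trace ℚ V ∘ₗ LinearMap.mulRight ℚ (ρ s.1 * F ^ (s.2 + 1))
  have hℓ : ∀ s a, ℓ s a = LinearMap.trace ℚ V (a * (ρ s.1 * F ^ (s.2 + 1))) := fun _ _ => rfl
  have hℓmul : ∀ a g g' n, ℓ (g', n) (a * ρ g) = ℓ (g * g', n) a := by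
    intro a g g' n
    simp only [hℓ, map_mul, mul_assoc]
  have hℓfin : ∀ s, (Set.range fun g => ℓ s (ρ g)).Finite := by
    rintro ⟨g', n⟩
    obtain ⟨E, hE⟩ := htame (n + 1) (Nat.le_add_left 1 n)
    refine (E.finite_toSet.image fun y => LinearMap.trace ℚ V (ρ y * F ^ (n + 1))).subset ?_
    rintro _ ⟨g, rfl⟩
    obtain ⟨y, hy, z, hz⟩ := hE (g * g')
    refine ⟨y, hy, ?_⟩
    simp only [hℓ]
    rw [← mul_assoc, ← map_mul, hz, trace_rep_mul_pow_twisted hFρ]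
  let H : Subgroup G :=
    { carrier := {h | ∀ s, ℓ s (ρ h) = ℓ s 1}
      one_mem' := fun s => by rw [map_one]
      mul_mem' := fun {a b} ha hb s => by
        obtain ⟨g, n⟩ := s
        rw [map_mul, hℓmul, ha, ← hℓmul, one_mul, hb]
      inv_mem' := fun {a} ha s => by
        obtain ⟨g, n⟩ := s
        have := ha (a⁻¹ * g, n)
        rw [← hℓmul, ← hℓmul, ← map_mul, mul_inv_cancel, map_one, one_mul] at this
        exact this.symm }
  have hHmem : ∀ h, h ∈ H ↔ ∀ s, ℓ s (ρ h) = ℓ s 1 := fun _ => Iff.rfl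
  refine ⟨H, ?_, ?_⟩
  · -- Finitely many of the functionals span all of them, and these take finitely many values.
    obtain ⟨S, hS, hspan⟩ := Submodule.fg_span_iff_fg_span_finset_subset (R := ℚ) (Set.range ℓ) |>.1
      (IsNoetherian.noetherian _)
    refine finiteIndex_of_finite_range H (fun g (s : S) => s.1 (ρ g)) ?_ ?_
    · refine (Set.Finite.pi' (t := fun s : S => Set.range fun g => s.1 (ρ g)) ?_).subset ?_
      · rintro ⟨s, hs⟩
        obtain ⟨t, rfl⟩ := hS hs
        exact hℓfin t
      · rintro _ ⟨g, rfl⟩ s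
        exact ⟨g, rfl⟩
    · intro x y hxy
      have hD : ∀ s, ℓ s (ρ x) = ℓ s (ρ y) := by
        intro s
        have hs : ℓ s ∈ Submodule.span ℚ (S : Set (Dual ℚ (End ℚ V))) := by
          rw [← hspan]; exact Submodule.subset_span ⟨s, rfl⟩
        generalize ℓ s = t at hs ⊢
        induction hs using Submodule.span_induction with
        | mem t ht => exact congrFun hxy ⟨t, ht⟩
        | zero => rfl
        | add a b _ _ ha hb => rw [LinearMap.add_apply, LinearMap.add_apply, ha, hb]
        | smul c a _ ha => rw [LinearMap.smul_apply, LinearMap.smul_apply, ha]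
      rintro ⟨g, n⟩
      rw [map_mul, hℓmul, hD, ← hℓmul, ← map_mul, mul_inv_cancel, map_one]
  · let A : Submodule ℚ (End ℚ V) := Submodule.span ℚ (Set.range ρ)
    have hAmul : ∀ x ∈ A, ∀ y ∈ A, x * y ∈ A := by
      intro x hx y hy
      have := Submodule.mul_mem_mul hx hy
      rw [Submodule.span_mul_span] at this
      refine Submodule.span_mono ?_ this
      rintro _ ⟨_, ⟨g, rfl⟩, _, ⟨g', rfl⟩, rfl⟩
      exact ⟨g * g', map_mul _ _ _⟩
    let J : Submodule ℚ (End ℚ V) := A ⊓ ⨅ s, LinearMap.ker (ℓ s)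
    have hJ : ∀ x, x ∈ J ↔ x ∈ A ∧ ∀ s, ℓ s x = 0 := fun x => by
      simp [J, Submodule.mem_iInf]
    have hJA : ∀ x ∈ J, ∀ a ∈ A, x * a ∈ J := by
      intro x hx a ha
      rw [hJ] at hx ⊢
      refine ⟨hAmul _ hx.1 _ ha, ?_⟩
      rintro ⟨g, n⟩
      induction ha using Submodule.span_induction with
      | mem t ht => obtain ⟨g', rfl⟩ := ht; rw [hℓmul, hx.2]
      | zero => rw [mul_zero, map_zero]
      | add a b _ _ ha hb => rw [mul_add, map_add, ha, hb, add_zero]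
      | smul c a _ ha => rw [mul_smul_comm, map_smul, ha, smul_zero]
    obtain ⟨r, hr⟩ := exists_aeval_X_mul_eq_one hF
    have htr : ∀ x ∈ J, LinearMap.trace ℚ V x = 0 := by
      intro x hx
      rw [hJ] at hx
      have := trace_mul_aeval_X_mul_eq_zero (x := x) (y := F)
        (fun k => by have := hx.2 (1, k); rwa [hℓ, map_one, one_mul] at this) r
      rwa [hr, mul_one] at this
    have hpow : ∀ x ∈ J, ∀ k, x ^ (k + 1) ∈ J := by
      intro x hx k
      induction k with
      | zero => simpa using hx
      | succ k ih => rw [pow_succ]; exact hJA _ ih _ ((hJ x).1 hx).1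
    obtain ⟨W, m, h0, hm, hW⟩ := exists_flag_of_nilpotent J
      (fun x hx y hy => hJA x hx y ((hJ y).1 hy).1)
      (fun x hx => isNilpotent_of_trace_pow_eq_zero fun k => htr _ (hpow x hx k))
    refine ⟨W, m, h0, hm, fun h hh k w hw => ?_⟩
    refine hW (ρ h - 1) ?_ k w hw
    rw [hJ]
    refine ⟨A.sub_mem (Submodule.subset_span ⟨h, rfl⟩) (Submodule.subset_span ⟨1, map_one ρ⟩), ?_⟩
    intro s
    rw [map_sub, (hHmem h).1 hh s, sub_self]

end Representation

/-! ### Abelian groups of finite abelian ranks -/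

section AbelianFAR

open TensorProduct

/-- An abelian group has finite abelian ranks if its rationalization is finite-dimensional and,
for every `e ≠ 0`, it has only finitely many elements killed by `e`. (For the torsion condition it
is equivalent to consider prime values of `e` only, see `FARAb.of_prime`.) -/
structure FARAb (A : Type*) [AddCommGroup A] : Prop where
  finiteDimensional : FiniteDimensional ℚ (ℚ ⊗[ℤ] A)
  finite_torsion : ∀ e : ℕ, e ≠ 0 → {a : A | e • a = 0}.Finite

variable {A B : Type*} [AddCommGroup A] [AddCommGroup B]

theorem exists_nsmul_eq_zero_of_tmul_eq_zero {a : A} (h : (1 : ℚ) ⊗ₜ[ℤ] a = 0) :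
    ∃ k : ℕ, k ≠ 0 ∧ k • a = 0 := by
  obtain ⟨⟨c, hc⟩, hca⟩ := (IsLocalizedModule.eq_zero_iff (nonZeroDivisors ℤ)
    (TensorProduct.mk ℤ ℚ A 1)).1 h
  refine ⟨c.natAbs, Int.natAbs_ne_zero.2 (nonZeroDivisors.ne_zero hc), ?_⟩
  rcases Int.natAbs_eq c with h | h
  · rw [← natCast_zsmul, ← h]; exact hca
  · rw [← natCast_zsmul, ← neg_eq_iff_eq_neg.2 h, neg_smul, neg_eq_zero]; exact hca

theorem span_range_one_tmul :
    Submodule.span ℚ (Set.range fun a : A => (1 : ℚ) ⊗ₜ[ℤ] a) = ⊤ := by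
  rw [eq_top_iff]
  rintro x -
  induction x using TensorProduct.induction_on with
  | zero => exact Submodule.zero_mem _
  | tmul q a =>
    have : q ⊗ₜ[ℤ] a = q • ((1 : ℚ) ⊗ₜ[ℤ] a) := by rw [smul_tmul', smul_eq_mul, mul_one]
    rw [this]
    exact Submodule.smul_mem _ _ (Submodule.subset_span ⟨a, rfl⟩)
  | add x y hx hy => exact Submodule.add_mem _ hx hy

/-- The rank condition in terms of integral relations, and the torsion condition for primes,
imply finite abelian ranks. -/
theorem FARAb.of_prime
    (hrank : ∃ n : ℕ, ∀ f : Fin (n + 1) → A, ∃ c : Fin (n + 1) → ℤ, c ≠ 0 ∧ ∑ i, c i • f i = 0)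
    (htors : ∀ p : ℕ, p.Prime → {a : A | p • a = 0}.Finite) : FARAb A where
  finiteDimensional := by
    obtain ⟨n, hn⟩ := hrank
    obtain ⟨b, hb, hspan, hli⟩ := exists_linearIndependent ℚ
      (Set.range fun a : A => (1 : ℚ) ⊗ₜ[ℤ] a)
    rw [span_range_one_tmul] at hspan
    rcases b.finite_or_infinite with hfin | hinf
    · exact ⟨(Submodule.fg_def).2 ⟨b, hfin, hspan⟩⟩
    · exfalso
      have := hinf.to_subtype
      let ι : Fin (n + 1) → b := fun i => Infinite.natEmbedding b i
      have hι : Function.Injective ι := fun i j h =>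
        Fin.val_injective ((Infinite.natEmbedding b).injective h)
      have hli' := hli.comp ι hι
      choose f hf using fun i => hb (ι i).2
      obtain ⟨c, hc, hsum⟩ := hn f
      refine hc (funext fun i => ?_)
      have := Fintype.linearIndependent_iff.1 hli' (fun i => (c i : ℚ)) ?_ i
      · exact_mod_cast this
      · have h2 := congrArg (TensorProduct.mk ℤ ℚ A 1) hsum
        rw [map_sum, map_zero] at h2
        rw [← h2]
        refine Finset.sum_congr rfl fun i _ => ?_
        rw [map_zsmul, Int.cast_smul_eq_zsmul, Function.comp_apply, ← hf i]
        rfl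
  finite_torsion := by
    intro e he
    induction e using induction_on_primes with
    | zero => exact absurd rfl he
    | one => simp
    | prime_mul p a hp ih =>
      have ha : a ≠ 0 := by rintro rfl; simp at he
      refine Set.Finite.of_finite_fibers (fun x => p • x) ((ih ha).subset ?_) ?_
      · rintro _ ⟨x, hx, rfl⟩
        have hx : (p * a) • x = 0 := hx
        simpa [mul_comm p a, mul_smul] using hx
      · rintro y -
        rcases Set.eq_empty_or_nonempty ({x : A | (p * a) • x = 0} ∩ (fun x => p • x) ⁻¹' {y})
          with h | ⟨x₀, -, hx₀⟩
        · rw [h]; exact Set.finite_empty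
        · refine ((htors p hp).image (x₀ + ·)).subset ?_
          rintro x ⟨-, hx⟩
          refine ⟨x - x₀, ?_, by simp⟩
          simp only [Set.mem_preimage, Set.mem_singleton_iff] at hx hx₀
          simp [smul_sub, hx, hx₀]

theorem FARAb.of_finite [Finite A] : FARAb A :=
  .of_prime ⟨0, fun f => ⟨fun _ => Nat.card A, by
    simp only [ne_eq, funext_iff, not_forall]
    exact ⟨0, by simpa using Nat.card_pos.ne'⟩, by simp⟩⟩ fun _ _ => Set.toFinite _

theorem FARAb.of_injective (hB : FARAb B) (f : A →ₗ[ℤ] B) (hf : Function.Injective f) :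
    FARAb A where
  finiteDimensional := by
    have := hB.finiteDimensional
    exact FiniteDimensional.of_injective (f.baseChange ℚ)
      (Module.Flat.lTensor_preserves_injective_linearMap f hf)
  finite_torsion e he := by
    refine ((hB.finite_torsion e he).preimage hf.injOn).subset fun a ha => ?_
    have ha : e • a = 0 := ha
    change e • f a = 0
    rw [← map_nsmul, ha, map_zero]

theorem FARAb.of_extension (f : A →ₗ[ℤ] B) (hK : FARAb (LinearMap.ker f)) (hB : FARAb B) :
    FARAb A where
  finiteDimensional := by
    have := hB.finiteDimensional
    have := hK.finiteDimensional
    have hex : Function.Exact (LinearMap.ker f).subtype f := LinearMap.exact_subtype_ker_map f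
    have hex' := (Module.Flat.lTensor_exact ℚ hex)
    have hker : LinearMap.ker (f.baseChange ℚ) =
        LinearMap.range ((LinearMap.ker f).subtype.baseChange ℚ) := by
      ext x
      exact hex' x
    refine ⟨Submodule.fg_of_fg_map_of_fg_inf_ker (f.baseChange ℚ) (IsNoetherian.noetherian _) ?_⟩
    rw [hker, top_inf_eq, LinearMap.range_eq_map]
    exact Submodule.FG.map _ Module.Finite.fg_top
  finite_torsion e he := by
    refine Set.Finite.of_finite_fibers f ((hB.finite_torsion e he).subset ?_) ?_
    · rintro _ ⟨x, hx, rfl⟩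
      have hx : e • x = 0 := hx
      simp [← map_nsmul, hx]
    · rintro _ ⟨x₀, hx₀, rfl⟩
      refine ((hK.finite_torsion e he).image (fun k => x₀ + k.1)).subset ?_
      rintro x ⟨hx, hxx⟩
      have hx : e • x = 0 := hx
      have hx₀ : e • x₀ = 0 := hx₀
      have hxx : f x = f x₀ := hxx
      refine ⟨⟨x - x₀, by simp [hxx]⟩, ?_, by simp⟩
      simp [Subtype.ext_iff, smul_sub, hx, hx₀]

theorem relIndex_ne_zero_of_fg {P K : AddSubgroup A} (hK : K.FG)
    (h : ∀ x ∈ K, ∃ k : ℕ, k ≠ 0 ∧ k • x ∈ P) : P.relIndex K ≠ 0 := by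
  have : AddGroup.FG K := (AddGroup.fg_iff_addSubgroup_fg K).2 hK
  have : Module.Finite ℤ (K ⧸ P.addSubgroupOf K) := by
    rw [Module.Finite.iff_addGroup_fg]; infer_instance
  have : Finite (K ⧸ P.addSubgroupOf K) := by
    refine AddCommGroup.finite_of_fg_isAddTorsion _ ?_
    intro x
    obtain ⟨x, rfl⟩ := QuotientAddGroup.mk_surjective x
    obtain ⟨k, hk, hkx⟩ := h x x.2
    rw [isOfFinAddOrder_iff_nsmul_eq_zero]
    refine ⟨k, Nat.pos_of_ne_zero hk, ?_⟩
    rw [← QuotientAddGroup.mk_nsmul, QuotientAddGroup.eq_zero_iff]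
    exact hkx
  exact AddSubgroup.index_ne_zero_of_finite

/-- An abelian group with finite-dimensional rationalization contains a finitely generated
subgroup with torsion quotient. -/
theorem FARAb.exists_fg (hA : FARAb A) :
    ∃ N : AddSubgroup A, N.FG ∧ ∀ a, ∃ k : ℕ, k ≠ 0 ∧ k • a ∈ N := by
  have := hA.finiteDimensional
  obtain ⟨S, hS, hspan⟩ := Submodule.fg_span_iff_fg_span_finset_subset (R := ℚ)
    (Set.range fun a : A => (1 : ℚ) ⊗ₜ[ℤ] a) |>.1 (IsNoetherian.noetherian _)
  rw [span_range_one_tmul] at hspan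
  choose! g hg using fun x (hx : x ∈ (S : Set (ℚ ⊗[ℤ] A))) => hS hx
  refine ⟨AddSubgroup.closure (g '' S), (AddSubgroup.fg_iff _).2 ⟨_, rfl, S.finite_toSet.image g⟩,
    fun a => ?_⟩
  have key : ∀ v ∈ Submodule.span ℚ (S : Set (ℚ ⊗[ℤ] A)), ∃ k : ℕ, k ≠ 0 ∧
      ∃ b ∈ AddSubgroup.closure (g '' S), k • v = (1 : ℚ) ⊗ₜ[ℤ] b := by
    intro v hv
    induction hv using Submodule.span_induction with
    | mem x hx =>
      exact ⟨1, one_ne_zero, g x, AddSubgroup.subset_closure ⟨x, hx, rfl⟩, by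
        rw [one_smul]; exact (hg x hx).symm⟩
    | zero => exact ⟨1, one_ne_zero, 0, zero_mem _, by simp⟩
    | add x y _ _ hx hy =>
      obtain ⟨k, hk, b, hb, hkb⟩ := hx
      obtain ⟨l, hl, c, hc, hlc⟩ := hy
      refine ⟨k * l, mul_ne_zero hk hl, l • b + k • c,
        add_mem (nsmul_mem hb l) (nsmul_mem hc k), ?_⟩
      rw [tmul_add, tmul_smul, tmul_smul, ← hkb, ← hlc, smul_add, smul_smul, smul_smul, mul_comm l]
    | smul q x _ hx =>
      obtain ⟨k, hk, b, hb, hkb⟩ := hx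
      refine ⟨q.den * k, mul_ne_zero q.den_ne_zero hk, q.num • b, zsmul_mem hb _, ?_⟩
      rw [tmul_smul, ← hkb, ← Nat.cast_smul_eq_nsmul ℚ, ← Nat.cast_smul_eq_nsmul ℚ,
        ← Int.cast_smul_eq_zsmul ℚ, smul_smul, smul_smul]
      congr 1
      push_cast
      rw [mul_right_comm, Rat.den_mul_eq_num]
  obtain ⟨k, hk, b, hb, hkb⟩ := key ((1 : ℚ) ⊗ₜ[ℤ] a) (by rw [← hspan]; exact Submodule.mem_top)
  obtain ⟨l, hl, hlb⟩ := exists_nsmul_eq_zero_of_tmul_eq_zero (a := k • a - b) (by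
    rw [tmul_sub, tmul_smul, hkb, sub_self])
  refine ⟨l * k, mul_ne_zero hl hk, ?_⟩
  rw [smul_sub, sub_eq_zero, smul_smul] at hlb
  rw [hlb]
  exact nsmul_mem hb l

/-- An abelian group `A` with finite abelian ranks has finite quotients `A / eA`. Comparing indices
along `eN ≤ eK ≤ K` and `eN ≤ N ≤ K`, where `N` is finitely generated with `A / N` torsion, bounds
`|K / eK|` by `|N / eN| |A[e]|` for every finitely generated `K ≥ N`. -/
theorem FARAb.finite_quotient (hA : FARAb A) {e : ℕ} (he : e ≠ 0) :
    Finite (A ⧸ (nsmulAddMonoidHom e : A →+ A).range) := by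
  obtain ⟨N, hNfg, hN⟩ := hA.exists_fg
  set μ : A →+ A := nsmulAddMonoidHom e
  have hμ : ∀ x, μ x = e • x := fun _ => rfl
  have hle : ∀ K : AddSubgroup A, K.map μ ≤ K := by
    rintro K _ ⟨x, hx, rfl⟩
    exact nsmul_mem hx e
  have hkerfin : Finite μ.ker := (hA.finite_torsion e he).to_subtype
  have hbound : ∀ K : AddSubgroup A, K.FG → N ≤ K →
      μ.range.relIndex K ≤ N.relIndex μ.ker * (N.map μ).relIndex N ∧ μ.range.relIndex K ≠ 0 := by
    intro K hK hNK
    have ha : N.relIndex K ≠ 0 := relIndex_ne_zero_of_fg hK fun x _ => hN x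
    have hb : ∀ M : AddSubgroup A, M.FG → (M.map μ).relIndex M ≠ 0 := fun M hM =>
      relIndex_ne_zero_of_fg hM fun x hx => ⟨e, he, x, hx, rfl⟩
    have hz : N.relIndex μ.ker ≠ 0 := AddSubgroup.FiniteIndex.index_ne_zero
    have h1 : (N.map μ).relIndex N * N.relIndex K = (N.map μ).relIndex K :=
      AddSubgroup.relIndex_mul_relIndex _ _ _ (hle N) hNK
    have h2 : (N.map μ).relIndex (K.map μ) * (K.map μ).relIndex K = (N.map μ).relIndex K :=
      AddSubgroup.relIndex_mul_relIndex _ _ _ (AddSubgroup.map_mono hNK) (hle K)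
    have h3 : (N.map μ).relIndex (K.map μ) = (N ⊔ μ.ker).relIndex (K ⊔ μ.ker) :=
      AddSubgroup.relIndex_map_map _ _ _
    have h4 : N.relIndex (N ⊔ μ.ker) * (N ⊔ μ.ker).relIndex (K ⊔ μ.ker) =
        N.relIndex (K ⊔ μ.ker) :=
      AddSubgroup.relIndex_mul_relIndex _ _ _ le_sup_left (sup_le_sup_right hNK _)
    have h5 : N.relIndex K * K.relIndex (K ⊔ μ.ker) = N.relIndex (K ⊔ μ.ker) :=
      AddSubgroup.relIndex_mul_relIndex _ _ _ hNK le_sup_left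
    have h6 : N.relIndex (N ⊔ μ.ker) = N.relIndex μ.ker := AddSubgroup.relIndex_sup_left _ _
    have h7 : K.relIndex (K ⊔ μ.ker) ≠ 0 := by
      rw [AddSubgroup.relIndex_sup_left]; exact AddSubgroup.FiniteIndex.index_ne_zero
    set y := (N ⊔ μ.ker).relIndex (K ⊔ μ.ker)
    have hy : y ≠ 0 := by
      intro hy
      rw [hy, mul_zero, ← h5] at h4
      exact mul_ne_zero ha h7 h4.symm
    have h8 : N.relIndex K ≤ N.relIndex μ.ker * y := by
      rw [← h6, h4, ← h5]
      exact Nat.le_mul_of_pos_right _ (Nat.pos_of_ne_zero h7)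
    have h9 : (K.map μ).relIndex K ≤ N.relIndex μ.ker * (N.map μ).relIndex N := by
      refine Nat.le_of_mul_le_mul_left ?_ (Nat.pos_of_ne_zero hy)
      rw [h3] at h2
      rw [h2, ← h1]
      calc _ ≤ (N.map μ).relIndex N * (N.relIndex μ.ker * y) := Nat.mul_le_mul_left _ h8
        _ = _ := by ring
    have h10 : K.map μ ≤ μ.range := by rintro _ ⟨x, -, rfl⟩; exact ⟨x, rfl⟩
    exact ⟨(AddSubgroup.relIndex_le_of_le_left h10 (hb K hK)).trans h9,
      fun h => hb K hK (AddSubgroup.relIndex_eq_zero_of_le_left h10 h)⟩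
  by_contra hinf
  rw [not_finite_iff_infinite] at hinf
  obtain ⟨S, hS⟩ := Infinite.exists_subset_card_eq (A ⧸ μ.range)
    (N.relIndex μ.ker * (N.map μ).relIndex N + 1)
  let K := N ⊔ AddSubgroup.closure (Quotient.out '' (S : Set (A ⧸ μ.range)))
  obtain ⟨hK, hK0⟩ := hbound K (hNfg.sup ((AddSubgroup.fg_iff _).2
    ⟨_, rfl, S.finite_toSet.image _⟩)) le_sup_left
  have : Finite (K ⧸ μ.range.addSubgroupOf K) := Nat.finite_of_card_ne_zero hK0
  have hmemK : ∀ s : S, s.1.out ∈ K := fun s =>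
    (le_sup_right : _ ≤ K) (AddSubgroup.subset_closure ⟨s.1, s.2, rfl⟩)
  have hinj : Function.Injective
      (fun s : S => (QuotientAddGroup.mk ⟨s.1.out, hmemK s⟩ : K ⧸ μ.range.addSubgroupOf K)) := by
    intro s t hst
    rw [QuotientAddGroup.eq, AddSubgroup.mem_addSubgroupOf] at hst
    have h : (QuotientAddGroup.mk s.1.out : A ⧸ μ.range) = QuotientAddGroup.mk t.1.out :=
      QuotientAddGroup.eq.2 hst
    rw [QuotientAddGroup.out_eq', QuotientAddGroup.out_eq'] at h
    exact Subtype.ext h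
  have hcard := Nat.card_le_card_of_injective _ hinj
  rw [Nat.card_eq_fintype_card, Fintype.card_coe, hS] at hcard
  have : Nat.card (K ⧸ μ.range.addSubgroupOf K) = μ.range.relIndex K := rfl
  omega

theorem FARAb.of_surjective (hA : FARAb A) (f : A →ₗ[ℤ] B) (hf : Function.Surjective f) :
    FARAb B where
  finiteDimensional := by
    have := hA.finiteDimensional
    exact Module.Finite.of_surjective (f.baseChange ℚ) (LinearMap.lTensor_surjective ℚ hf)
  finite_torsion e he := by
    have hR : FARAb (LinearMap.ker f) := hA.of_injective (LinearMap.ker f).subtype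
      Subtype.val_injective
    have := hR.finite_quotient he
    choose g hg using hf
    classical
    -- An `e`-torsion element of `B` is sent to `e` times a lift, in `ker f` modulo `e ker f`.
    let δ : B → LinearMap.ker f ⧸ (nsmulAddMonoidHom e : LinearMap.ker f →+ _).range := fun b =>
      if hb : e • b = 0 then QuotientAddGroup.mk ⟨e • g b, by simp [hg, hb]⟩ else 0
    refine Set.Finite.of_finite_fibers δ (Set.toFinite _) ?_
    rintro _ ⟨b₀, hb₀, rfl⟩
    have hb₀ : e • b₀ = 0 := hb₀
    refine ((hA.finite_torsion e he).image fun a => b₀ + f a).subset ?_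
    rintro b ⟨hb, hbb⟩
    have hb : e • b = 0 := hb
    have hbb : δ b = δ b₀ := hbb
    simp only [δ, hb, hb₀, dif_pos] at hbb
    rw [eq_comm, QuotientAddGroup.eq] at hbb
    obtain ⟨r, hr⟩ := hbb
    have hr : e • r.1 = -(e • g b₀) + e • g b := congrArg Subtype.val hr
    have hfr : f r.1 = 0 := r.2
    refine ⟨g b - g b₀ - r.1, ?_, ?_⟩
    · change e • (g b - g b₀ - r.1) = 0
      simp only [smul_sub, hr]; abel
    · simp [hg, hfr]

end AbelianFAR

/-! ### Abelian sections of virtually FAR groups -/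

section Sections

universe u

/-- Every abelian section of `G` has finite abelian ranks. Unlike the existence of a series, this
condition passes to quotients by definition. -/
def AbelianSectionsFAR (G : Type u) [Group G] : Prop :=
  ∀ (B : Type u) [AddCommGroup B] (C : Subgroup G) (f : C →* Multiplicative B),
    Function.Surjective f → FARAb B

theorem AbelianSectionsFAR.quotient {G : Type u} [Group G] (hG : AbelianSectionsFAR G)
    (N : Subgroup G) [N.Normal] : AbelianSectionsFAR (G ⧸ N) := by
  intro B _ C f hf
  refine hG B (C.comap (QuotientGroup.mk' N))
    (f.comp ((QuotientGroup.mk' N).subgroupComap C)) (hf.comp ?_)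
  exact MonoidHom.subgroupComap_surjective_of_surjective _ _ (QuotientGroup.mk'_surjective N)

/-- The additive map underlying a homomorphism to `Multiplicative B`, as a `ℤ`-linear map. -/
def toIntLinear {C B : Type*} [CommGroup C] [AddCommGroup B] (f : C →* Multiplicative B) :
    Additive C →ₗ[ℤ] B :=
  (MonoidHom.toAdditiveLeft f).toIntLinearMap

/-- An abelian section whose kernel contains `C ∩ K`, where `C ≤ H` and `H / K` is an abelian factor
of finite ranks, has finite abelian ranks. -/
theorem IsFARFactor.farAb {G : Type*} [Group G] {K H : Subgroup G} (hKH : IsFARFactor K H)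
    {B : Type*} [AddCommGroup B] {C : Subgroup G} (hCH : C ≤ H) (f : C →* Multiplicative B)
    (hf : Function.Surjective f) (hfK : ∀ x : C, x.1 ∈ K → f x = 1) : FARAb B := by
  obtain ⟨-, hnorm, hcomm, ⟨n, hn⟩, htors⟩ := hKH
  have : (K.subgroupOf C).Normal := ⟨fun y hy x => hnorm x (hCH x.2) y hy⟩
  let : CommGroup (C ⧸ K.subgroupOf C) :=
    { QuotientGroup.Quotient.group (K.subgroupOf C) with
      mul_comm := by
        intro a b
        obtain ⟨a, rfl⟩ := QuotientGroup.mk_surjective a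
        obtain ⟨b, rfl⟩ := QuotientGroup.mk_surjective b
        rw [← QuotientGroup.mk_mul, ← QuotientGroup.mk_mul, QuotientGroup.eq]
        have h := hcomm b⁻¹.1 (hCH b⁻¹.2) a⁻¹.1 (hCH a⁻¹.2)
        simpa [Subgroup.mem_subgroupOf, mul_assoc] using h }
  have hQ : FARAb (Additive (C ⧸ K.subgroupOf C)) := by
    refine FARAb.of_prime ⟨n, fun g => ?_⟩ fun p hp => ?_
    · choose x hx using fun i => QuotientGroup.mk_surjective (g i).toMul
      obtain ⟨c, hc, hprod⟩ := hn (fun i => (x i).1) fun i => hCH (x i).2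
      refine ⟨c, hc, ?_⟩
      have h1 : (QuotientGroup.mk (List.ofFn fun i => x i ^ c i).prod : C ⧸ K.subgroupOf C) = 1 := by
        rw [QuotientGroup.eq_one_iff, Subgroup.mem_subgroupOf]
        convert hprod
        rw [← C.subtype_apply, map_list_prod, List.map_ofFn]
        rfl
      apply Additive.toMul.injective
      rw [toMul_sum, toMul_zero, ← h1, ← QuotientGroup.mk'_apply, map_list_prod, List.map_ofFn,
        List.prod_ofFn]
      refine Finset.prod_congr rfl fun i _ => ?_
      rw [toMul_zsmul, ← hx i]
      rfl
    · obtain ⟨F, hF⟩ := htors p hp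
      choose x hx using fun a : Additive (C ⧸ K.subgroupOf C) =>
        QuotientGroup.mk_surjective a.toMul
      have hxp : ∀ a : Additive (C ⧸ K.subgroupOf C), p • a = 0 → (x a).1 ^ p ∈ K := by
        intro a ha
        have : (QuotientGroup.mk (x a ^ p) : C ⧸ K.subgroupOf C) = 1 := by
          rw [QuotientGroup.mk_pow, hx, ← toMul_nsmul, ha, toMul_zero]
        rw [QuotientGroup.eq_one_iff] at this
        exact this
      choose! b hbF hb using fun a (ha : p • a = 0) => hF (x a).1 (hCH (x a).2) (hxp a ha)
      refine Set.Finite.of_finite_image (f := b) (F.finite_toSet.subset ?_) ?_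
      · rintro _ ⟨a, ha, rfl⟩
        exact hbF a ha
      · intro a ha a' ha' haa
        apply Additive.toMul.injective
        rw [← hx a, ← hx a', QuotientGroup.eq, Subgroup.mem_subgroupOf]
        have h := K.mul_mem (K.inv_mem (hb a ha)) (hb a' ha')
        rw [← haa] at h
        simpa using h
  let F : (C ⧸ K.subgroupOf C) →* Multiplicative B := QuotientGroup.lift _ f hfK
  refine hQ.of_surjective (toIntLinear F) fun b => ?_
  obtain ⟨x, hx⟩ := hf (Multiplicative.ofAdd b)
  exact ⟨Additive.ofMul (QuotientGroup.mk x), hx⟩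

/-- An abelian section of `C` has finite abelian ranks if its part coming from `C ∩ K` and the
corresponding quotient have. -/
theorem farAb_of_inf {G : Type*} [Group G] {B : Type*} [AddCommGroup B] (K : Subgroup G)
    {C : Subgroup G} (f : C →* Multiplicative B) (hf : Function.Surjective f)
    (hsub : ∀ (B₀ : AddSubgroup B) (f₀ : ↥(C ⊓ K) →* Multiplicative B₀),
      Function.Surjective f₀ → FARAb B₀)
    (hquo : ∀ (B₀ : AddSubgroup B) (f₁ : C →* Multiplicative (B ⧸ B₀)), Function.Surjective f₁ →
      (∀ x : C, x.1 ∈ K → f₁ x = 1) → FARAb (B ⧸ B₀)) : FARAb B := by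
  let f₂ : ↥(C ⊓ K) →* Multiplicative B := f.comp (Subgroup.inclusion inf_le_left)
  let B₀ : AddSubgroup B := AddSubgroup.toSubgroup.symm f₂.range
  have hB₀ : ∀ x, f₂ x ∈ f₂.range := fun x => ⟨x, rfl⟩
  let f₀ : ↥(C ⊓ K) →* Multiplicative B₀ :=
    { toFun := fun x => Multiplicative.ofAdd ⟨(f₂ x).toAdd, hB₀ x⟩
      map_one' := by
        apply Multiplicative.toAdd.injective
        apply Subtype.ext
        simp
      map_mul' := fun x y => by
        apply Multiplicative.toAdd.injective
        apply Subtype.ext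
        simp }
  have h0 : FARAb B₀ := by
    refine hsub B₀ f₀ ?_
    rintro ⟨b, x, hx⟩
    refine ⟨x, ?_⟩
    apply Multiplicative.toAdd.injective
    apply Subtype.ext
    exact congrArg Multiplicative.toAdd hx
  let f₁ : C →* Multiplicative (B ⧸ B₀) :=
    (AddMonoidHom.toMultiplicative (QuotientAddGroup.mk' B₀)).comp f
  have h1 : FARAb (B ⧸ B₀) := by
    refine hquo B₀ f₁ ?_ ?_
    · intro b
      obtain ⟨b', hb'⟩ := QuotientAddGroup.mk_surjective b.toAdd
      obtain ⟨x, hx⟩ := hf (Multiplicative.ofAdd b')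
      refine ⟨x, ?_⟩
      apply Multiplicative.toAdd.injective
      rw [← hb']
      exact congrArg (fun t : Multiplicative B => (QuotientAddGroup.mk t.toAdd : B ⧸ B₀)) hx
    · intro x hx
      apply Multiplicative.toAdd.injective
      exact (QuotientAddGroup.eq_zero_iff _).2 ⟨⟨x.1, x.2, hx⟩, rfl⟩
  let π : B →ₗ[ℤ] B ⧸ B₀ := (QuotientAddGroup.mk' B₀).toIntLinearMap
  have hπ : ∀ b, b ∈ LinearMap.ker π → b ∈ B₀ := fun b hb => (QuotientAddGroup.eq_zero_iff b).1 hb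
  refine FARAb.of_extension π ?_ h1
  refine h0.of_injective (A := LinearMap.ker π) (AddMonoidHom.toIntLinearMap
    { toFun := fun b => ⟨b.1, hπ b.1 b.2⟩, map_zero' := rfl, map_add' := fun _ _ => rfl }) ?_
  intro b b' h
  exact Subtype.ext (show b.1 = b'.1 from congrArg (fun t : B₀ => t.1) h)

theorem IsFARGroup.abelianSectionsFAR {G : Type u} [Group G] (hG : IsFARGroup G) :
    AbelianSectionsFAR G := by
  obtain ⟨n, s, h0, hn, hs⟩ := hG
  have key : ∀ i : Fin (n + 1), ∀ (B : Type u) [AddCommGroup B] (C : Subgroup G)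
      (f : C →* Multiplicative B), C ≤ s i → Function.Surjective f → FARAb B := by
    intro i
    induction i using Fin.induction with
    | zero =>
      intro B _ C f hC hf
      rw [h0, le_bot_iff] at hC
      subst hC
      have : Finite B := Finite.of_surjective (fun x => (f x).toAdd) hf
      exact FARAb.of_finite
    | succ i ih =>
      intro B _ C f hC hf
      exact farAb_of_inf (s i.castSucc) f hf (fun B₀ f₀ hf₀ => ih B₀ _ f₀ inf_le_right hf₀)
        fun B₀ f₁ hf₁ h => (hs i).farAb hC f₁ hf₁ h
  intro B _ C f hf
  exact key (Fin.last n) B C f (hn ▸ le_top) hf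

theorem IsVirtuallyFAR.abelianSectionsFAR {G : Type u} [Group G] (hG : IsVirtuallyFAR G) :
    AbelianSectionsFAR G := by
  obtain ⟨H, hH, hFAR⟩ := hG
  intro B _ C f hf
  refine farAb_of_inf H f hf (fun B₀ f₀ hf₀ => ?_) fun B₀ f₁ hf₁ h => ?_
  · refine hFAR.abelianSectionsFAR B₀ (C.subgroupOf H)
      (f₀.comp (MonoidHom.mk' (fun x => ⟨x.1.1, x.2, x.1.2⟩) fun _ _ => rfl)) ?_
    intro b
    obtain ⟨x, rfl⟩ := hf₀ b
    exact ⟨⟨⟨x.1, x.2.2⟩, x.2.1⟩, rfl⟩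
  · have : Finite (C ⧸ H.subgroupOf C) := Subgroup.finite_quotient_of_finiteIndex
    have : Finite (B ⧸ B₀) := by
      refine Finite.of_surjective (fun q : C ⧸ H.subgroupOf C => (f₁ q.out).toAdd) fun b => ?_
      obtain ⟨x, hx⟩ := hf₁ (Multiplicative.ofAdd b)
      refine ⟨QuotientGroup.mk x, ?_⟩
      obtain ⟨y, hy⟩ := QuotientGroup.mk_out_eq_mul (H.subgroupOf C) x
      change (f₁ (Quotient.out _)).toAdd = b
      rw [hy, map_mul, h _ y.2, mul_one, hx]
      rfl
    exact FARAb.of_finite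

end Sections

/-! ### Solvability and invariant subgroups -/

section Solvable

/-- The derived series of a subgroup `S`, computed in the ambient group. -/
def derivedIn {G : Type*} [Group G] (S : Subgroup G) : ℕ → Subgroup G
  | 0 => S
  | n + 1 => ⁅derivedIn S n, derivedIn S n⁆

variable {G : Type*} [Group G]

theorem derivedIn_mono {S T : Subgroup G} (h : S ≤ T) (n : ℕ) : derivedIn S n ≤ derivedIn T n := by
  induction n with
  | zero => exact h
  | succ n ih => exact Subgroup.commutator_mono ih ih

theorem map_derivedIn {G' : Type*} [Group G'] (f : G →* G') (S : Subgroup G) (n : ℕ) :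
    (derivedIn S n).map f = derivedIn (S.map f) n := by
  induction n with
  | zero => rfl
  | succ n ih => rw [derivedIn, derivedIn, Subgroup.map_commutator, ih]

theorem derivedIn_normal (S : Subgroup G) [hS : S.Normal] (n : ℕ) : (derivedIn S n).Normal := by
  induction n with
  | zero => exact hS
  | succ n ih => rw [derivedIn]; infer_instance

theorem IsFARGroup.exists_derivedIn_eq_bot (hG : IsFARGroup G) :
    ∃ n, derivedIn (⊤ : Subgroup G) n = ⊥ := by
  obtain ⟨n, s, h0, hn, hs⟩ := hG
  have key : ∀ k (hk : k ≤ n), derivedIn (⊤ : Subgroup G) k ≤ s ⟨n - k, by omega⟩ := by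
    intro k
    induction k with
    | zero => intro _; rw [derivedIn, ← hn]; rfl
    | succ k ih =>
      intro hk
      have h1 := ih (by omega)
      have h2 := (hs ⟨n - (k + 1), by omega⟩).2.2.1
      have e1 : (⟨n - k, by omega⟩ : Fin (n + 1)) = Fin.succ ⟨n - (k + 1), by omega⟩ := by
        ext; simp; omega
      rw [e1] at h1
      rw [derivedIn, Subgroup.commutator_le]
      intro x hx y hy
      rw [commutatorElement_def]
      exact h2 x (h1 hx) y (h1 hy)
  refine ⟨n, le_bot_iff.1 ((key n le_rfl).trans ?_)⟩
  rw [← h0]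
  apply le_of_eq
  congr 1
  ext
  simp

/-- In a finitely generated group, every finite-index subgroup contains a normal finite-index
subgroup that is invariant under all endomorphisms. -/
theorem exists_fullyInvariant_finiteIndex (hfg : Group.FG G) (H : Subgroup G) [H.FiniteIndex] :
    ∃ S : Subgroup G, S ≤ H ∧ S.Normal ∧ S.FiniteIndex ∧ ∀ φ : G →* G, S.map φ ≤ S := by
  have : Finite (G ⧸ H.normalCore) := Subgroup.finite_quotient_of_finiteIndex
  obtain ⟨T, hT, hTfin⟩ := (Subgroup.fg_iff _).1 hfg.out
  have := hTfin.to_subtype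
  have : Finite (G →* G ⧸ H.normalCore) := by
    refine Finite.of_injective (fun f (t : T) => f t) fun f g h => ?_
    refine MonoidHom.eq_of_eqOn_dense hT fun t ht => congrFun h ⟨t, ht⟩
  have hfi : ∀ f : G →* G ⧸ H.normalCore, f.ker.FiniteIndex := fun f => inferInstance
  refine ⟨⨅ f : G →* G ⧸ H.normalCore, f.ker, ?_, ?_, Subgroup.finiteIndex_iInf hfi, ?_⟩
  · refine (iInf_le _ (QuotientGroup.mk' _)).trans ?_
    rw [QuotientGroup.ker_mk']
    exact H.normalCore_le
  · exact Subgroup.normal_iInf_normal fun f => inferInstance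
  · rintro φ _ ⟨x, hx, rfl⟩
    simp only [SetLike.mem_coe, Subgroup.mem_iInf] at hx ⊢
    exact fun f => hx (f.comp φ)

end Solvable

/-! ### Lower central series of finitely generated groups -/

section Groups

open scoped commutatorElement

variable {G : Type*} [Group G]

/-- The terms of the lower central series of a finitely generated group are generated, as normal
subgroups, by finitely many elements. -/
theorem exists_finite_normalClosure (hfg : Group.FG G) (n : ℕ) :
    ∃ X : Set G, X.Finite ∧ X ⊆ (⊤ : Subgroup G).lowerCentralSeries n ∧
      (⊤ : Subgroup G).lowerCentralSeries n ≤ Subgroup.normalClosure X := by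
  obtain ⟨T, hT, hTfin⟩ := (Subgroup.fg_iff _).1 hfg.out
  induction n with
  | zero =>
    refine ⟨T, hTfin, fun _ _ => Subgroup.mem_top _, ?_⟩
    rw [Subgroup.lowerCentralSeries_zero, ← hT]
    exact Subgroup.closure_le_normalClosure
  | succ n ih =>
    obtain ⟨X, hX, hXn, hnX⟩ := ih
    refine ⟨Set.image2 (fun s t => ⁅s, t⁆) X T, hX.image2 _ hTfin, ?_, ?_⟩
    · rintro _ ⟨s, hs, t, -, rfl⟩
      exact Subgroup.commutator_mem_commutator (hXn hs) (Subgroup.mem_top t)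
    · set M := Subgroup.normalClosure (Set.image2 (fun s t => ⁅s, t⁆) X T)
      have hcomm : ∀ s t, ⁅s, t⁆ ∈ M ↔ QuotientGroup.mk' M s * QuotientGroup.mk' M t =
          QuotientGroup.mk' M t * QuotientGroup.mk' M s := fun s t => by
        rw [← commutatorElement_eq_one_iff_mul_comm, ← map_commutatorElement, ← MonoidHom.mem_ker,
          QuotientGroup.ker_mk']
      -- Modulo `M`, the elements of `X` commute with generators of the group, so they are central.
      have hXZ : Subgroup.normalClosure X ≤
          (Subgroup.center (G ⧸ M)).comap (QuotientGroup.mk' M) := by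
        refine Subgroup.normalClosure_le_normal fun s hs => ?_
        have h : (⊤ : Subgroup G) ≤
            (Subgroup.centralizer {QuotientGroup.mk' M s}).comap (QuotientGroup.mk' M) := by
          rw [← hT, Subgroup.closure_le]
          intro t ht
          refine Subgroup.mem_centralizer_singleton_iff.2 ?_
          exact ((hcomm s t).1 (Subgroup.subset_normalClosure ⟨s, hs, t, ht, rfl⟩)).symm
        refine Subgroup.mem_center_iff.2 fun q => ?_
        obtain ⟨g, rfl⟩ := QuotientGroup.mk'_surjective M q
        exact Subgroup.mem_centralizer_singleton_iff.1 (h (Subgroup.mem_top g))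
      rw [Subgroup.lowerCentralSeries_succ, Subgroup.commutator_le]
      intro x hx g _
      exact (hcomm x g).2 (Subgroup.mem_center_iff.1 (hXZ (hnX hx)) _).symm

/-- If a term of the lower central series of a finitely generated group is a torsion group inside
an abelian normal subgroup with finite `e`-torsion for all `e`, then this term is finite, and its
centralizer is nilpotent of finite index. -/
theorem virtuallyNilpotent_of_lowerCentralSeries (hfg : Group.FG G) (A : Subgroup G) [A.Normal]
    (hcomm : ∀ a ∈ A, ∀ b ∈ A, a * b = b * a)
    (hfin : ∀ e : ℕ, e ≠ 0 → {a | a ∈ A ∧ a ^ e = 1}.Finite) (c : ℕ)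
    (hc : ∀ x ∈ (⊤ : Subgroup G).lowerCentralSeries c, x ∈ A ∧ ∃ k : ℕ, k ≠ 0 ∧ x ^ k = 1) :
    ∃ H : Subgroup G, H.FiniteIndex ∧ Group.IsNilpotent H := by
  obtain ⟨X, hX, hXc, hcX⟩ := exists_finite_normalClosure hfg c
  choose! k hk0 hk using fun x hx => (hc x hx).2
  let e : ℕ := ∏ x ∈ hX.toFinset, k x
  have he : e ≠ 0 := Finset.prod_ne_zero_iff.2 fun x hx => hk0 x (hXc (by simpa using hx))
  let E : Subgroup G :=
    { carrier := {a | a ∈ A ∧ a ^ e = 1}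
      one_mem' := ⟨A.one_mem, one_pow e⟩
      mul_mem' := fun {a b} ha hb => ⟨A.mul_mem ha.1 hb.1, by
        rw [Commute.mul_pow (hcomm a ha.1 b hb.1), ha.2, hb.2, one_mul]⟩
      inv_mem' := fun {a} ha => ⟨A.inv_mem ha.1, by rw [inv_pow, ha.2, inv_one]⟩ }
  have hE : E.Normal := ⟨fun a ha g => ⟨‹A.Normal›.conj_mem a ha.1 g, by
    rw [conj_pow, ha.2, mul_one, mul_inv_cancel]⟩⟩
  set L := (⊤ : Subgroup G).lowerCentralSeries c
  have hLE : L ≤ E := hcX.trans (Subgroup.normalClosure_le_normal fun x hx =>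
    ⟨(hc x (hXc hx)).1, by
      obtain ⟨l, hl⟩ := Finset.dvd_prod_of_mem k (hX.mem_toFinset.2 hx)
      change x ^ ∏ x ∈ hX.toFinset, k x = 1
      rw [hl, pow_mul, hk x (hXc hx), one_pow]⟩)
  have : Finite L := ((hfin e he).subset hLE).to_subtype
  have : Finite (MulAut L) := Finite.of_injective (fun f => (f : L → L)) DFunLike.coe_injective
  refine ⟨(MulAut.conjNormal : G →* MulAut L).ker, inferInstance,
    Subgroup.isNilpotent_of_lowerCentralSeries_eq_bot (n := c + 1) ?_⟩
  rw [Subgroup.lowerCentralSeries_succ, eq_bot_iff, Subgroup.commutator_le]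
  intro x hx g hg
  have hxL : x ∈ L := Subgroup.lowerCentralSeries_mono c le_top hx
  have h := congrArg Subtype.val (DFunLike.congr_fun hg ⟨x, hxL⟩)
  rw [MulAut.conjNormal_apply] at h
  have h : g * x * g⁻¹ = x := h
  rw [Subgroup.mem_bot, commutatorElement_eq_one_iff_mul_comm]
  exact (mul_inv_eq_iff_eq_mul.1 h).symm

end Groups

/-! ### Unipotent action on abelian groups of finite abelian ranks -/

section Modules

open TensorProduct

variable {G M : Type*} [Group G] [AddCommGroup M]

/-- The version of `exists_finiteIndex_flag` for an action of `G` on an abelian group of finite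
abelian ranks: a finite-index subgroup acts unipotently modulo torsion. -/
theorem FARAb.exists_finiteIndex_flag (hM : FARAb M) {φ : G →* G}
    (htame : ∀ n : ℕ, 1 ≤ n → ReidemeisterNumberFinite ((⇑φ)^[n]))
    (α : G →* Module.End ℤ M) (ψ : Module.End ℤ M) (hψ : Function.Injective ψ)
    (hψα : ∀ g, ψ * α g = α (φ g) * ψ) :
    ∃ H : Subgroup G, H.FiniteIndex ∧ ∃ (W : ℕ → AddSubgroup M) (m : ℕ), W 0 = ⊤ ∧
      (∀ a ∈ W m, ∃ k : ℕ, k ≠ 0 ∧ k • a = 0) ∧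
      ∀ h ∈ H, ∀ k, ∀ a ∈ W k, α h a - a ∈ W (k + 1) := by
  have := hM.finiteDimensional
  let β : Module.End ℤ M →ₐ[ℤ] Module.End ℚ (ℚ ⊗[ℤ] M) := Module.End.baseChangeHom ℤ ℚ M
  have hβ : ∀ f a, β f ((1 : ℚ) ⊗ₜ[ℤ] a) = (1 : ℚ) ⊗ₜ[ℤ] f a := fun f a => rfl
  obtain ⟨H, hH, W, m, h0, hm, hW⟩ := _root_.exists_finiteIndex_flag htame
    ((β : Module.End ℤ M →* _).comp α) (β ψ)
    (Module.Flat.lTensor_preserves_injective_linearMap ψ hψ) (fun g => by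
      change β ψ * β (α g) = β (α (φ g)) * β ψ
      rw [← map_mul, hψα, map_mul])
  refine ⟨H, hH, fun k => (W k).toAddSubgroup.comap (TensorProduct.mk ℤ ℚ M 1).toAddMonoidHom, m,
    ?_, ?_, ?_⟩
  · simp only [h0]
    rfl
  · intro a ha
    refine exists_nsmul_eq_zero_of_tmul_eq_zero (a := a) ?_
    have ha : (1 : ℚ) ⊗ₜ[ℤ] a ∈ W m := ha
    rwa [hm, Submodule.mem_bot] at ha
  · intro h hh k a ha
    have := hW h hh k _ ha
    change (1 : ℚ) ⊗ₜ[ℤ] (α h a - a) ∈ W (k + 1)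
    rw [tmul_sub]
    exact this

end Modules

/-! ### Induction on the derived length -/

section Main

universe u

open scoped commutatorElement

variable {G : Type u} [Group G]

/-- The inductive step: if `A` is an abelian normal subgroup preserved by `φ` and `G / A` is
virtually nilpotent (expressed through the lower central series of a finite-index subgroup `H₂`),
then `G` is virtually nilpotent. -/
theorem virtuallyNilpotent_of_lowerCentralSeries_le (hfg : Group.FG G)
    (hsec : AbelianSectionsFAR G) {φ : G →* G} (hinj : Function.Injective φ)
    (htame : ∀ n : ℕ, 1 ≤ n → ReidemeisterNumberFinite ((⇑φ)^[n]))
    (A : Subgroup G) [hAn : A.Normal] (hcomm : ∀ a ∈ A, ∀ b ∈ A, a * b = b * a)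
    (hAφ : ∀ a ∈ A, φ a ∈ A) (H₂ : Subgroup G) [H₂.FiniteIndex] (c : ℕ)
    (hc : H₂.lowerCentralSeries c ≤ A) :
    ∃ H : Subgroup G, H.FiniteIndex ∧ Group.IsNilpotent H := by
  let : CommGroup A :=
    { (inferInstance : Group A) with mul_comm := fun a b => Subtype.ext (hcomm a a.2 b b.2) }
  have hfar : FARAb (Additive A) :=
    hsec (Additive A) A (MonoidHom.mk' (fun a => Multiplicative.ofAdd (Additive.ofMul a))
      fun _ _ => rfl) fun b => ⟨b.toAdd.toMul, rfl⟩
  let α : G →* Module.End ℤ (Additive A) :=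
    { toFun := fun g => AddMonoidHom.toIntLinearMap
        (MonoidHom.toAdditive (MulAut.conjNormal g : MulAut A).toMonoidHom)
      map_one' := by
        ext a
        change (MulAut.conjNormal (1 : G) a.toMul : G) = a.toMul
        simp
      map_mul' := fun g h => by
        ext a
        change (MulAut.conjNormal (g * h) a.toMul : G) =
          MulAut.conjNormal g (MulAut.conjNormal h a.toMul)
        simp }
  have hα : ∀ g a, ((α g a).toMul : G) = g * a.toMul * g⁻¹ := fun g a =>
    MulAut.conjNormal_apply g a.toMul
  let ψ : Module.End ℤ (Additive A) := AddMonoidHom.toIntLinearMap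
    (MonoidHom.toAdditive ((φ.comp A.subtype).codRestrict A fun a => hAφ a a.2))
  have hψ : ∀ a, ((ψ a).toMul : G) = φ a.toMul := fun a => rfl
  obtain ⟨H₁, hH₁, W, m, h0, hm, hW⟩ := hfar.exists_finiteIndex_flag htame α ψ
    (fun a b h => by
      have h := congrArg (fun t : Additive A => (t.toMul : G)) h
      rw [hψ, hψ] at h
      exact Subtype.ext (hinj h))
    (fun g => by
      ext a
      change ((ψ (α g a)).toMul : G) = ((α (φ g) (ψ a)).toMul : G)
      rw [hψ, hα, hα, hψ, map_mul, map_mul, map_inv])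
  let H : Subgroup G := H₁ ⊓ H₂
  let P : ℕ → Subgroup G := fun k => (AddSubgroup.toSubgroup' (W k)).map A.subtype
  have hPmem : ∀ k x, x ∈ P k ↔ ∃ a ∈ W k, (a.toMul : G) = x := fun k x => Iff.rfl
  have hHP : ∀ k, H.lowerCentralSeries (c + k) ≤ P k := by
    intro k
    induction k with
    | zero =>
      intro x hx
      have hxA : x ∈ A := hc (Subgroup.lowerCentralSeries_mono c inf_le_right hx)
      exact ⟨Additive.ofMul ⟨x, hxA⟩, by rw [h0]; trivial, rfl⟩
    | succ k ih =>
      rw [← add_assoc, Subgroup.lowerCentralSeries_succ, Subgroup.commutator_le]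
      intro x hx h hh
      obtain ⟨a, ha, rfl⟩ := (hPmem k x).1 (ih hx)
      refine (hPmem _ _).2 ⟨-(α h a - a), neg_mem (hW h hh.1 k a ha), ?_⟩
      rw [neg_sub, toMul_sub, Subgroup.coe_div, hα, commutatorElement_def, div_eq_mul_inv]
      group
  have hHc : ∀ x ∈ H.lowerCentralSeries (c + m), x ∈ A ∧ ∃ k : ℕ, k ≠ 0 ∧ x ^ k = 1 := by
    intro x hx
    obtain ⟨a, ha, rfl⟩ := (hPmem m x).1 (hHP m hx)
    obtain ⟨k, hk0, hk⟩ := hm a ha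
    exact ⟨a.toMul.2, k, hk0, congrArg (fun t : Additive A => (t.toMul : G)) hk⟩
  have : Group.FG G := hfg
  obtain ⟨K, hK, hKnil⟩ := virtuallyNilpotent_of_lowerCentralSeries (G := H) inferInstance
    (A.subgroupOf H) (fun a ha b hb => Subtype.ext (hcomm a ha b hb))
    (fun e he => by
      refine Set.Finite.subset (((hfar.finite_torsion e he).image
        fun a => (a.toMul : G)).preimage Subtype.val_injective.injOn) ?_
      rintro a ⟨haA, hae⟩
      refine ⟨Additive.ofMul ⟨a.1, haA⟩, ?_, rfl⟩
      apply Additive.toMul.injective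
      have hae : ((a ^ e : H) : G) = 1 := congrArg Subtype.val hae
      exact Subtype.ext hae)
    (c + m) (fun x hx => by
      have hx' : x.1 ∈ H.lowerCentralSeries (c + m) := by
        rw [← Subgroup.top_subtype_lowerCentralSeries]
        exact ⟨x, hx, rfl⟩
      obtain ⟨hxA, k, hk0, hk⟩ := hHc x hx'
      exact ⟨hxA, k, hk0, Subtype.ext hk⟩)
  refine ⟨K.map H.subtype, ?_, ?_⟩
  · refine ⟨?_⟩
    rw [Subgroup.index_map_subtype]
    exact mul_ne_zero hK.index_ne_zero Subgroup.FiniteIndex.index_ne_zero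
  · rw [Subgroup.isNilpotent_iff_lowerCentralSeries] at hKnil ⊢
    obtain ⟨n, hn⟩ := hKnil
    exact ⟨n, by rw [← Subgroup.map_lowerCentralSeries, hn, Subgroup.map_bot]⟩

/-- Induction on the derived length of an invariant finite-index subgroup `S`. The abelian term
`A₀ = derivedIn S d` is enlarged to `A = ⋃ φ⁻ⁿ(A₀)`, so that `φ` induces an injective endomorphism
of `G / A`. -/
theorem virtuallyNilpotent_of_derivedIn (d : ℕ) : ∀ {G : Type u} [Group G], Group.FG G →
    AbelianSectionsFAR G → ∀ φ : G →* G, Function.Injective φ →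
    (∀ n : ℕ, 1 ≤ n → ReidemeisterNumberFinite ((⇑φ)^[n])) →
    ∀ (S : Subgroup G) [S.Normal] [S.FiniteIndex], S.map φ ≤ S → derivedIn S d = ⊥ →
    ∃ H : Subgroup G, H.FiniteIndex ∧ Group.IsNilpotent H := by
  induction d with
  | zero =>
    intro G _ hfg hsec φ hinj htame S _ hSfin hS hd
    exact ⟨S, hSfin, Subgroup.isNilpotent_of_lowerCentralSeries_eq_bot (n := 0) hd⟩
  | succ d ih =>
    intro G _ hfg hsec φ hinj htame S hSn hSfin hS hd
    have hA₀n : (derivedIn S d).Normal := derivedIn_normal S d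
    have hA₀φ : ∀ x ∈ derivedIn S d, φ x ∈ derivedIn S d := fun x hx =>
      derivedIn_mono hS d (by rw [← map_derivedIn]; exact ⟨x, hx, rfl⟩)
    have hA₀comm : ∀ x ∈ derivedIn S d, ∀ y ∈ derivedIn S d, x * y = y * x := fun x hx y hy => by
      rw [← commutatorElement_eq_one_iff_mul_comm, ← Subgroup.mem_bot, ← hd]
      exact Subgroup.commutator_mem_commutator hx hy
    have hup : ∀ n k x, (⇑φ)^[n] x ∈ derivedIn S d → (⇑φ)^[k + n] x ∈ derivedIn S d := by
      intro n k x hx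
      induction k with
      | zero => rwa [zero_add]
      | succ k ihk => rw [add_right_comm, Function.iterate_succ_apply']; exact hA₀φ _ ihk
    have hup₂ : ∀ {n k x y}, (⇑φ)^[n] x ∈ derivedIn S d → (⇑φ)^[k] y ∈ derivedIn S d →
        (⇑φ)^[k + n] x ∈ derivedIn S d ∧ (⇑φ)^[k + n] y ∈ derivedIn S d := fun hx hy =>
      ⟨hup _ _ _ hx, by rw [add_comm]; exact hup _ _ _ hy⟩
    let A : Subgroup G :=
      { carrier := {x | ∃ n, (⇑φ)^[n] x ∈ derivedIn S d}
        one_mem' := ⟨0, one_mem _⟩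
        mul_mem' := fun {x y} ⟨n, hx⟩ ⟨k, hy⟩ => ⟨k + n, by
          rw [iterate_map_mul]; exact mul_mem (hup₂ hx hy).1 (hup₂ hx hy).2⟩
        inv_mem' := fun {x} ⟨n, hx⟩ => ⟨n, by rw [iterate_map_inv]; exact inv_mem hx⟩ }
    have hAn : A.Normal := ⟨fun x ⟨n, hx⟩ g => ⟨n, by
      rw [iterate_map_mul, iterate_map_mul, iterate_map_inv]; exact hA₀n.conj_mem _ hx _⟩⟩
    have hAcomm : ∀ a ∈ A, ∀ b ∈ A, a * b = b * a := by
      rintro a ⟨n, ha⟩ b ⟨k, hb⟩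
      apply hinj.iterate (k + n)
      rw [iterate_map_mul, iterate_map_mul]
      exact hA₀comm _ (hup₂ ha hb).1 _ (hup₂ ha hb).2
    have hAφ : ∀ a, φ a ∈ A ↔ a ∈ A := fun a =>
      ⟨fun ⟨n, h⟩ => ⟨n + 1, h⟩, fun ⟨n, h⟩ => ⟨n, by
        rw [← Function.iterate_succ_apply, Function.iterate_succ_apply']; exact hA₀φ _ h⟩⟩
    let π := QuotientGroup.mk' A
    have hπ : Function.Surjective π := QuotientGroup.mk'_surjective A
    let φ' : G ⧸ A →* G ⧸ A := QuotientGroup.map A A φ fun a ha => (hAφ a).2 ha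
    have hφ' : ∀ x, φ' (π x) = π (φ x) := fun x => rfl
    have hφ'n : ∀ n x, (⇑φ')^[n] (π x) = π ((⇑φ)^[n] x) := fun n x =>
      ((show Function.Semiconj π φ φ' from fun x => (hφ' x).symm).iterate_right n x).symm
    have : Group.FG G := hfg
    have hSπn : (S.map π).Normal := hSn.map π hπ
    have hSπfin : (S.map π).FiniteIndex :=
      ⟨ne_zero_of_dvd_ne_zero hSfin.index_ne_zero (Subgroup.index_map_dvd S hπ)⟩
    obtain ⟨H', hH', hH'nil⟩ := ih (G := G ⧸ A) inferInstance (hsec.quotient A) φ'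
      (by
        rw [injective_iff_map_eq_one]
        intro q hq
        obtain ⟨x, rfl⟩ := hπ q
        exact (QuotientGroup.eq_one_iff x).2 ((hAφ x).1 ((QuotientGroup.eq_one_iff _).1 hq)))
      (fun n hn => by
        classical
        obtain ⟨E, hE⟩ := htame n hn
        refine ⟨E.image π, fun q => ?_⟩
        obtain ⟨x, rfl⟩ := hπ q
        obtain ⟨y, hy, z, rfl⟩ := hE x
        exact ⟨π y, Finset.mem_image_of_mem _ hy, π z, by
          rw [hφ'n, map_mul, map_mul, map_inv]⟩)
      (S.map π)
      (by
        rintro _ ⟨_, ⟨x, hx, rfl⟩, rfl⟩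
        exact ⟨φ x, hS ⟨x, hx, rfl⟩, (hφ' x).symm⟩)
      (by
        rw [← map_derivedIn, Subgroup.map_eq_bot_iff, QuotientGroup.ker_mk']
        exact fun x hx => ⟨0, hx⟩)
    obtain ⟨c, hc⟩ := (Subgroup.isNilpotent_iff_lowerCentralSeries H').1 hH'nil
    have : (H'.comap π).FiniteIndex :=
      ⟨by rw [Subgroup.index_comap_of_surjective _ hπ]; exact hH'.index_ne_zero⟩
    refine virtuallyNilpotent_of_lowerCentralSeries_le hfg hsec hinj htame A hAcomm
      (fun a ha => (hAφ a).2 ha) (H'.comap π) c fun x hx => ?_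
    have h : π x ∈ H'.lowerCentralSeries c := by
      have h := Subgroup.mem_map_of_mem π hx
      rwa [Subgroup.map_lowerCentralSeries, Subgroup.map_comap_eq_self_of_surjective hπ] at h
    rw [hc, Subgroup.mem_bot] at h
    exact (QuotientGroup.eq_one_iff x).1 h

end Main

/-- A residually finite, finitely generated virtually FAR group admitting a tame
monomorphism (an injective endomorphism all of whose iterates have finite Reidemeister
number) is virtually nilpotent. -/
theorem virtually_nilpotent_of_tame_monomorphism
    {G : Type*} [Group G] (hfg : Group.FG G)
    (hres : ∀ g : G, g ≠ 1 → ∃ N : Subgroup G, N.Normal ∧ N.FiniteIndex ∧ g ∉ N)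
    (hFAR : IsVirtuallyFAR G)
    (φ : G →* G) (hinj : Function.Injective φ)
    (htame : ∀ n : ℕ, 1 ≤ n → ReidemeisterNumberFinite ((⇑φ)^[n])) :
    ∃ H : Subgroup G, H.FiniteIndex ∧ Group.IsNilpotent H := by
  obtain ⟨H, hH, hHFAR⟩ := id hFAR
  obtain ⟨S, hSH, hSn, hSfin, hS⟩ := exists_fullyInvariant_finiteIndex hfg H
  obtain ⟨n, hn⟩ := hHFAR.exists_derivedIn_eq_bot
  refine virtuallyNilpotent_of_derivedIn n hfg hFAR.abelianSectionsFAR φ hinj htame S (hS φ) ?_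
  have h := map_derivedIn H.subtype ⊤ n
  rw [hn, Subgroup.map_bot, ← MonoidHom.range_eq_map, Subgroup.range_subtype] at h
  exact le_bot_iff.1 (h ▸ derivedIn_mono hSH n)
end

section
/- Let n be an integer with |n| > 1 such that |n| is a power of a single prime. Then the outer automorphism group Out(BS(1,n)) is finite. -/
/-!
Every element of `BS(1,n)` has the form `tᵃ xᵐ t⁻ᵇ` with `a, b ≥ 0`. Let `e` be the exponent sum
in `t`. Its kernel consists of the elements `tᵃ xᵐ t⁻ᵃ`; it is abelian, and conjugation by `t` acts
on it by `h ↦ hⁿ`. The action on `ℚ` by `x : y ↦ y + 1`, `t⁻¹ : y ↦ n y` shows that `x` has infinite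
order.

Let `φ` be an automorphism. The relation forces `e (φ x) = 0`, so after an inner automorphism
`φ x = xᵐ`, and since `t x^(n m) t⁻¹ = xᵐ` one may take `n ∤ m`. Surjectivity gives `e (φ t) = ±1`;
the value `-1` would force `x^(m (n² - 1)) = 1`, so `φ t = t k` with `k ∈ ker e`. Writing `x` as a
value of `φ` shows that `m` divides a power of `n`, and when `|n|` is a prime power this together
with `n ∤ m` gives `|m| < |n|`. Conjugation by `h ∈ ker e` fixes `xᵐ` and replaces `k` by `hⁿ⁻¹ k`;
as `t` acts trivially on `ker e` modulo `(n-1)`-st powers, `k` can be made equal to `xʲ` with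
`0 ≤ j < |n - 1|`. So finitely many automorphisms represent all outer classes.
-/

/-- Defining relation of the Baumslag–Solitar group `BS(1,n)`:
`t⁻¹ * x * t * x⁻ⁿ`, where `x = of false` and `t = of true`. -/
def bsRels (n : ℤ) : Set (FreeGroup Bool) :=
  {(FreeGroup.of true)⁻¹ * FreeGroup.of false * FreeGroup.of true * (FreeGroup.of false) ^ (-n)}

/-- The Baumslag–Solitar group `BS(1,n) = ⟨x, t ∣ t⁻¹ x t = xⁿ⟩`. -/
def BS (n : ℤ) : Type := PresentedGroup (bsRels n)

instance (n : ℤ) : Group (BS n) := inferInstanceAs (Group (PresentedGroup (bsRels n)))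

/-- The group of inner automorphisms of `G`, as a subgroup of `Aut(G)`. -/
def Inn (G : Type*) [Group G] : Subgroup (MulAut G) := (MulAut.conj (G := G)).range

instance Inn.normal (G : Type*) [Group G] : (Inn G).Normal := by
  constructor
  rintro - ⟨h, rfl⟩ g
  refine ⟨g h, ?_⟩
  ext x
  simp [MulAut.conj, mul_assoc]

/-- The outer automorphism group `Out(G) = Aut(G)/Inn(G)`. -/
def Out (G : Type*) [Group G] := MulAut G ⧸ Inn G

instance (G : Type*) [Group G] : Group (Out G) :=
  inferInstanceAs (Group (MulAut G ⧸ Inn G))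

namespace BSOut

section Abstract

variable {G : Type*} [Group G] {x t : G} {n : ℤ}

/-! ### Normal form -/

lemma conj_zpow_rel (h : t⁻¹ * x * t = x ^ n) (l : ℤ) : t⁻¹ * x ^ l * t = x ^ (n * l) := by
  have := conj_zpow (i := l) (a := t⁻¹) (b := x)
  rw [inv_inv] at this
  rw [← this, h, zpow_mul]

lemma conj_pow_zpow_rel (h : t⁻¹ * x * t = x ^ n) (a : ℕ) (l : ℤ) :
    (t ^ a)⁻¹ * x ^ l * t ^ a = x ^ (n ^ a * l) := by
  induction a with
  | zero => simp
  | succ a ih =>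
    calc (t ^ (a + 1))⁻¹ * x ^ l * t ^ (a + 1)
        = t⁻¹ * ((t ^ a)⁻¹ * x ^ l * t ^ a) * t := by rw [pow_succ]; group
      _ = x ^ (n ^ (a + 1) * l) := by rw [ih, conj_zpow_rel h]; congr 1; ring

lemma zpow_mul_pow_rel (h : t⁻¹ * x * t = x ^ n) (a : ℕ) (l : ℤ) :
    x ^ l * t ^ a = t ^ a * x ^ (n ^ a * l) := by
  rw [← conj_pow_zpow_rel h]; group

/-- Normal form, in terms of the relation only: positive powers of `t` move to the left of powers
of `x`, negative ones to the right. -/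
lemma normal_form (h : t⁻¹ * x * t = x ^ n) (hgen : Subgroup.closure {x, t} = ⊤) (g : G) :
    ∃ (a b : ℕ) (m : ℤ), g = t ^ a * x ^ m * (t ^ b)⁻¹ := by
  have hg : g ∈ Subgroup.closure {x, t} := hgen ▸ Subgroup.mem_top g
  induction hg using Subgroup.closure_induction with
  | mem y hy =>
    rcases hy with rfl | rfl
    · exact ⟨0, 0, 1, by simp⟩
    · exact ⟨1, 0, 0, by simp⟩
  | one => exact ⟨0, 0, 0, by simp⟩
  | inv y _ ih =>
    obtain ⟨a, b, m, rfl⟩ := ih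
    exact ⟨b, a, -m, by group⟩
  | mul y z _ _ ihy ihz =>
    obtain ⟨a, b, m, rfl⟩ := ihy
    obtain ⟨c, d, l, rfl⟩ := ihz
    rcases le_total b c with hbc | hbc
    · obtain ⟨f, rfl⟩ := Nat.exists_eq_add_of_le hbc
      refine ⟨a + f, d, n ^ f * m + l, ?_⟩
      calc _ = t ^ a * (x ^ m * t ^ f) * x ^ l * (t ^ d)⁻¹ := by rw [pow_add]; group
        _ = _ := by rw [zpow_mul_pow_rel h, pow_add, zpow_add]; group
    · obtain ⟨f, rfl⟩ := Nat.exists_eq_add_of_le hbc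
      refine ⟨a, d + f, m + n ^ f * l, ?_⟩
      have := conj_pow_zpow_rel h f l
      rw [zpow_add, ← this, pow_add, pow_add]; group

/-! ### The kernel of the exponent sum in `t` -/

variable {e : G →* Multiplicative ℤ}

lemma ker_form (h : t⁻¹ * x * t = x ^ n) (hgen : Subgroup.closure {x, t} = ⊤)
    (hex : e x = 1) (het : e t = Multiplicative.ofAdd 1) {g : G} (hg : g ∈ e.ker) :
    ∃ (a : ℕ) (m : ℤ), g = t ^ a * x ^ m * (t ^ a)⁻¹ := by
  obtain ⟨a, b, m, rfl⟩ := normal_form h hgen g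
  have h1 : e (t ^ a * x ^ m * (t ^ b)⁻¹) = 1 := hg
  have h2 := congrArg Multiplicative.toAdd h1
  simp [hex, het] at h2
  obtain rfl : a = b := by omega
  exact ⟨a, m, rfl⟩

lemma ker_conj (h : t⁻¹ * x * t = x ^ n) (hgen : Subgroup.closure {x, t} = ⊤)
    (hex : e x = 1) (het : e t = Multiplicative.ofAdd 1) {g : G} (hg : g ∈ e.ker) :
    t⁻¹ * g * t = g ^ n := by
  obtain ⟨a, m, rfl⟩ := ker_form h hgen hex het hg
  rw [conj_zpow, ← zpow_mul, mul_comm m n, ← conj_zpow_rel h]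
  group

lemma ker_comm (h : t⁻¹ * x * t = x ^ n) (hgen : Subgroup.closure {x, t} = ⊤)
    (hex : e x = 1) (het : e t = Multiplicative.ofAdd 1) {g g' : G} (hg : g ∈ e.ker)
    (hg' : g' ∈ e.ker) : Commute g g' := by
  obtain ⟨a, m, rfl⟩ := ker_form h hgen hex het hg
  obtain ⟨b, l, rfl⟩ := ker_form h hgen hex het hg'
  -- Both elements are conjugates of powers of `x` by the same element `t ^ (a + b)`.
  have h1 : t ^ a * x ^ m * (t ^ a)⁻¹ = t ^ (a + b) * x ^ (n ^ b * m) * (t ^ (a + b))⁻¹ := by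
    rw [← conj_pow_zpow_rel h, pow_add]; group
  have h2 : t ^ b * x ^ l * (t ^ b)⁻¹ = t ^ (a + b) * x ^ (n ^ a * l) * (t ^ (a + b))⁻¹ := by
    rw [← conj_pow_zpow_rel h, add_comm, pow_add]; group
  rw [h1, h2, Commute.conj_iff]
  exact (Commute.refl x).zpow_zpow _ _

/-- The quotient of `ker e` by its `(n-1)`-st powers is generated by the class of `x`, and so is
finite: `t` acts trivially on it. -/
lemma ker_reduce (h : t⁻¹ * x * t = x ^ n) (hgen : Subgroup.closure {x, t} = ⊤)
    (hex : e x = 1) (het : e t = Multiplicative.ofAdd 1) {g : G} (hg : g ∈ e.ker) :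
    ∃ u ∈ e.ker, ∃ l : ℤ, u ^ (n - 1) * g = x ^ (l % (n - 1)) := by
  have hxk : x ∈ e.ker := hex
  obtain ⟨a, l, rfl⟩ := ker_form h hgen hex het hg
  have key : ∀ a : ℕ, ∃ u ∈ e.ker, u ^ (n - 1) * (t ^ a * x ^ l * (t ^ a)⁻¹) = x ^ l := by
    intro a
    induction a with
    | zero => exact ⟨1, one_mem _, by simp⟩
    | succ a ih =>
      obtain ⟨u, hu, hul⟩ := ih
      set y := t ^ (a + 1) * x ^ l * (t ^ (a + 1))⁻¹ with hy
      have hyk : y ∈ e.ker := e.normal_ker.conj_mem _ (zpow_mem hxk l) _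
      refine ⟨u * y, mul_mem hu hyk, ?_⟩
      have h1 : y ^ (n - 1) * y = t ^ a * x ^ l * (t ^ a)⁻¹ := by
        rw [← zpow_add_one, sub_add_cancel, ← ker_conj h hgen hex het hyk, hy, pow_succ']
        group
      rw [(ker_comm h hgen hex het hu hyk).mul_zpow, mul_assoc, h1, hul]
  obtain ⟨u, hu, hul⟩ := key a
  refine ⟨x ^ (-(l / (n - 1))) * u, mul_mem (zpow_mem hxk _) hu, l, ?_⟩
  rw [((ker_comm h hgen hex het hxk hu).zpow_left _).mul_zpow, mul_assoc, hul, ← zpow_mul,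
    ← zpow_add]
  congr 1
  have := Int.emod_add_mul_ediv l (n - 1)
  linear_combination -this

/-! ### Powers of `x` up to conjugacy -/

/-- Each non-trivial power of `x` is conjugate to a power whose exponent is not divisible
by `n`. -/
lemma exists_conj_not_dvd (h : t⁻¹ * x * t = x ^ n) (hn : 1 < |n|) (N : ℕ) :
    ∀ m : ℤ, m.natAbs = N → m ≠ 0 → ∃ (g : G) (m' : ℤ), g * x ^ m * g⁻¹ = x ^ m' ∧ ¬ n ∣ m' := by
  induction N using Nat.strong_induction_on with
  | _ N ih =>
    intro m hm hm0
    by_cases hd : n ∣ m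
    · obtain ⟨c, rfl⟩ := hd
      have hc : c ≠ 0 := by rintro rfl; simp at hm0
      have hlt : c.natAbs < N := by
        rw [← hm, Int.natAbs_mul]
        have : 0 < c.natAbs := Int.natAbs_pos.mpr hc
        have : 1 < n.natAbs := by rw [Int.abs_eq_natAbs] at hn; exact_mod_cast hn
        nlinarith
      obtain ⟨g, m', hg, hm'⟩ := ih _ hlt c rfl hc
      refine ⟨g * t, m', ?_, hm'⟩
      rw [← hg, ← conj_zpow_rel h]
      group
    · exact ⟨1, m, by simp, hd⟩

/-- The only place where `|n|` being a prime power matters: otherwise a divisor of a power of `n`,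
not divisible by `n`, can be arbitrarily large. -/
lemma abs_lt_of_dvd_pow (hnp : ∃ p k : ℕ, p.Prime ∧ n.natAbs = p ^ k) {m : ℤ} {a : ℕ}
    (hd : m ∣ n ^ a) (hnd : ¬ n ∣ m) : |m| < |n| := by
  obtain ⟨p, k, hp, hk⟩ := hnp
  have h1 : m.natAbs ∣ p ^ (k * a) := by
    rw [pow_mul, ← hk, ← Int.natAbs_pow]
    exact Int.natAbs_dvd_natAbs.mpr hd
  obtain ⟨i, -, hi⟩ := (Nat.dvd_prime_pow hp).mp h1
  have h2 : i < k := by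
    by_contra! hki
    exact hnd (Int.natAbs_dvd_natAbs.mp (by rw [hk, hi]; exact pow_dvd_pow p hki))
  have h3 : m.natAbs < n.natAbs := by
    rw [hk, hi]
    exact Nat.pow_lt_pow_right hp.one_lt h2
  rw [Int.abs_eq_natAbs, Int.abs_eq_natAbs]
  exact_mod_cast h3

/-! ### Representatives of outer classes -/

/-- Up to inner automorphisms, an automorphism sends `x` to `x ^ m` and `t` to `t * x ^ j` with
`m` and `j` bounded in terms of `n`. -/
lemma exists_inner_reduce (h : t⁻¹ * x * t = x ^ n) (hgen : Subgroup.closure {x, t} = ⊤)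
    (hex : e x = 1) (het : e t = Multiplicative.ofAdd 1) (hx : ∀ l : ℤ, x ^ l = 1 → l = 0)
    (hn : 1 < |n|) (hnp : ∃ p k : ℕ, p.Prime ∧ n.natAbs = p ^ k) (φ : MulAut G) :
    ∃ (g : G) (m j : ℤ), |m| < |n| ∧ 0 ≤ j ∧ j < |n - 1| ∧
      (MulAut.conj g * φ) x = x ^ m ∧ (MulAut.conj g * φ) t = t * x ^ j := by
  have hn1 : n - 1 ≠ 0 := by
    intro h0
    have h1 : n = 1 := by omega
    simp [h1] at hn
  have hxk : x ∈ e.ker := hex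
  have hrel : ∀ ψ : MulAut G, (ψ t)⁻¹ * ψ x * ψ t = ψ x ^ n := by
    intro ψ
    rw [← map_inv, ← map_mul, ← map_mul, h, map_zpow]
  have hφx : φ x ∈ e.ker := by
    have h1 := congrArg (fun y => Multiplicative.toAdd (e y)) (hrel φ)
    simp only [map_mul, map_inv, map_zpow, toAdd_mul, toAdd_inv, toAdd_zpow, smul_eq_mul] at h1
    have h2 : (n - 1) * Multiplicative.toAdd (e (φ x)) = 0 := by linear_combination -h1
    have h3 := (mul_eq_zero.mp h2).resolve_left hn1
    exact Multiplicative.toAdd.injective h3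
  obtain ⟨g₁, m, hm, hnm⟩ : ∃ (g : G) (m : ℤ), g * φ x * g⁻¹ = x ^ m ∧ ¬ n ∣ m := by
    obtain ⟨a, m, hm⟩ := ker_form h hgen hex het hφx
    have hm0 : m ≠ 0 := by
      rintro rfl
      have h1 : φ x = 1 := by rw [hm]; simp
      rw [map_eq_one_iff φ φ.injective] at h1
      exact one_ne_zero (hx 1 (by rw [h1, one_zpow]))
    obtain ⟨g, m', hg, hm'⟩ := exists_conj_not_dvd h hn _ m rfl hm0
    exact ⟨g * (t ^ a)⁻¹, m', by rw [← hg, hm]; group, hm'⟩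
  obtain ⟨ψ, hψ⟩ : ∃ ψ : MulAut G, ψ = MulAut.conj g₁ * φ := ⟨_, rfl⟩
  have hψx : ψ x = x ^ m := by rw [hψ, ← hm]; simp
  have hψe : ∀ (a b : ℕ) (l : ℤ), Multiplicative.toAdd (e (ψ (t ^ a * x ^ l * (t ^ b)⁻¹))) =
      Multiplicative.toAdd (e (ψ t)) * ((a : ℤ) - b) := by
    intro a b l
    simp [hψx, hex]
    ring
  have hunit : IsUnit (Multiplicative.toAdd (e (ψ t))) := by
    obtain ⟨s, hs⟩ := ψ.surjective t
    obtain ⟨a, b, l, rfl⟩ := normal_form h hgen s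
    have h1 := hψe a b l
    rw [hs, het, toAdd_ofAdd] at h1
    exact IsUnit.of_mul_eq_one _ h1.symm
  have hψt : Multiplicative.toAdd (e (ψ t)) = 1 := by
    rcases Int.isUnit_iff.mp hunit with h1 | h1
    · exact h1
    · exfalso
      -- `ψ t = k * t⁻¹` with `k` commuting with `x`, so the relation reads `t xᵐ t⁻¹ = x^(m n)`.
      have hk : ψ t * t ∈ e.ker := by
        apply Multiplicative.toAdd.injective
        simp [h1, het]
      have hc := (ker_comm h hgen hex het hk hxk).zpow_right m
      have h2 := hrel ψ
      rw [hψx, ← zpow_mul] at h2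
      have h3 : t * x ^ m * t⁻¹ = x ^ (m * n) := by
        rw [← h2]
        calc t * x ^ m * t⁻¹ = (ψ t)⁻¹ * ((ψ t * t) * x ^ m) * t⁻¹ := by group
          _ = (ψ t)⁻¹ * (x ^ m * (ψ t * t)) * t⁻¹ := by rw [hc.eq]
          _ = _ := by group
      have h4 : x ^ m = x ^ (n * (m * n)) := by
        rw [← conj_zpow_rel h, ← h3]; group
      have h5 : m - n * (m * n) = 0 := hx _ (by rw [zpow_sub, ← h4, mul_inv_cancel])
      have h6 : m * (1 - n ^ 2) = 0 := by linear_combination h5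
      rcases mul_eq_zero.mp h6 with h7 | h7
      · exact hnm (h7 ▸ dvd_zero n)
      · have : 1 < n ^ 2 := by rw [← sq_abs]; nlinarith
        omega
  have hk : t⁻¹ * ψ t ∈ e.ker := by
    apply Multiplicative.toAdd.injective
    simp [hψt, het]
  have hxψ : (ψ t)⁻¹ * x * ψ t = x ^ n := by
    have hc := (ker_comm h hgen hex het hk hxk).zpow_right n
    calc (ψ t)⁻¹ * x * ψ t = (t⁻¹ * ψ t)⁻¹ * (t⁻¹ * x * t) * (t⁻¹ * ψ t) := by group
      _ = (t⁻¹ * ψ t)⁻¹ * ((t⁻¹ * ψ t) * x ^ n) := by rw [h, mul_assoc, hc.eq]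
      _ = x ^ n := by group
  obtain ⟨a, hdvd⟩ : ∃ a : ℕ, m ∣ n ^ a := by
    obtain ⟨s, hs⟩ := ψ.surjective x
    obtain ⟨a, b, l, rfl⟩ := normal_form h hgen s
    have h1 := hψe a b l
    rw [hs, hex, hψt, toAdd_one] at h1
    obtain rfl : a = b := by omega
    refine ⟨a, l, ?_⟩
    have h2 : x ^ (n ^ a) = x ^ (m * l) := by
      have h3 := conj_pow_zpow_rel hxψ a 1
      rw [mul_one, zpow_one] at h3
      rw [← h3]
      nth_rewrite 1 [← hs]
      simp only [map_mul, map_inv, map_pow, map_zpow, hψx, zpow_mul]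
      group
    have h3 : n ^ a - m * l = 0 := hx _ (by rw [zpow_sub, ← h2, mul_inv_cancel])
    omega
  obtain ⟨u, hu, l, hul⟩ := ker_reduce h hgen hex het hk
  refine ⟨u * g₁, m, l % (n - 1), abs_lt_of_dvd_pow hnp hdvd hnm, Int.emod_nonneg _ hn1,
    Int.emod_lt_abs _ hn1, ?_, ?_⟩
  · rw [map_mul, mul_assoc, ← hψ, MulAut.mul_apply, MulAut.conj_apply, hψx,
      ((ker_comm h hgen hex het hu hxk).zpow_right m).eq, mul_inv_cancel_right]
  · rw [map_mul, mul_assoc, ← hψ, MulAut.mul_apply, MulAut.conj_apply, ← hul]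
    have hc := (ker_comm h hgen hex het hk hu).inv_right
    calc u * ψ t * u⁻¹ = t * (t⁻¹ * u * t) * ((t⁻¹ * ψ t) * u⁻¹) := by group
      _ = t * u ^ n * (u⁻¹ * (t⁻¹ * ψ t)) := by rw [ker_conj h hgen hex het hu, hc.eq]
      _ = t * (u ^ (n - 1) * (t⁻¹ * ψ t)) := by rw [zpow_sub_one]; group

/-- The theorem for any group generated by `x` and `t` that satisfies the relation, has an exponent
sum `e` in `t`, and in which `x` has infinite order. -/
lemma finite_out_of_presentation (h : t⁻¹ * x * t = x ^ n) (hgen : Subgroup.closure {x, t} = ⊤)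
    (hex : e x = 1) (het : e t = Multiplicative.ofAdd 1) (hx : ∀ l : ℤ, x ^ l = 1 → l = 0)
    (hn : 1 < |n|) (hnp : ∃ p k : ℕ, p.Prime ∧ n.natAbs = p ^ k) : Finite (Out G) := by
  let S : Set (MulAut G) := {ψ | ∃ m j : ℤ, |m| < |n| ∧ 0 ≤ j ∧ j < |n - 1| ∧
    ψ x = x ^ m ∧ ψ t = t * x ^ j}
  have hS : S.Finite := by
    refine Set.Finite.of_finite_image (f := fun ψ : MulAut G => (ψ x, ψ t)) ?_ ?_
    · refine (((Set.finite_Icc (-|n|) |n|).prod (Set.finite_Icc 0 |n - 1|)).image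
        (fun q : ℤ × ℤ => (x ^ q.1, t * x ^ q.2))).subset ?_
      rintro - ⟨ψ, ⟨m, j, hm, hj0, hj, h1, h2⟩, rfl⟩
      have := abs_lt.mp hm
      exact ⟨(m, j), ⟨⟨this.1.le, this.2.le⟩, hj0, hj.le⟩, by simp [h1, h2]⟩
    · -- An automorphism is determined by its values on the generators.
      intro ψ _ ψ' _ hψ
      have h1 : Set.EqOn ψ.toMonoidHom ψ'.toMonoidHom {x, t} := by
        rintro y (rfl | rfl)
        · exact congrArg Prod.fst hψ
        · exact congrArg Prod.snd hψ
      ext y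
      exact MonoidHom.eqOn_closure h1 (hgen ▸ Subgroup.mem_top y)
  have := hS.to_subtype
  refine Finite.of_surjective (fun ψ : S => (QuotientGroup.mk ψ.1 : MulAut G ⧸ Inn G)) ?_
  intro q
  obtain ⟨φ, rfl⟩ := QuotientGroup.mk_surjective q
  obtain ⟨g, m, j, hm, hj0, hj, h1, h2⟩ := exists_inner_reduce h hgen hex het hx hn hnp φ
  refine ⟨⟨MulAut.conj g * φ, m, j, hm, hj0, hj, h1, h2⟩, ?_⟩
  have hg : ((MulAut.conj g : MulAut G) : MulAut G ⧸ Inn G) = 1 :=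
    (QuotientGroup.eq_one_iff _).mpr ⟨g, rfl⟩
  change ((MulAut.conj g * φ : MulAut G) : MulAut G ⧸ Inn G) = _
  rw [QuotientGroup.mk_mul, hg, one_mul]

end Abstract

/-! ### The group `BS(1,n)` -/

/-- The universal property of `BS(1,n)`. -/
lemma exists_lift (n : ℤ) {H : Type*} [Group H] (a b : H) (hab : b⁻¹ * a * b = a ^ n) :
    ∃ f : BS n →* H, f (PresentedGroup.of (rels := bsRels n) false) = a ∧
      f (PresentedGroup.of (rels := bsRels n) true) = b := by
  have hr : ∀ r ∈ bsRels n, FreeGroup.lift (fun i : Bool => if i then b else a) r = 1 := by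
    rintro r rfl
    simp [hab]
  refine ⟨(PresentedGroup.toGroup hr : PresentedGroup (bsRels n) →* H), ?_, ?_⟩
  · exact (PresentedGroup.toGroup.of hr).trans (by simp)
  · exact (PresentedGroup.toGroup.of hr).trans (by simp)

end BSOut

/-- If `|n| > 1` is a prime power, then the outer automorphism group of the
Baumslag–Solitar group `BS(1,n)` is finite. -/
theorem out_BS_finite_of_primePow (n : ℤ) (hn : 1 < |n|)
    (h : ∃ p k : ℕ, p.Prime ∧ n.natAbs = p ^ k) :
    Finite (Out (BS n)) := by
  let x : BS n := PresentedGroup.of (rels := bsRels n) false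
  let t : BS n := PresentedGroup.of (rels := bsRels n) true
  have hrel : t⁻¹ * x * t = x ^ n := by
    have h1 : (PresentedGroup.mk (bsRels n)) ((FreeGroup.of true)⁻¹ * FreeGroup.of false *
        FreeGroup.of true * (FreeGroup.of false) ^ (-n)) = 1 :=
      PresentedGroup.one_of_mem (Set.mem_singleton _)
    simp only [map_mul, map_inv, map_zpow, zpow_neg] at h1
    exact mul_inv_eq_one.mp h1
  have hgen : Subgroup.closure {x, t} = ⊤ := by
    have h1 := PresentedGroup.closure_range_of (bsRels n)
    have h2 : Set.range (PresentedGroup.of (rels := bsRels n)) = {x, t} := by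
      ext y
      simp only [Set.mem_range, Bool.exists_bool, eq_comm (b := y)]
      exact Iff.rfl
    rw [h2] at h1
    exact h1
  obtain ⟨e, hex, het⟩ := BSOut.exists_lift n (1 : Multiplicative ℤ) (Multiplicative.ofAdd 1) (by simp)
  refine BSOut.finite_out_of_presentation (x := x) (t := t) hrel hgen hex het ?_ hn h
  have hn0 : (n : ℚ) ≠ 0 := by
    rintro h0
    have : n = 0 := by exact_mod_cast h0
    simp [this] at hn
  -- The affine action on `ℚ`, in which `x` is the translation by `1`.
  obtain ⟨f, hfx, -⟩ := BSOut.exists_lift n (Equiv.addRight (1 : ℚ)) (Equiv.mulRight₀ (n : ℚ) hn0)⁻¹ (by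
    ext y
    simp [Equiv.Perm.mul_apply, Equiv.Perm.inv_def, add_mul, hn0])
  intro l hl
  have h1 := congrArg f hl
  rw [map_zpow, map_one, hfx] at h1
  have h2 := congrArg (fun σ : Equiv.Perm ℚ => σ 0) h1
  simpa using h2
end
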